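/- Coarea formula in 1-quasiopen sets: Let U ⊂ X be a 1-quasiopen set and suppose that ‖Du‖(U) < ∞. Then ‖Du‖(U) = ∫_{−∞}^{∞} P({u > t}, U) dt. -/

import Mathlib

open MeasureTheory Filter Metric Set
open scoped Topology ENNReal NNReal symmDiff

noncomputable section

namespace PaperBV

/-- A rectifiable curve parametrized by arc-length: a `1`-Lipschitz map on `[0, len]`. -/
structure Curve (X : Type*) [MetricSpace X] where
  len : ℝ
  len_nonneg : 0 ≤ len
  toFun : ℝ → X
  lip : LipschitzOnWith 1 toFun (Set.Icc 0 len)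

variable {X : Type*} [MetricSpace X] [MeasurableSpace X] [BorelSpace X]

/-- The curve lies in the set `A`. -/
def Curve.In (γ : Curve X) (A : Set X) : Prop :=
  ∀ t ∈ Set.Icc (0 : ℝ) γ.len, γ.toFun t ∈ A

/-- The curve integral `∫_γ g ds` of a nonnegative function, for an
arc-length parametrized curve. -/
def Curve.integral (γ : Curve X) (g : X → ℝ≥0∞) : ℝ≥0∞ :=
  ∫⁻ t in Set.Icc (0 : ℝ) γ.len, g (γ.toFun t)

/-- The upper gradient inequality `|u(x) - u(y)| ≤ ∫_γ g ds` along the curve `γ`,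
where `x, y` are the endpoints of `γ`. -/
def UGIneq (u : X → ℝ) (g : X → ℝ≥0∞) (γ : Curve X) : Prop :=
  ENNReal.ofReal |u (γ.toFun 0) - u (γ.toFun γ.len)| ≤ γ.integral g

/-- `g` is an upper gradient of `u` on `X`: `g` is nonnegative (automatic in `ℝ≥0∞`),
Borel, and the upper gradient inequality holds along every curve. -/
def IsUpperGradient (u : X → ℝ) (g : X → ℝ≥0∞) : Prop :=
  Measurable g ∧ ∀ γ : Curve X, UGIneq u g γ

/-- A family of curves has zero `1`-modulus: there is a nonnegative Borel function
`ρ ∈ L¹(X)` whose curve integral is infinite along every curve of the family. -/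
def ZeroMod (μ : Measure X) (Γ : Set (Curve X)) : Prop :=
  ∃ ρ : X → ℝ≥0∞, Measurable ρ ∧ (∫⁻ x, ρ x ∂μ) < ∞ ∧ ∀ γ ∈ Γ, γ.integral ρ = ∞

/-- `g` is a `1`-weak upper gradient of `u` in `A`: `g` is nonnegative, `μ`-measurable,
and the upper gradient inequality holds along `1`-a.e. curve in `A`. -/
def IsWeakUpperGradientOn (μ : Measure X) (u : X → ℝ) (g : X → ℝ≥0∞) (A : Set X) : Prop :=
  AEMeasurable g μ ∧ ZeroMod μ {γ : Curve X | γ.In A ∧ ¬ UGIneq u g γ}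

/-- A nonnegative function `g` belongs to `L¹_loc(A)`. -/
def LIntegrableLocOn (μ : Measure X) (g : X → ℝ≥0∞) (A : Set X) : Prop :=
  ∀ x ∈ A, ∃ r > (0 : ℝ), (∫⁻ y in A ∩ Metric.ball x r, g y ∂μ) < ∞

/-- `g` is the minimal `1`-weak upper gradient of `u` in `A`: a `1`-weak upper gradient
satisfying `g ≤ g'` `μ`-a.e. in `A` for every `1`-weak upper gradient `g' ∈ L¹_loc(A)`. -/
def IsMinimalWUG (μ : Measure X) (u : X → ℝ) (g : X → ℝ≥0∞) (A : Set X) : Prop :=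
  IsWeakUpperGradientOn μ u g A ∧
    ∀ g' : X → ℝ≥0∞, IsWeakUpperGradientOn μ u g' A → LIntegrableLocOn μ g' A →
      ∀ᵐ x ∂(μ.restrict A), g x ≤ g' x

/-- The Newtonian norm `‖u‖_{N^{1,1}(A)}` (valued in `ℝ≥0∞`). -/
def NNorm (μ : Measure X) (A : Set X) (u : X → ℝ) : ℝ≥0∞ :=
  (∫⁻ x in A, ENNReal.ofReal |u x| ∂μ) +
    ⨅ (g : X → ℝ≥0∞) (_ : IsWeakUpperGradientOn μ u g A), ∫⁻ x in A, g x ∂μ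

/-- `u ∈ N^{1,1}(A)`. -/
def MemN11 (μ : Measure X) (A : Set X) (u : X → ℝ) : Prop :=
  NNorm μ A u < ∞

/-- `u ∈ N^{1,1}_loc(A)`: every point of `A` has a ball `B` with `u ∈ N^{1,1}(A ∩ B)`. -/
def MemN11Loc (μ : Measure X) (A : Set X) (u : X → ℝ) : Prop :=
  ∀ x ∈ A, ∃ r > (0 : ℝ), NNorm μ (A ∩ Metric.ball x r) u < ∞

/-- `u ∈ N^{1,1}(Ω')` for every bounded open `Ω' ⊆ X`. -/
def MemN11LocBounded (μ : Measure X) (u : X → ℝ) : Prop :=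
  ∀ Ω' : Set X, IsOpen Ω' → Bornology.IsBounded Ω' → NNorm μ Ω' u < ∞

/-- `u ∈ N^{1,1}_0(Ω)`: `u ∈ N^{1,1}(X)` and `u = 0` outside `Ω`. -/
def MemN110 (μ : Measure X) (Ω : Set X) (u : X → ℝ) : Prop :=
  MemN11 μ Set.univ u ∧ ∀ x ∉ Ω, u x = 0

/-- The `1`-capacity `capa₁(A) = inf {‖u‖_{N^{1,1}(X)} : u ∈ N^{1,1}(X), u ≥ 1 on A}`. -/
def capa1 (μ : Measure X) (A : Set X) : ℝ≥0∞ :=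
  ⨅ (u : X → ℝ) (_ : MemN11 μ Set.univ u) (_ : ∀ x ∈ A, 1 ≤ u x), NNorm μ Set.univ u

/-- `U` is `1`-quasiopen: for every `ε > 0` there is an open `G` with `capa₁(G) < ε`
such that `U ∪ G` is open. -/
def QuasiOpen (μ : Measure X) (U : Set X) : Prop :=
  ∀ ε : ℝ, 0 < ε → ∃ G : Set X, IsOpen G ∧ capa1 μ G < ENNReal.ofReal ε ∧ IsOpen (U ∪ G)

/-- `u ∈ L¹_loc(A)`. -/
def MemL1Loc (μ : Measure X) (A : Set X) (u : X → ℝ) : Prop :=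
  AEMeasurable u (μ.restrict A) ∧
    ∀ x ∈ A, ∃ r > (0 : ℝ), (∫⁻ y in A ∩ Metric.ball x r, ENNReal.ofReal |u y| ∂μ) < ∞

/-- `v i → u` in `L¹_loc(A)`: every `x ∈ A` has a ball `B` with `v i → u` in `L¹(A ∩ B)`. -/
def L1LocConv (μ : Measure X) (A : Set X) (v : ℕ → X → ℝ) (u : X → ℝ) : Prop :=
  ∀ x ∈ A, ∃ r > (0 : ℝ),
    Filter.Tendsto (fun i => ∫⁻ y in A ∩ Metric.ball x r, ENNReal.ofReal |v i y - u y| ∂μ)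
      Filter.atTop (𝓝 0)

/-- `u` is locally Lipschitz on `Ω`. -/
def LocLipOn (u : X → ℝ) (Ω : Set X) : Prop :=
  ∀ x ∈ Ω, ∃ r > (0 : ℝ), ∃ K : ℝ≥0, LipschitzOnWith K u (Ω ∩ Metric.ball x r)

/-- The total variation `‖Du‖(Ω)` of `u` in an open set `Ω`: the infimum of
`liminf_i ∫_Ω g_{v i} dμ` over sequences of locally Lipschitz functions `v i → u`
in `L¹_loc(Ω)`, where `g_{v i}` is the minimal `1`-weak upper gradient of `v i` in `Ω`. -/
def tvOpen (μ : Measure X) (Ω : Set X) (u : X → ℝ) : ℝ≥0∞ :=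
  ⨅ (v : ℕ → X → ℝ) (g : ℕ → X → ℝ≥0∞) (_ : ∀ i, LocLipOn (v i) Ω)
    (_ : ∀ i, IsMinimalWUG μ (v i) (g i) Ω) (_ : L1LocConv μ Ω v u),
    Filter.liminf (fun i => ∫⁻ x in Ω, g i x ∂μ) Filter.atTop

/-- The total variation `‖Du‖(A)` of `u` in an arbitrary set `A`:
`inf {‖Du‖(Ω) : Ω ⊇ A open}`. -/
def tv (μ : Measure X) (A : Set X) (u : X → ℝ) : ℝ≥0∞ :=
  ⨅ (Ω : Set X) (_ : IsOpen Ω) (_ : A ⊆ Ω), tvOpen μ Ω u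

/-- The perimeter `P(E, A) = ‖Dχ_E‖(A)` for arbitrary `A`. -/
def perim (μ : Measure X) (E A : Set X) : ℝ≥0∞ :=
  tv μ A (Set.indicator E (fun _ => (1 : ℝ)))

/-- The perimeter `P(E, Ω) = ‖Dχ_E‖(Ω)` for open `Ω`. -/
def perimOpen (μ : Measure X) (E Ω : Set X) : ℝ≥0∞ :=
  tvOpen μ Ω (Set.indicator E (fun _ => (1 : ℝ)))

/-- The measure `μ` is doubling with constant `Cd`. -/
def Doubling (μ : Measure X) (Cd : ℝ) : Prop :=
  1 ≤ Cd ∧ ∀ (x : X) (r : ℝ), 0 < r →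
    0 < μ (Metric.ball x (2 * r)) ∧
      μ (Metric.ball x (2 * r)) ≤ ENNReal.ofReal Cd * μ (Metric.ball x r) ∧
      μ (Metric.ball x r) < ∞

/-- The space supports a `(1,1)`-Poincaré inequality with constants `CP, lam`. -/
def Poincare (μ : Measure X) (CP lam : ℝ) : Prop :=
  1 ≤ CP ∧ 1 ≤ lam ∧ ∀ (x : X) (r : ℝ), 0 < r → ∀ (u : X → ℝ) (g : X → ℝ≥0∞),
    MemL1Loc μ Set.univ u → IsUpperGradient u g →
      ENNReal.ofReal (⨍ y in Metric.ball x r, |u y - ⨍ z in Metric.ball x r, u z ∂μ| ∂μ)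
        ≤ ENNReal.ofReal (CP * r) *
            ((∫⁻ y in Metric.ball x (lam * r), g y ∂μ) / μ (Metric.ball x (lam * r)))

/-- The restricted spherical Hausdorff content of codimension one. -/
def HR (μ : Measure X) (R : ℝ) (A : Set X) : ℝ≥0∞ :=
  ⨅ (c : ℕ → X) (r : ℕ → ℝ) (_ : ∀ i, 0 < r i ∧ r i ≤ R)
    (_ : A ⊆ ⋃ i, Metric.ball (c i) (r i)),
    ∑' i, μ (Metric.ball (c i) (r i)) / ENNReal.ofReal (r i)

/-- The codimension-one Hausdorff measure `H(A) = lim_{R → 0} H_R(A)`. -/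
def Hcodim (μ : Measure X) (A : Set X) : ℝ≥0∞ :=
  ⨆ (R : ℝ) (_ : 0 < R), HR μ R A

/-- The lower approximate limit `u^∧`. -/
def lowerApprox (μ : Measure X) (u : X → ℝ) (x : X) : EReal :=
  sSup ((fun t : ℝ => (t : EReal)) ''
    {t : ℝ | Filter.Tendsto
      (fun r => μ (Metric.ball x r ∩ {y | u y < t}) / μ (Metric.ball x r))
      (𝓝[>] (0 : ℝ)) (𝓝 0)})

/-- The upper approximate limit `u^∨`. -/
def upperApprox (μ : Measure X) (u : X → ℝ) (x : X) : EReal :=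
  sInf ((fun t : ℝ => (t : EReal)) ''
    {t : ℝ | Filter.Tendsto
      (fun r => μ (Metric.ball x r ∩ {y | t < u y}) / μ (Metric.ball x r))
      (𝓝[>] (0 : ℝ)) (𝓝 0)})

/-- `u ∈ BV_loc(X)`: `u ∈ L¹_loc(X)` with `‖Du‖(Ω') < ∞` for every bounded open `Ω'`. -/
def MemBVLoc (μ : Measure X) (u : X → ℝ) : Prop :=
  MemL1Loc μ Set.univ u ∧
    ∀ Ω' : Set X, IsOpen Ω' → Bornology.IsBounded Ω' → tvOpen μ Ω' u < ∞

/-- The measure-theoretic interior `I_E`. -/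
def mInterior (μ : Measure X) (E : Set X) : Set X :=
  {x | Filter.Tendsto (fun r => μ (Metric.ball x r \ E) / μ (Metric.ball x r))
    (𝓝[>] (0 : ℝ)) (𝓝 0)}

/-- The measure-theoretic exterior `O_E`. -/
def mExterior (μ : Measure X) (E : Set X) : Set X :=
  {x | Filter.Tendsto (fun r => μ (Metric.ball x r ∩ E) / μ (Metric.ball x r))
    (𝓝[>] (0 : ℝ)) (𝓝 0)}

/-- The measure-theoretic boundary `∂*E`: the points where both `E` and its complement
have positive upper density. -/
def mBoundary (μ : Measure X) (E : Set X) : Set X :=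
  {x | 0 < Filter.limsup (fun r => μ (Metric.ball x r ∩ E) / μ (Metric.ball x r))
        (𝓝[>] (0 : ℝ)) ∧
       0 < Filter.limsup (fun r => μ (Metric.ball x r \ E) / μ (Metric.ball x r))
        (𝓝[>] (0 : ℝ))}


set_option linter.unusedSectionVars false

/-- Globally Lipschitz extension of a curve. -/
def Curve.ext (γ : Curve X) (t : ℝ) : X := γ.toFun (max 0 (min t γ.len))

lemma Curve.ext_eq (γ : Curve X) {t : ℝ} (ht : t ∈ Icc (0:ℝ) γ.len) : γ.ext t = γ.toFun t := by
  unfold Curve.ext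
  rw [min_eq_left ht.2, max_eq_right ht.1]

lemma Curve.ext_lip (γ : Curve X) : LipschitzWith 1 γ.ext := by
  refine LipschitzWith.of_dist_le_mul fun s t => ?_
  have hm : ∀ s : ℝ, max 0 (min s γ.len) ∈ Icc (0:ℝ) γ.len := fun s =>
    ⟨le_max_left _ _, max_le γ.len_nonneg (min_le_right _ _)⟩
  have h1 := γ.lip.dist_le_mul _ (hm s) _ (hm t)
  refine h1.trans ?_
  gcongr
  rw [Real.dist_eq, Real.dist_eq, max_comm 0, max_comm 0]
  exact (abs_max_sub_max_le_abs _ _ _).trans (by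
    have := abs_min_sub_min_le_max s γ.len t γ.len
    simpa using this)

lemma Curve.ext_cont (γ : Curve X) : Continuous γ.ext := γ.ext_lip.continuous

lemma Curve.integral_eq (γ : Curve X) (g : X → ℝ≥0∞) :
    γ.integral g = ∫⁻ t in Icc (0:ℝ) γ.len, g (γ.ext t) := by
  unfold Curve.integral
  refine setLIntegral_congr_fun measurableSet_Icc fun t ht => ?_
  simp only [γ.ext_eq ht]

lemma zeroMod_mono {μ : Measure X} {Γ Γ' : Set (Curve X)} (h : ZeroMod μ Γ) (hs : Γ' ⊆ Γ) :
    ZeroMod μ Γ' := by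
  obtain ⟨ρ, h1, h2, h3⟩ := h
  exact ⟨ρ, h1, h2, fun γ hγ => h3 γ (hs hγ)⟩

lemma zeroMod_iUnion {ι : Type*} [Countable ι] {μ : Measure X} {Γ : ι → Set (Curve X)}
    (h : ∀ i, ZeroMod μ (Γ i)) : ZeroMod μ (⋃ i, Γ i) := by
  choose ρ h1 h2 h3 using h
  obtain ⟨δ, hδ, hsum⟩ := ENNReal.exists_pos_tsum_mul_lt_of_countable one_ne_zero
    (fun i => ∫⁻ x, ρ i x ∂μ) (fun i => (h2 i).ne)
  refine ⟨fun x => ∑' i, ρ i x * δ i, ?_, ?_, ?_⟩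
  · exact Measurable.tsum fun i => (h1 i).mul_const _
  · rw [lintegral_tsum fun i => ((h1 i).mul_const _).aemeasurable]
    simp_rw [lintegral_mul_const _ (h1 _)]
    exact hsum.trans ENNReal.one_lt_top
  · intro γ hγ
    obtain ⟨i, hi⟩ := mem_iUnion.1 hγ
    have : γ.integral (fun x => ρ i x * δ i) = ∞ := by
      rw [Curve.integral_eq, lintegral_mul_const _ (show Measurable fun t => ρ i (γ.ext t) from (h1 i).comp γ.ext_cont.measurable),
        ← Curve.integral_eq, h3 i γ hi]
      exact ENNReal.top_mul (by simpa using (hδ i).ne')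
    refine top_le_iff.1 (this ▸ lintegral_mono fun t => ?_)
    exact ENNReal.le_tsum (f := fun i => ρ i (γ.toFun t) * δ i) i

lemma zeroMod_union {μ : Measure X} {Γ Γ' : Set (Curve X)} (h : ZeroMod μ Γ) (h' : ZeroMod μ Γ') :
    ZeroMod μ (Γ ∪ Γ') := by
  rw [union_eq_iUnion]
  exact zeroMod_iUnion fun b => by cases b <;> simpa

lemma zeroMod_empty {μ : Measure X} : ZeroMod μ (∅ : Set (Curve X)) :=
  ⟨0, measurable_const, by simp, by simp⟩

/-- derivative form of the weak upper gradient property. -/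
def DG (μ : Measure X) (O : Set X) (v : X → ℝ) (g : X → ℝ≥0∞) : Prop :=
  ZeroMod μ {γ : Curve X | ¬ ∀ᵐ t : ℝ, t ∈ Ioo 0 γ.len → γ.ext t ∈ O →
    ‖deriv (fun s => v (γ.ext s)) t‖ₑ ≤ g (γ.ext t)}

lemma locLip_curve {v : X → ℝ} {O : Set X} (hv : LocLipOn v O) (hO : IsOpen O) {c : ℝ → X}
    (hc : LipschitzWith 1 c) {t : ℝ} (ht : c t ∈ O) :
    ∃ δ > (0:ℝ), ∃ K : ℝ≥0, LipschitzOnWith K (fun s => v (c s)) (Ioo (t - δ) (t + δ)) := by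
  obtain ⟨r, hr, K, hK⟩ := hv _ ht
  have : c ⁻¹' (O ∩ ball (c t) r) ∈ 𝓝 t :=
    hc.continuous.continuousAt.preimage_mem_nhds
      ((hO.inter isOpen_ball).mem_nhds ⟨ht, mem_ball_self hr⟩)
  obtain ⟨δ, hδ, hs⟩ := Metric.mem_nhds_iff.1 this
  refine ⟨δ, hδ, K, ?_⟩
  rw [Real.ball_eq_Ioo] at hs
  have := hK.comp (hc.lipschitzOnWith (s := Ioo (t - δ) (t + δ))) hs
  rw [mul_one] at this
  exact this

lemma locLip_ae_diff {v : X → ℝ} {O : Set X} (hv : LocLipOn v O) (hO : IsOpen O) {c : ℝ → X}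
    (hc : LipschitzWith 1 c) :
    ∀ᵐ t : ℝ, c t ∈ O → DifferentiableAt ℝ (fun s => v (c s)) t := by
  rw [ae_iff]
  refine measure_null_of_locally_null _ fun t ht => ?_
  have ht : c t ∈ O := by
    by_contra h
    exact ht (fun h' => absurd h' h)
  obtain ⟨δ, hδ, K, hK⟩ := locLip_curve hv hO hc ht
  have h := hK.ae_differentiableWithinAt_of_mem_real
  refine ⟨{a | ¬(c a ∈ O → DifferentiableAt ℝ (fun s => v (c s)) a)} ∩ Ioo (t - δ) (t + δ), ?_, ?_⟩
  · exact inter_mem_nhdsWithin _ (Ioo_mem_nhds (by linarith) (by linarith))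
  · refine measure_mono_null ?_ (ae_iff.1 h)
    rintro a ⟨hna, ha⟩ h'
    exact hna fun _ => (h' ha).differentiableAt (isOpen_Ioo.mem_nhds ha)

lemma ugIneq_of_deriv {v : X → ℝ} {O : Set X} (hv : LocLipOn v O) (hO : IsOpen O) (γ : Curve X)
    (hγ : γ.In O) {g : X → ℝ≥0∞}
    (h : ∀ᵐ t : ℝ, t ∈ Ioo 0 γ.len → γ.ext t ∈ O →
    ‖deriv (fun s => v (γ.ext s)) t‖ₑ ≤ g (γ.ext t)) : UGIneq v g γ := by
  have hin : ∀ t ∈ Icc (0:ℝ) γ.len, γ.ext t ∈ O := fun t ht => by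
    rw [γ.ext_eq ht]; exact hγ t ht
  have hll : LocallyLipschitzOn (Icc (0:ℝ) γ.len) (fun s => v (γ.ext s)) := by
    intro t ht
    obtain ⟨δ, hδ, K, hK⟩ := locLip_curve hv hO γ.ext_lip (hin t ht)
    exact ⟨K, _, mem_nhdsWithin_of_mem_nhds (Ioo_mem_nhds (by linarith) (by linarith)), hK⟩
  obtain ⟨K, hK⟩ := hll.exists_lipschitzOnWith_of_compact isCompact_Icc
  have hac : AbsolutelyContinuousOnInterval (fun s => v (γ.ext s)) 0 γ.len := by
    apply LipschitzOnWith.absolutelyContinuousOnInterval (K := K)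
    rwa [uIcc_of_le γ.len_nonneg]
  have hI := hac.integral_deriv_eq_sub
  unfold UGIneq
  rw [← γ.ext_eq ⟨le_rfl, γ.len_nonneg⟩, ← γ.ext_eq ⟨γ.len_nonneg, le_rfl⟩, Curve.integral_eq,
    abs_sub_comm, ← hI, intervalIntegral.integral_of_le γ.len_nonneg, ← Real.norm_eq_abs,
    ofReal_norm]
  refine (enorm_integral_le_lintegral_enorm _).trans ?_
  rw [setLIntegral_congr Ioo_ae_eq_Ioc.symm, ← setLIntegral_congr Ioo_ae_eq_Icc]
  refine setLIntegral_mono_ae' measurableSet_Ioo ?_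
  filter_upwards [h] with t ht1 ht2
  exact ht1 ht2 (hin t ⟨ht2.1.le, ht2.2.le⟩)

/-- subcurve -/
def Curve.sub (γ : Curve X) (a b : ℝ) (hab : a ≤ b) : Curve X where
  len := b - a
  len_nonneg := by linarith
  toFun := fun s => γ.ext (s + a)
  lip := by
    have : LipschitzWith 1 (fun s : ℝ => γ.ext (s + a)) := by
      refine LipschitzWith.of_dist_le_mul fun s t => ?_
      have := γ.ext_lip.dist_le_mul (s + a) (t + a)
      simpa using this
    exact this.lipschitzOnWith

lemma Curve.sub_integral (γ : Curve X) (a b : ℝ) (hab : a ≤ b) (g : X → ℝ≥0∞) :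
    (γ.sub a b hab).integral g = ∫⁻ t in Icc a b, g (γ.ext t) := by
  unfold Curve.integral Curve.sub
  simp only
  have h := (measurePreserving_add_right (volume : Measure ℝ) a)
  have he : MeasurableEmbedding (fun x : ℝ => x + a) := (MeasurableEquiv.addRight a).measurableEmbedding
  have := h.setLIntegral_comp_preimage_emb he (fun t => g (γ.ext t)) (Icc a b)
  rw [← this]
  congr 2
  ext x
  simp

lemma dg_of_wug {μ : Measure X} {O : Set X} (hO : IsOpen O) {v : X → ℝ} {g : X → ℝ≥0∞}
    (h : IsWeakUpperGradientOn μ v g O) (hfin : ∫⁻ x in O, g x ∂μ < ∞) :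
    ∃ g' : X → ℝ≥0∞, Measurable g' ∧ g ≤ g' ∧ g' =ᵐ[μ] g ∧ DG μ O v g' := by
  obtain ⟨hm, ρ, hρ1, hρ2, hρ3⟩ := h
  obtain ⟨N, hN1, hN2, hN3⟩ := exists_measurable_superset_of_null (ae_iff.1 hm.ae_eq_mk)
  classical
  set g' : X → ℝ≥0∞ := fun x => hm.mk g x + N.indicator (fun _ => ∞) x with hg'
  have hg'm : Measurable g' := hm.measurable_mk.add (measurable_const.indicator hN2)
  have hle : g ≤ g' := by
    intro x
    by_cases hx : x ∈ N
    · simp [hg', hx]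
    · have : g x = hm.mk g x := by
        by_contra h'; exact hx (hN1 h')
      simp [hg', hx, this]
  have hae : g' =ᵐ[μ] g := by
    have : ∀ᵐ x ∂μ, x ∉ N := measure_eq_zero_iff_ae_notMem.1 hN3
    filter_upwards [this, hm.ae_eq_mk] with x hx hx'
    simp [hg', hx, hx']
  refine ⟨g', hg'm, hle, hae, ?_⟩
  have hfin' : ∫⁻ x, O.indicator g' x ∂μ < ∞ := by
    rw [lintegral_indicator hO.measurableSet]
    rwa [lintegral_congr_ae (ae_restrict_of_ae hae)]
  refine ⟨fun x => ρ x + O.indicator g' x, hρ1.add (hg'm.indicator hO.measurableSet), ?_, ?_⟩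
  · rw [lintegral_add_left hρ1]
    exact ENNReal.add_lt_top.2 ⟨hρ2, hfin'⟩
  intro γ hγ
  by_contra hne
  apply hγ
  have hcm := γ.ext_cont.measurable
  have hmO : Measurable (O.indicator g') := hg'm.indicator hO.measurableSet
  rw [Curve.integral_eq, lintegral_add_left (show Measurable fun t => ρ (γ.ext t) from hρ1.comp hcm), ENNReal.add_eq_top, not_or] at hne
  obtain ⟨hn1, hn2⟩ := hne
  set k : ℝ → ℝ≥0∞ := fun t => O.indicator g' (γ.ext t) with hk
  have hkm : Measurable k := hmO.comp hcm
  have hint : IntegrableOn (fun t => (k t).toReal) (Icc 0 γ.len) :=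
    integrable_toReal_of_lintegral_ne_top hkm.aemeasurable hn2
  have hii : IntervalIntegrable (fun t => (k t).toReal) volume 0 γ.len := by
    rw [intervalIntegrable_iff_integrableOn_Icc_of_le γ.len_nonneg]; exact hint
  have hkf : ∀ᵐ t : ℝ, t ∈ Icc 0 γ.len → k t < ∞ := by
    have := ae_lt_top hkm hn2
    rwa [ae_restrict_iff' measurableSet_Icc] at this
  filter_upwards [hii.ae_hasDerivAt_integral, hkf] with t ht1 ht2 ht htO
  have htI : t ∈ Icc 0 γ.len := ⟨ht.1.le, ht.2.le⟩
  have hD := ht1 (by rwa [uIcc_of_le γ.len_nonneg]) 0 (by simp)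
  by_cases hdiff : DifferentiableAt ℝ (fun s => v (γ.ext s)) t
  swap
  · rw [deriv_zero_of_not_differentiableAt hdiff]; simp
  have hD' := hdiff.hasDerivAt
  rw [hasDerivAt_iff_tendsto_slope] at hD hD'
  have hlim1 := (hD'.mono_left (nhdsWithin_mono t (s := Ioi t) (fun s hs => ne_of_gt hs))).norm
  have hlim2 := hD.mono_left (nhdsWithin_mono t (s := Ioi t) (fun s hs => ne_of_gt hs))
  have hnb : ∀ᶠ s in 𝓝[>] t, Icc t s ⊆ γ.ext ⁻¹' O ∧ s < γ.len := by
    have : γ.ext ⁻¹' O ∈ 𝓝 t := γ.ext_cont.continuousAt.preimage_mem_nhds (hO.mem_nhds htO)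
    obtain ⟨δ, hδ, hs⟩ := Metric.mem_nhds_iff.1 this
    rw [Real.ball_eq_Ioo] at hs
    filter_upwards [Ioo_mem_nhdsGT (show t < min (t + δ) γ.len from lt_min (by linarith) ht.2)] with s hs'
    refine ⟨fun a ha => hs ⟨by linarith [ha.1], ?_⟩, hs'.2.trans_le (min_le_right _ _)⟩
    exact ha.2.trans_lt (hs'.2.trans_le (min_le_left _ _))
  have key : ‖deriv (fun s => v (γ.ext s)) t‖ ≤ (k t).toReal := by
    refine le_of_tendsto_of_tendsto hlim1 hlim2 ?_
    filter_upwards [hnb, self_mem_nhdsWithin] with s hs hst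
    have hst : t < s := hst
    have hsub : Icc t s ⊆ Icc 0 γ.len := Icc_subset_Icc ht.1.le hs.2.le
    have hUG : UGIneq v g (γ.sub t s hst.le) := by
      by_contra hno
      have hin : (γ.sub t s hst.le).In O := by
        intro a ha
        refine hs.1 ⟨by linarith [ha.1], ?_⟩
        have := ha.2
        simp only [Curve.sub] at this
        linarith
      have h1 := hρ3 _ ⟨hin, hno⟩
      rw [Curve.sub_integral] at h1
      exact hn1 (top_le_iff.1 (h1 ▸ lintegral_mono_set hsub))
    have hUG2 : ENNReal.ofReal |v (γ.ext t) - v (γ.ext s)| ≤ ∫⁻ a in Icc t s, k a := by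
      unfold UGIneq at hUG
      rw [Curve.sub_integral] at hUG
      simp only [Curve.sub, zero_add, sub_add_cancel] at hUG
      refine hUG.trans (setLIntegral_mono' measurableSet_Icc fun a ha => ?_)
      have : γ.ext a ∈ O := hs.1 ha
      simp only [hk, indicator_of_mem this]
      exact hle _
    have hfin2 : ∫⁻ a in Icc t s, k a ≠ ∞ :=
      ne_top_of_le_ne_top hn2 (lintegral_mono_set hsub)
    have hI : ∫ a in t..s, (k a).toReal = (∫⁻ a in Icc t s, k a).toReal := by
      rw [intervalIntegral.integral_of_le hst.le, ← integral_Icc_eq_integral_Ioc,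
        integral_toReal hkm.aemeasurable (ae_lt_top hkm hfin2)]
    have hI2 : (∫ a in (0:ℝ)..s, (k a).toReal) - ∫ a in (0:ℝ)..t, (k a).toReal
        = ∫ a in t..s, (k a).toReal := by
      rw [intervalIntegral.integral_interval_sub_left]
      · exact hii.mono_set (by
          rw [uIcc_of_le (ht.1.le.trans hst.le), uIcc_of_le γ.len_nonneg]
          exact Icc_subset_Icc le_rfl hs.2.le)
      · exact hii.mono_set (by
          rw [uIcc_of_le ht.1.le, uIcc_of_le γ.len_nonneg]
          exact Icc_subset_Icc le_rfl ht.2.le)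
    rw [slope_def_field, slope_def_field, norm_div, hI2, hI, Real.norm_eq_abs, Real.norm_eq_abs,
      abs_of_pos (sub_pos.2 hst)]
    gcongr
    rw [abs_sub_comm, ← ENNReal.ofReal_le_iff_le_toReal hfin2]
    exact hUG2
  rw [← ofReal_norm]
  have : g' (γ.ext t) = k t := by simp only [hk, indicator_of_mem htO]
  rw [this, ENNReal.ofReal_le_iff_le_toReal (ht2 htI).ne]
  exact key

lemma wug_of_dg {μ : Measure X} {O : Set X} (hO : IsOpen O) {v : X → ℝ} (hv : LocLipOn v O)
    {g : X → ℝ≥0∞} (hg : AEMeasurable g μ) (h : DG μ O v g) : IsWeakUpperGradientOn μ v g O :=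
  ⟨hg, zeroMod_mono h fun γ hγ h' => hγ.2 (ugIneq_of_deriv hv hO γ hγ.1 h')⟩

lemma DG.mono_set {μ : Measure X} {O O' : Set X} {v : X → ℝ} {g : X → ℝ≥0∞} (h : DG μ O v g)
    (hs : O' ⊆ O) : DG μ O' v g :=
  zeroMod_mono h fun γ hγ h' => hγ (by
    filter_upwards [h'] with t ht h1 h2 using ht h1 (hs h2))

lemma LocLipOn.mono {O O' : Set X} {v : X → ℝ} (h : LocLipOn v O) (hs : O' ⊆ O) :
    LocLipOn v O' := by
  intro x hx
  obtain ⟨r, hr, K, hK⟩ := h x (hs hx)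
  exact ⟨r, hr, K, hK.mono (inter_subset_inter_left _ hs)⟩

lemma dg_iInf {ι : Type*} [Countable ι] {μ : Measure X} {O : Set X} {v : X → ℝ} {g : ι → X → ℝ≥0∞}
    (h : ∀ i, DG μ O v (g i)) : DG μ O v (fun x => ⨅ i, g i x) := by
  refine zeroMod_mono (zeroMod_iUnion h) fun γ hγ => ?_
  rw [mem_iUnion]
  by_contra hc
  apply hγ
  have : ∀ i, ∀ᵐ t : ℝ, t ∈ Ioo 0 γ.len → γ.ext t ∈ O →
    ‖deriv (fun s => v (γ.ext s)) t‖ₑ ≤ g i (γ.ext t) := fun i =>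
      by_contra fun h => hc ⟨i, h⟩
  filter_upwards [ae_all_iff.2 this] with t ht h1 h2
  exact le_iInf fun i => ht i h1 h2

lemma dg_iUnion_set {ι : Type*} [Countable ι] {μ : Measure X} {O : ι → Set X} {v : X → ℝ}
    {g : X → ℝ≥0∞} (h : ∀ i, DG μ (O i) v g) : DG μ (⋃ i, O i) v g := by
  refine zeroMod_mono (zeroMod_iUnion h) fun γ hγ => ?_
  rw [mem_iUnion]
  by_contra hc
  apply hγ
  have : ∀ i, ∀ᵐ t : ℝ, t ∈ Ioo 0 γ.len → γ.ext t ∈ O i →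
    ‖deriv (fun s => v (γ.ext s)) t‖ₑ ≤ g (γ.ext t) := fun i =>
      by_contra fun h => hc ⟨i, h⟩
  filter_upwards [ae_all_iff.2 this] with t ht h1 h2
  obtain ⟨i, hi⟩ := mem_iUnion.1 h2
  exact ht i h1 hi

lemma doubling_iter {μ : Measure X} {Cd : ℝ} (h : Doubling μ Cd) (x : X) {r : ℝ} (hr : 0 < r) (n : ℕ) :
    μ (ball x (2 ^ n * r)) ≤ (ENNReal.ofReal Cd) ^ n * μ (ball x r) := by
  induction n with
  | zero => simp
  | succ n ih =>
    have := (h.2 x (2 ^ n * r) (by positivity)).2.1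
    rw [pow_succ', mul_assoc, pow_succ', mul_assoc]
    exact this.trans (by gcongr)

lemma doubling_pos {μ : Measure X} {Cd : ℝ} (h : Doubling μ Cd) (x : X) {r : ℝ} (hr : 0 < r) :
    0 < μ (ball x r) := by
  have := (h.2 x (r / 2) (by positivity)).1
  rwa [mul_div_cancel₀ _ (two_ne_zero)] at this

lemma properSpace_of_doubling {μ : Measure X} {Cd : ℝ} (h : Doubling μ Cd) [CompleteSpace X] :
    ProperSpace X := by
  refine ⟨fun x R => isCompact_iff_totallyBounded_isComplete.2 ⟨?_, isClosed_closedBall.isComplete⟩⟩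
  rw [Metric.totallyBounded_iff]
  intro ε hε
  by_contra hno
  push Not at hno
  obtain ⟨f, hf1, hf2⟩ := exists_seq_of_forall_finset_exists (fun y => y ∈ closedBall x R)
    (fun y z => ε ≤ dist z y) (by
      intro s hs
      have := hno (s : Set X) s.finite_toSet
      rw [not_subset] at this
      obtain ⟨y, hy, hy2⟩ := this
      refine ⟨y, hy, fun z hz => ?_⟩
      by_contra hlt
      exact hy2 (mem_biUnion hz (by simpa using hlt)))
  set s := ε / 2 with hs
  have hs0 : 0 < s := by positivity
  set M := |R| + 1 with hM
  have hM0 : 0 < M := by positivity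
  obtain ⟨n, hn⟩ := pow_unbounded_of_one_lt ((2 * M) / s) (one_lt_two)
  rw [div_lt_iff₀ hs0] at hn
  have hC : (0:ℝ≥0∞) < ENNReal.ofReal Cd ^ n := by
    have : 0 < Cd := by linarith [h.1]
    have := ENNReal.ofReal_pos.2 this
    exact ENNReal.pow_pos this n
  have hC' : ENNReal.ofReal Cd ^ n ≠ ∞ := ENNReal.pow_ne_top ENNReal.ofReal_ne_top
  have hlow : ∀ i, μ (ball x M) / ENNReal.ofReal Cd ^ n ≤ μ (ball (f i) s) := by
    intro i
    rw [ENNReal.div_le_iff hC.ne' hC', mul_comm]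
    refine le_trans (measure_mono ?_) (doubling_iter h (f i) hs0 n)
    intro y hy
    have h1 := hf1 i
    rw [mem_closedBall] at h1
    rw [mem_ball] at hy ⊢
    have := dist_triangle_right y (f i) x
    have := le_abs_self R
    linarith
  have hfin := Measure.finite_const_le_meas_of_disjoint_iUnion μ (ε := μ (ball x M) / ENNReal.ofReal Cd ^ n)
    (ENNReal.div_pos (doubling_pos h x hM0).ne' hC') (As := fun i => ball (f i) s)
    (fun i => measurableSet_ball) (by
      have key : ∀ m n, m < n → Disjoint (ball (f m) s) (ball (f n) s) := by
        intro a b hab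
        apply ball_disjoint_ball
        have := hf2 a b hab
        rw [dist_comm]; linarith
      intro a b hab
      rcases lt_or_gt_of_ne hab with h' | h'
      · exact key _ _ h'
      · exact (key _ _ h').symm) (by
      refine ne_top_of_le_ne_top (h.2 x (M + s) (by positivity)).2.2.ne (measure_mono ?_)
      refine iUnion_subset fun i y hy => ?_
      have h1 := hf1 i
      rw [mem_closedBall] at h1
      rw [mem_ball] at hy ⊢
      have := dist_triangle y (f i) x
      have := le_abs_self R
      linarith)
  have : {i : ℕ | μ (ball x M) / ENNReal.ofReal Cd ^ n ≤ μ (ball (f i) s)} = univ := by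
    ext i; simpa using hlow i
  rw [this] at hfin
  exact infinite_univ hfin

lemma locFin_of_doubling {μ : Measure X} {Cd : ℝ} (h : Doubling μ Cd) :
    IsLocallyFiniteMeasure μ :=
  ⟨fun x => ⟨ball x 1, ball_mem_nhds x one_pos, (h.2 x 1 one_pos).2.2⟩⟩

lemma DG.mono_fun {μ : Measure X} {O : Set X} {v : X → ℝ} {g g' : X → ℝ≥0∞} (h : DG μ O v g)
    (hs : ∀ x ∈ O, g x ≤ g' x) : DG μ O v g' :=
  zeroMod_mono h fun γ hγ h' => hγ (by
    filter_upwards [h'] with t ht h1 h2 using (ht h1 h2).trans (hs _ h2))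

lemma wug_mono_set {μ : Measure X} {O O' : Set X} {v : X → ℝ} {g : X → ℝ≥0∞}
    (h : IsWeakUpperGradientOn μ v g O) (hs : O' ⊆ O) : IsWeakUpperGradientOn μ v g O' :=
  ⟨h.1, zeroMod_mono h.2 fun _ hγ => ⟨fun t ht => hs (hγ.1 t ht), hγ.2⟩⟩

lemma dg_of_wug_loc [SecondCountableTopology X] {μ : Measure X} {O : Set X} (hO : IsOpen O)
    {v : X → ℝ} {g : X → ℝ≥0∞}
    (h : IsWeakUpperGradientOn μ v g O) (hfin : LIntegrableLocOn μ g O) :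
    ∃ g' : X → ℝ≥0∞, Measurable g' ∧ g' =ᵐ[μ.restrict O] g ∧ DG μ O v g' := by
  choose! r hr hfin using hfin
  obtain ⟨t, hts, htc, hcov⟩ := TopologicalSpace.countable_cover_nhdsWithin (s := O)
    (f := fun x => ball x (r x)) (fun x hx => mem_nhdsWithin_of_mem_nhds (ball_mem_nhds x (hr x hx)))
  have : Countable t := htc.to_subtype
  have key : ∀ x : t, ∃ g' : X → ℝ≥0∞, Measurable g' ∧ g ≤ g' ∧ g' =ᵐ[μ] g ∧
      DG μ (O ∩ ball x.1 (r x.1)) v g' := fun x =>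
    dg_of_wug (hO.inter isOpen_ball) (wug_mono_set h inter_subset_left) (hfin x.1 (hts x.2))
  choose g' h1 h2 h3 h4 using key
  refine ⟨fun x => ⨆ i, g' i x, Measurable.iSup h1, ?_, ?_⟩
  · rw [Filter.EventuallyEq, ae_restrict_iff' hO.measurableSet]
    filter_upwards [ae_all_iff.2 h3] with x hx hxO
    obtain ⟨i, hi, -⟩ := mem_iUnion₂.1 (hcov hxO)
    apply le_antisymm
    · exact iSup_le fun j => (hx j).le
    · exact (h2 ⟨i, hi⟩ x).trans (le_iSup (fun j => g' j x) ⟨i, hi⟩)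
  · have := dg_iUnion_set (v := v) (μ := μ) (g := fun x => ⨆ i, g' i x)
      (O := fun x : t => O ∩ ball x.1 (r x.1))
      (fun i => (h4 i).mono_fun fun x _ => le_iSup (fun j => g' j x) i)
    refine this.mono_set fun x hx => ?_
    obtain ⟨i, hi, hxi⟩ := mem_iUnion₂.1 (hcov hx)
    exact mem_iUnion.2 ⟨⟨i, hi⟩, hx, hxi⟩

lemma exists_minimal [SecondCountableTopology X] {μ : Measure X} [SFinite μ] {O : Set X}
    (hO : IsOpen O) {v : X → ℝ} (hv : LocLipOn v O) {g : X → ℝ≥0∞} (hg : Measurable g)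
    (hd : DG μ O v g) :
    ∃ gm, IsMinimalWUG μ v gm O ∧ ∀ᵐ x ∂(μ.restrict O), gm x ≤ g x := by
  set ν := (μ.restrict O).toFinite with hν
  set S : Set (X → ℝ≥0∞) := {g | Measurable g ∧ DG μ O v g} with hS
  set F : (X → ℝ≥0∞) → ℝ≥0∞ := fun g => ∫⁻ x, (1 + g x)⁻¹ ∂ν with hF
  have hFm : ∀ {g : X → ℝ≥0∞}, Measurable g → Measurable fun x => (1 + g x)⁻¹ := fun h =>
    (measurable_const.add h).inv
  obtain ⟨a, -, ha1, ha2⟩ := exists_seq_tendsto_sSup (S := F '' S) ⟨_, g, ⟨hg, hd⟩, rfl⟩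
    (OrderTop.bddAbove _)
  choose G hG1 hG2 using ha2
  set gm : X → ℝ≥0∞ := fun x => ⨅ n, G n x with hgm
  have hgmS : gm ∈ S := ⟨Measurable.iInf fun n => (hG1 n).1, dg_iInf fun n => (hG1 n).2⟩
  have hle : ∀ h ∈ S, F h ≤ F gm := by
    intro h hh
    refine (le_sSup (mem_image_of_mem F hh)).trans ?_
    refine le_of_tendsto' ha1 fun n => ?_
    rw [← hG2 n]
    refine lintegral_mono fun x => ?_
    simp only
    gcongr
    exact iInf_le _ n
  have hfinF : F gm ≠ ∞ := by
    refine ne_top_of_le_ne_top (measure_ne_top ν univ) ?_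
    calc F gm ≤ ∫⁻ x, 1 ∂ν := lintegral_mono fun x => ENNReal.inv_le_one.2 (by simp)
      _ = _ := by simp
  have hmin : ∀ h ∈ S, ∀ᵐ x ∂(μ.restrict O), gm x ≤ h x := by
    intro h hh
    have hk : (fun x => ⨅ b : Bool, (if b then gm x else h x)) ∈ S := by
      refine ⟨Measurable.iInf fun b => by cases b <;> simp [hh.1, hgmS.1],
        dg_iInf (g := fun (b : Bool) x => if b then gm x else h x) fun b => ?_⟩
      cases b
      · simpa using hh.2
      · simpa using hgmS.2
    have hk2 : (fun x => ⨅ b : Bool, (if b then gm x else h x)) = fun x => min (gm x) (h x) := by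
      ext x
      rw [iInf_bool_eq]; simp
    rw [hk2] at hk
    have := ae_eq_of_ae_le_of_lintegral_le (μ := ν) (f := fun x => (1 + gm x)⁻¹)
      (g := fun x => (1 + min (gm x) (h x))⁻¹) (Eventually.of_forall fun x => by
        simp only; gcongr; exact min_le_left _ _) hfinF (hFm hk.1).aemeasurable (hle _ hk)
    have := absolutelyContinuous_toFinite (μ.restrict O) |>.ae_le this
    filter_upwards [this] with x hx
    have h3 := inv_injective hx
    rcases le_total (gm x) (h x) with h' | h'
    · exact h'
    · rw [min_eq_right h'] at h3
      exact ((ENNReal.add_right_inj ENNReal.one_ne_top).1 h3).le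
  refine ⟨gm, ⟨wug_of_dg hO hv hgmS.1.aemeasurable hgmS.2, fun g' hg' hfin => ?_⟩, hmin g ⟨hg, hd⟩⟩
  obtain ⟨g'', h1, h2, h3⟩ := dg_of_wug_loc hO hg' hfin
  filter_upwards [hmin g'' ⟨h1, h3⟩, h2] with x hx hx2
  rwa [← hx2]

lemma dg_comb {ι : Type*} [Countable ι] {μ : Measure X} {O : Set X} {v : ι → X → ℝ}
    {g : ι → X → ℝ≥0∞} {Oi : ι → Set X} (hOi : ∀ i, IsOpen (Oi i))
    (hv : ∀ i, LocLipOn (v i) (Oi i)) (hd : ∀ i, DG μ (Oi i) (v i) (g i))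
    {w : X → ℝ} {gw : X → ℝ≥0∞}
    (H : ∀ c : ℝ → X, LipschitzWith 1 c → ∀ t, c t ∈ O →
      (∀ i, c t ∈ Oi i → DifferentiableAt ℝ (fun s => v i (c s)) t ∧
        ‖deriv (fun s => v i (c s)) t‖ₑ ≤ g i (c t)) →
      ‖deriv (fun s => w (c s)) t‖ₑ ≤ gw (c t)) : DG μ O w gw := by
  refine zeroMod_mono (zeroMod_iUnion hd) fun γ hγ => ?_
  rw [mem_iUnion]
  by_contra hc
  apply hγ
  have h1 : ∀ i, ∀ᵐ t : ℝ, t ∈ Ioo 0 γ.len → γ.ext t ∈ Oi i →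
    ‖deriv (fun s => v i (γ.ext s)) t‖ₑ ≤ g i (γ.ext t) := fun i =>
      by_contra fun h => hc ⟨i, h⟩
  have h2 := fun i => locLip_ae_diff (hv i) (hOi i) γ.ext_lip
  filter_upwards [ae_all_iff.2 h1, ae_all_iff.2 h2] with t ht1 ht2 ht htO
  exact H γ.ext γ.ext_lip t htO fun i hi => ⟨ht2 i hi, ht1 i ht hi⟩

lemma locLipOn_of_lip {v : X → ℝ} {K : ℝ≥0} (h : LipschitzWith K v) (O : Set X) :
    LocLipOn v O := fun _ _ => ⟨1, one_pos, K, h.lipschitzOnWith⟩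

lemma dg_lip {μ : Measure X} {v : X → ℝ} {K : ℝ≥0} (h : LipschitzWith K v) (O : Set X) :
    DG μ O v (fun _ => (K : ℝ≥0∞)) := by
  refine zeroMod_mono zeroMod_empty fun γ hγ => hγ ?_
  refine Eventually.of_forall fun t _ _ => ?_
  have : LipschitzWith K (fun s => v (γ.ext s)) := by
    have := h.comp γ.ext_lip
    rwa [mul_one] at this
  have h := norm_deriv_le_of_lipschitz (x₀ := t) this
  rw [← ofReal_norm, ← ENNReal.ofReal_coe_nnreal]
  exact ENNReal.ofReal_le_ofReal h

lemma LocLipOn.continuousOn {v : X → ℝ} {O : Set X} (h : LocLipOn v O) :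
    ContinuousOn v O := by
  intro x hx
  obtain ⟨r, hr, K, hK⟩ := h x hx
  have := hK.continuousOn x ⟨hx, mem_ball_self hr⟩
  exact this.mono_of_mem_nhdsWithin (inter_mem_nhdsWithin _ (ball_mem_nhds x hr))

lemma LocLipOn.aemeasurable {v : X → ℝ} {O : Set X} (h : LocLipOn v O) (hO : IsOpen O)
    {μ : Measure X} : AEMeasurable v (μ.restrict O) :=
  h.continuousOn.aemeasurable hO.measurableSet

lemma locLipOn_of_nhds {v : X → ℝ} {O : Set X}
    (h : ∀ x ∈ O, ∃ K : ℝ≥0, ∃ s ∈ 𝓝 x, LipschitzOnWith K v s) : LocLipOn v O := by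
  intro x hx
  obtain ⟨K, s, hs, hK⟩ := h x hx
  obtain ⟨r, hr, hrs⟩ := Metric.mem_nhds_iff.1 hs
  exact ⟨r, hr, K, hK.mono (inter_subset_right.trans hrs)⟩

lemma LocLipOn.nhds {v : X → ℝ} {O : Set X} (h : LocLipOn v O) (hO : IsOpen O) {x : X} (hx : x ∈ O) :
    ∃ K : ℝ≥0, ∃ s ∈ 𝓝 x, LipschitzOnWith K v s := by
  obtain ⟨r, hr, K, hK⟩ := h x hx
  exact ⟨K, _, inter_mem (hO.mem_nhds hx) (ball_mem_nhds x hr), hK⟩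

lemma LocLipOn.add {v w : X → ℝ} {O : Set X} (h : LocLipOn v O) (h' : LocLipOn w O) :
    LocLipOn (fun x => v x + w x) O := by
  intro x hx
  obtain ⟨r, hr, K, hK⟩ := h x hx
  obtain ⟨r', hr', K', hK'⟩ := h' x hx
  refine ⟨min r r', lt_min hr hr', K + K', ?_⟩
  exact (hK.mono (inter_subset_inter_right _ (ball_subset_ball (min_le_left _ _)))).add
    (hK'.mono (inter_subset_inter_right _ (ball_subset_ball (min_le_right _ _))))

lemma LocLipOn.sum {ι : Type*} (s : Finset ι) {v : ι → X → ℝ} {O : Set X}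
    (h : ∀ i ∈ s, LocLipOn (v i) O) : LocLipOn (fun x => ∑ i ∈ s, v i x) O := by
  classical
  induction s using Finset.induction_on with
  | empty => simpa using locLipOn_of_lip (LipschitzWith.const (0:ℝ)) O
  | insert a s ha ih =>
    simp only [Finset.sum_insert ha]
    exact (h a (by simp)).add (ih fun i hi => h i (by simp [hi]))

lemma LocLipOn.mul {v w : X → ℝ} {O : Set X} (h : LocLipOn v O) (h' : LocLipOn w O) :
    LocLipOn (fun x => v x * w x) O := by
  intro x hx
  obtain ⟨r, hr, K, hK⟩ := h x hx
  obtain ⟨r', hr', K', hK'⟩ := h' x hx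
  set ρ := min r r' with hρ
  have hρ0 : 0 < ρ := lt_min hr hr'
  have hK := hK.mono (inter_subset_inter_right O (ball_subset_ball (min_le_left r r')))
  have hK' := hK'.mono (inter_subset_inter_right O (ball_subset_ball (min_le_right r r')))
  have hx' : x ∈ O ∩ ball x ρ := ⟨hx, mem_ball_self hρ0⟩
  have hb : ∀ {f : X → ℝ} {K : ℝ≥0}, LipschitzOnWith K f (O ∩ ball x ρ) →
      ∀ y ∈ O ∩ ball x ρ, |f y| ≤ |f x| + K * ρ := by
    intro f K hf y hy
    have h1 := hf.dist_le_mul y hy x hx'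
    rw [Real.dist_eq] at h1
    have h2 : dist y x ≤ ρ := (mem_ball.1 hy.2).le
    have h3 := abs_sub_abs_le_abs_sub (f y) (f x)
    have : (K:ℝ) * dist y x ≤ K * ρ := by gcongr
    linarith
  set M : ℝ≥0 := ⟨|v x| + K * ρ, by positivity⟩ with hM
  set M' : ℝ≥0 := ⟨|w x| + K' * ρ, by positivity⟩ with hM'
  refine ⟨ρ, hρ0, M * K' + M' * K, LipschitzOnWith.of_dist_le_mul fun y hy z hz => ?_⟩
  have a1 := hK.dist_le_mul y hy z hz
  have a2 := hK'.dist_le_mul y hy z hz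
  have b1 : |v y| ≤ M := hb hK y hy
  have b2 : |w z| ≤ M' := hb hK' z hz
  rw [Real.dist_eq] at a1 a2 ⊢
  have : v y * w y - v z * w z = v y * (w y - w z) + w z * (v y - v z) := by ring
  rw [this]
  refine (abs_add_le _ _).trans ?_
  rw [abs_mul, abs_mul]
  push_cast
  have := mul_le_mul b1 a2 (abs_nonneg _) M.2
  have := mul_le_mul b2 a1 (abs_nonneg _) M'.2
  nlinarith

/-- admissible pair -/
def Adm (μ : Measure X) (A : Set X) (v : X → ℝ) (g : X → ℝ≥0∞) : Prop :=
  LocLipOn v A ∧ Measurable g ∧ DG μ A v g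

lemma Adm.mono_set {μ : Measure X} {A B : Set X} {v : X → ℝ} {g : X → ℝ≥0∞} (h : Adm μ A v g)
    (hs : B ⊆ A) : Adm μ B v g := ⟨h.1.mono hs, h.2.1, h.2.2.mono_set hs⟩

lemma exists_pou [SecondCountableTopology X] {A : Set X} (hA : A.Nonempty) (r : X → ℝ)
    (hr : ∀ x ∈ A, 0 < r x) :
    ∃ (x : ℕ → X) (φ : ℕ → X → ℝ) (C : ℕ → ℝ≥0), (∀ j, x j ∈ A) ∧ (∀ j y, 0 ≤ φ j y) ∧
      (∀ j, LipschitzWith (C j) (φ j)) ∧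
      (∀ j y, r (x j) * (3/4) ≤ dist y (x j) → φ j y = 0) ∧
      (∀ J y, ∑ j ∈ Finset.range J, φ j y ≤ 1) ∧
      (∀ y ∈ A, ∃ J, ∀ᶠ z in 𝓝 y, (∀ j ≥ J, φ j z = 0) ∧ ∑ j ∈ Finset.range J, φ j z = 1) := by
  obtain ⟨t, hts, htc, hcov⟩ := TopologicalSpace.countable_cover_nhdsWithin (s := A)
    (f := fun x => ball x (r x / 2))
    (fun x hx => mem_nhdsWithin_of_mem_nhds (ball_mem_nhds x (half_pos (hr x hx))))
  have htne : t.Nonempty := by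
    obtain ⟨a, ha⟩ := hA
    obtain ⟨i, hi, -⟩ := mem_iUnion₂.1 (hcov ha)
    exact ⟨i, hi⟩
  obtain ⟨x, hx⟩ := htc.exists_eq_range htne
  have hxA : ∀ j, x j ∈ A := fun j => hts (hx ▸ mem_range_self j)
  set θ : ℕ → X → ℝ := fun j y => max 0 (min 1 (4 / r (x j) * dist y (x j) - 2)) with hθ
  set P : ℕ → X → ℝ := fun j => Nat.rec (fun _ => 1) (fun j p y => min (p y) (θ j y)) j with hP
  have hP0 : ∀ y, P 0 y = 1 := fun y => rfl
  have hPs : ∀ j y, P (j+1) y = min (P j y) (θ j y) := fun j y => rfl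
  have hθ0 : ∀ j y, 0 ≤ θ j y := fun j y => le_max_left _ _
  have hPnn : ∀ j y, 0 ≤ P j y := by
    intro j y
    induction j with
    | zero => rw [hP0]; exact zero_le_one
    | succ j ih => rw [hPs]; exact le_min ih (hθ0 j y)
  have hP1 : ∀ j y, P j y ≤ 1 := by
    intro j y
    induction j with
    | zero => rw [hP0]
    | succ j ih => rw [hPs]; exact (min_le_left _ _).trans ih
  have hθl : ∀ j, ∃ K : ℝ≥0, LipschitzWith K (θ j) := by
    intro j
    have h1 : LipschitzWith (Real.nnabs (4 / r (x j))) (fun y => 4 / r (x j) * dist y (x j) - 2) := by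
      refine LipschitzWith.of_dist_le_mul fun y z => ?_
      rw [Real.dist_eq]
      have : 4 / r (x j) * dist y (x j) - 2 - (4 / r (x j) * dist z (x j) - 2)
        = 4 / r (x j) * (dist y (x j) - dist z (x j)) := by ring
      rw [this, abs_mul, Real.coe_nnabs]
      gcongr
      exact abs_dist_sub_le y z (x j)
    exact ⟨_, (h1.const_min 1).const_max 0⟩
  have hPl : ∀ j, ∃ K : ℝ≥0, LipschitzWith K (P j) := by
    intro j
    induction j with
    | zero => exact ⟨0, LipschitzWith.const _⟩
    | succ j ih =>
      obtain ⟨K, hK⟩ := ih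
      obtain ⟨K', hK'⟩ := hθl j
      exact ⟨_, hK.min hK'⟩
  choose K hK using hPl
  have htel : ∀ J y, ∑ j ∈ Finset.range J, (P j y - P (j+1) y) = 1 - P J y := by
    intro J y
    rw [Finset.sum_range_sub' (fun j => P j y), hP0]
  have hanti : ∀ j k y, j ≤ k → P k y ≤ P j y := by
    intro j k y hjk
    induction k, hjk using Nat.le_induction with
    | base => exact le_rfl
    | succ k _ ih => exact (hPs k y ▸ min_le_left _ _ : P (k+1) y ≤ P k y).trans ih
  refine ⟨x, fun j y => P j y - P (j+1) y, fun j => K j + K (j+1), hxA, ?_, ?_, ?_, ?_, ?_⟩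
  · intro j y
    have := hanti j (j+1) y (Nat.le_succ j)
    linarith
  · intro j
    exact (hK j).sub (hK (j+1))
  · intro j y hy
    have hrj := hr _ (hxA j)
    have : 1 ≤ 4 / r (x j) * dist y (x j) - 2 := by
      have : 3 ≤ 4 / r (x j) * dist y (x j) := by
        rw [div_mul_eq_mul_div, le_div_iff₀ hrj]; linarith
      linarith
    have : θ j y = 1 := by
      simp only [hθ]; rw [min_eq_left this]; simp
    simp only
    rw [hPs, this, min_eq_left (hP1 j y), sub_self]
  · intro J y
    simp only
    rw [htel]
    linarith [hPnn J y]
  · intro y hy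
    obtain ⟨i, hi, hyi⟩ := mem_iUnion₂.1 (hcov hy)
    rw [hx] at hi
    obtain ⟨j, rfl⟩ := hi
    refine ⟨j + 1, ?_⟩
    filter_upwards [isOpen_ball.mem_nhds hyi] with z hz
    have hrj := hr _ (hxA j)
    have : 4 / r (x j) * dist z (x j) - 2 ≤ 0 := by
      rw [mem_ball] at hz
      have : 4 / r (x j) * dist z (x j) ≤ 2 := by
        rw [div_mul_eq_mul_div, div_le_iff₀ hrj]; linarith
      linarith
    have hθz : θ j z = 0 := by
      simp only [hθ]
      exact max_eq_left ((min_le_right _ _).trans this)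
    have hPz : ∀ k ≥ j + 1, P k z = 0 := by
      intro k hk
      have h1 := hanti _ _ z hk
      rw [hPs, hθz] at h1
      exact le_antisymm (h1.trans (min_le_right _ _)) (hPnn k z)
    refine ⟨fun k hk => ?_, ?_⟩
    · rw [hPz k hk, hPz (k+1) (by omega), sub_self]
    · rw [htel, hPz _ le_rfl, sub_zero]

lemma LocLipOn.congr {v w : X → ℝ} {O : Set X} (h : LocLipOn v O) (he : EqOn v w O) :
    LocLipOn w O := by
  intro x hx
  obtain ⟨r, hr, K, hK⟩ := h x hx
  refine ⟨r, hr, K, fun y hy z hz => ?_⟩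
  rw [← he hy.1, ← he hz.1]
  exact hK hy hz

lemma DG.congr {μ : Measure X} {v w : X → ℝ} {O : Set X} {g : X → ℝ≥0∞} (h : DG μ O v g)
    (hO : IsOpen O) (he : EqOn v w O) : DG μ O w g := by
  refine zeroMod_mono h fun γ hγ h' => hγ ?_
  filter_upwards [h'] with t ht h1 h2
  have : (fun s => w (γ.ext s)) =ᶠ[𝓝 t] fun s => v (γ.ext s) := by
    filter_upwards [γ.ext_cont.continuousAt.preimage_mem_nhds (hO.mem_nhds h2)] with s hs
    exact (he hs).symm
  rw [this.deriv_eq]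
  exact ht h1 h2

lemma Adm.congr {μ : Measure X} {v w : X → ℝ} {O : Set X} {g : X → ℝ≥0∞} (h : Adm μ O v g)
    (hO : IsOpen O) (he : EqOn v w O) : Adm μ O w g :=
  ⟨h.1.congr he, h.2.1, h.2.2.congr hO he⟩

/-- approximation formulation of total variation at most `c` -/
def TV (μ : Measure X) (A : Set X) (u : X → ℝ) (c : ℝ≥0∞) : Prop :=
  ∀ ε : ℝ≥0∞, ε ≠ 0 → ∃ (v : X → ℝ) (g : X → ℝ≥0∞), Adm μ A v g ∧
    ∫⁻ x in A, ENNReal.ofReal |v x - u x| ∂μ ≤ ε ∧ ∫⁻ x in A, g x ∂μ ≤ c + ε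

lemma LocLipOn.measurable_indicator {v : X → ℝ} {O : Set X} (h : LocLipOn v O) (hO : IsOpen O) :
    Measurable (O.indicator v) := by
  classical
  rw [← piecewise_eq_indicator]
  exact h.continuousOn.measurable_piecewise (continuousOn_const) hO.measurableSet

lemma pou_adm {μ : Measure X} {A : Set X} {u : X → ℝ} (hu : Measurable u)
    {x : ℕ → X} {r : ℕ → ℝ} (hr : ∀ j, 0 < r j) {φ : ℕ → X → ℝ} {C : ℕ → ℝ≥0}
    (hφ0 : ∀ j y, 0 ≤ φ j y) (hφl : ∀ j, LipschitzWith (C j) (φ j))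
    (hφs : ∀ j y, r j * (3/4) ≤ dist y (x j) → φ j y = 0)
    (hφf : ∀ y ∈ A, ∃ J, ∀ᶠ z in 𝓝 y, (∀ j ≥ J, φ j z = 0) ∧ ∑ j ∈ Finset.range J, φ j z = 1)
    {V : ℕ → X → ℝ} {G : ℕ → X → ℝ≥0∞} (hV : ∀ j, Adm μ (ball (x j) (r j)) (V j) (G j))
    (hVm : ∀ j, Measurable (V j)) :
    Adm μ A (fun y => ∑' j, φ j y * V j y)
      (fun y => ∑' j, (ENNReal.ofReal (φ j y) * G j y +
        C j * (ball (x j) (r j)).indicator (fun y => ENNReal.ofReal |V j y - u y|) y)) := by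
  have hloc : ∀ y ∈ A, ∃ J, ∀ᶠ z in 𝓝 y, (∑' j, φ j z * V j z) = ∑ j ∈ Finset.range J, φ j z * V j z ∧
      ∑ j ∈ Finset.range J, φ j z = 1 := by
    intro y hy
    obtain ⟨J, hJ⟩ := hφf y hy
    refine ⟨J, hJ.mono fun z hz => ⟨tsum_eq_sum fun j hj => ?_, hz.2⟩⟩
    rw [hz.1 j (by simpa using hj), zero_mul]
  have hzero : ∀ j y, y ∉ ball (x j) (r j) → ∀ᶠ z in 𝓝 y, φ j z = 0 := by
    intro j y hy
    have : {z | r j * (3/4) < dist z (x j)} ∈ 𝓝 y := by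
      refine (isOpen_lt continuous_const (continuous_id.dist continuous_const)).mem_nhds ?_
      simp only [mem_ball, not_lt] at hy
      show r j * (3/4) < dist y (x j)
      linarith [hr j]
    filter_upwards [this] with z hz
    exact hφs j z (le_of_lt hz)
  refine ⟨?_, ?_, ?_⟩
  · refine locLipOn_of_nhds fun y hy => ?_
    obtain ⟨J, hJ⟩ := hloc y hy
    have h1 : ∀ j, LocLipOn (fun z => φ j z * V j z) univ := by
      intro j
      refine locLipOn_of_nhds fun z _ => ?_
      by_cases hz : z ∈ ball (x j) (r j)
      · exact ((locLipOn_of_lip (hφl j) _).mul (hV j).1).nhds isOpen_ball hz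
      · refine ⟨0, _, hzero j z hz, fun a ha b hb => ?_⟩
        have ha : φ j a = 0 := ha
        have hb : φ j b = 0 := hb
        simp [ha, hb]
    obtain ⟨K, s, hs, hK⟩ := (LocLipOn.sum (Finset.range J) fun j _ => h1 j).nhds isOpen_univ (mem_univ y)
    refine ⟨K, _, inter_mem hs hJ, fun a ha b hb => ?_⟩
    have h2 := ha.2.1
    have h3 := hb.2.1
    simp only [h2, h3]
    exact hK ha.1 hb.1
  · refine Measurable.tsum fun j => Measurable.add ?_ ?_
    · exact ((hφl j).continuous.measurable.ennreal_ofReal).mul (hV j).2.1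
    · refine Measurable.const_mul ?_ _
      exact (((hVm j).sub hu).abs.ennreal_ofReal).indicator measurableSet_ball
  · refine dg_comb (ι := ℕ ⊕ ℕ) (v := Sum.elim φ V) (g := Sum.elim (fun j _ => (C j : ℝ≥0∞)) G)
      (Oi := Sum.elim (fun _ => univ) (fun j => ball (x j) (r j))) ?_ ?_ ?_ ?_
    · rintro (j | j)
      · exact isOpen_univ
      · exact isOpen_ball
    · rintro (j | j)
      · exact locLipOn_of_lip (hφl j) _
      · exact (hV j).1
    · rintro (j | j)
      · exact dg_lip (hφl j) _
      · exact (hV j).2.2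
    intro c hc t ht H
    have Hφ := fun j => H (Sum.inl j) trivial
    have HV := fun j => H (Sum.inr j)
    simp only [Sum.elim_inl, Sum.elim_inr] at Hφ HV
    obtain ⟨J, hJ⟩ := hloc _ ht
    have hct : Tendsto c (𝓝 t) (𝓝 (c t)) := hc.continuous.continuousAt
    set a : ℕ → ℝ := fun j => deriv (fun s => φ j (c s)) t with ha
    have hda : ∀ j, HasDerivAt (fun s => φ j (c s)) (a j) t := fun j => (Hφ j).1.hasDerivAt
    have ha0 : ∀ j, c t ∉ ball (x j) (r j) → a j = 0 := by
      intro j hj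
      have : (fun s => φ j (c s)) =ᶠ[𝓝 t] fun _ => 0 := hct.eventually (hzero j _ hj)
      simp only [ha]
      rw [this.deriv_eq]; simp
    have hp0 : ∀ j, c t ∉ ball (x j) (r j) → φ j (c t) = 0 := fun j hj =>
      (hzero j _ hj).self_of_nhds
    classical
    set b : ℕ → ℝ := fun j => if c t ∈ ball (x j) (r j) then deriv (fun s => V j (c s)) t else 0 with hb
    have hprod : ∀ j, HasDerivAt (fun s => φ j (c s) * V j (c s))
        (a j * V j (c t) + φ j (c t) * b j) t := by
      intro j
      by_cases hj : c t ∈ ball (x j) (r j)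
      · have := (hda j).mul (HV j hj).1.hasDerivAt
        simp only [hb, if_pos hj]
        exact this
      · have : (fun s => φ j (c s) * V j (c s)) =ᶠ[𝓝 t] fun _ => 0 := by
          filter_upwards [hct.eventually (hzero j _ hj)] with s hs
          simp [hs]
        rw [ha0 j hj, hp0 j hj]
        simpa using (hasDerivAt_const t (0:ℝ)).congr_of_eventuallyEq this
    have hsum0 : ∑ j ∈ Finset.range J, a j = 0 := by
      have h1 : HasDerivAt (fun s => ∑ j ∈ Finset.range J, φ j (c s)) (∑ j ∈ Finset.range J, a j) t :=
        HasDerivAt.fun_sum fun j _ => hda j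
      have h2 : (fun s => ∑ j ∈ Finset.range J, φ j (c s)) =ᶠ[𝓝 t] fun _ => 1 :=
        (hct.eventually hJ).mono fun s hs => hs.2
      exact h1.unique ((hasDerivAt_const t (1:ℝ)).congr_of_eventuallyEq h2)
    have hw : HasDerivAt (fun s => ∑' j, φ j (c s) * V j (c s))
        (∑ j ∈ Finset.range J, (a j * V j (c t) + φ j (c t) * b j)) t := by
      refine (HasDerivAt.fun_sum fun j _ => hprod j).congr_of_eventuallyEq ?_
      exact (hct.eventually hJ).mono fun s hs => hs.1
    rw [hw.deriv]
    have heq : ∑ j ∈ Finset.range J, (a j * V j (c t) + φ j (c t) * b j)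
        = ∑ j ∈ Finset.range J, (a j * (V j (c t) - u (c t)) + φ j (c t) * b j) := by
      have : ∑ j ∈ Finset.range J, (a j * (V j (c t) - u (c t)) + φ j (c t) * b j)
        = ∑ j ∈ Finset.range J, (a j * V j (c t) + φ j (c t) * b j) - (∑ j ∈ Finset.range J, a j) * u (c t) := by
        rw [Finset.sum_mul, ← Finset.sum_sub_distrib]
        refine Finset.sum_congr rfl fun j _ => by ring
      rw [this, hsum0]; ring
    rw [heq]
    refine (enorm_sum_le _ _).trans (le_trans (Finset.sum_le_sum fun j _ => ?_) (ENNReal.sum_le_tsum (Finset.range J)))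
    refine (enorm_add_le _ _).trans ?_
    rw [add_comm, enorm_mul, enorm_mul]
    by_cases hj : c t ∈ ball (x j) (r j)
    · refine add_le_add ?_ ?_
      · rw [Real.enorm_of_nonneg (hφ0 j _)]
        gcongr
        simp only [hb, if_pos hj]
        exact (HV j hj).2
      · rw [indicator_of_mem hj, Real.enorm_eq_ofReal_abs (V j (c t) - u (c t))]
        gcongr
        exact (Hφ j).2
    · rw [ha0 j hj, hp0 j hj]; simp

lemma glue [SecondCountableTopology X] {ι : Type*} [Fintype ι] {μ : Measure X} {A : Set X}
    {u : X → ℝ} (hA : IsOpen A) (hu : Measurable u)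
    (c : ι → ℝ≥0∞) (O : ι → ℕ → Set X) (v : ι → ℕ → X → ℝ) (g : ι → ℕ → X → ℝ≥0∞)
    (hadm : ∀ n k, Adm μ (O n k) (v n k) (g n k))
    (hc : ∀ n k, ∫⁻ x in O n k, g n k x ∂μ ≤ c n)
    (hloc : ∀ x ∈ A, ∃ n, ∃ r > (0:ℝ), (∀ᶠ k in atTop, ball x r ⊆ O n k) ∧
      Tendsto (fun k => ∫⁻ y in ball x r, ENNReal.ofReal |v n k y - u y| ∂μ) atTop (𝓝 0)) :
    TV μ A u (∑ n, c n) := by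
  intro ε hε
  classical
  rcases A.eq_empty_or_nonempty with rfl | hne
  · exact ⟨fun _ => 0, fun _ => 0, ⟨locLipOn_of_lip (LipschitzWith.const (0:ℝ)) _, measurable_const,
      dg_lip (LipschitzWith.const (0:ℝ)) _⟩, by simp, by simp⟩
  obtain ⟨x₀, hx₀⟩ := hne
  have : Nonempty ι := ⟨(hloc x₀ hx₀).choose⟩
  choose! n r hr hsub hten using hloc
  obtain ⟨x, φ, C, hxA, hφ0, hφl, hφs, hφ1, hφf⟩ := exists_pou ⟨x₀, hx₀⟩ r hr
  have hφle : ∀ j y, φ j y ≤ 1 := fun j y =>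
    (Finset.single_le_sum (fun i _ => hφ0 i y) (Finset.self_mem_range_succ j)).trans (hφ1 (j+1) y)
  set B : ℕ → Set X := fun j => ball (x j) (r (x j)) with hB
  set f : ℕ → ℕ → ℝ≥0∞ := fun j k => ∫⁻ y in B j, ENNReal.ofReal (φ j y) * g (n (x j)) k y ∂μ with hf
  have hlim : ∀ j, ∃ ν, Tendsto (f j) (hyperfilter ℕ) (𝓝 ν) := fun j =>
    ⟨_, Ultrafilter.le_nhds_lim ((hyperfilter ℕ).map (f j))⟩
  choose ν hν using hlim
  have hφm : ∀ j, Measurable (φ j) := fun j => (hφl j).continuous.measurable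
  have hνsum : ∑' j, ν j ≤ ∑ n, c n := by
    refine ENNReal.tsum_le_of_sum_range_le fun J => ?_
    refine le_of_tendsto (tendsto_finsetSum (Finset.range J) fun j _ => hν j) ?_
    have hev : ∀ᶠ k in atTop, ∀ j ∈ Finset.range J, B j ⊆ O (n (x j)) k :=
      (Finset.eventually_all _).2 fun j _ => hsub _ (hxA j)
    refine (show ∀ᶠ k in (hyperfilter ℕ : Filter ℕ), _ from Nat.hyperfilter_le_atTop hev).mono fun k hk => ?_
    calc ∑ j ∈ Finset.range J, f j k
        ≤ ∑ j ∈ Finset.range J, ∫⁻ y in O (n (x j)) k, ENNReal.ofReal (φ j y) * g (n (x j)) k y ∂μ :=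
          Finset.sum_le_sum fun j hj => lintegral_mono_set (hk j hj)
      _ = ∑ m, ∑ j ∈ Finset.range J with n (x j) = m,
            ∫⁻ y in O (n (x j)) k, ENNReal.ofReal (φ j y) * g (n (x j)) k y ∂μ :=
          (Finset.sum_fiberwise _ _ _).symm
      _ = ∑ m, ∑ j ∈ Finset.range J with n (x j) = m,
            ∫⁻ y in O m k, ENNReal.ofReal (φ j y) * g m k y ∂μ := by
          refine Finset.sum_congr rfl fun m _ => Finset.sum_congr rfl fun j hj => ?_
          rw [(Finset.mem_filter.1 hj).2]
      _ = ∑ m, ∫⁻ y in O m k, ∑ j ∈ Finset.range J with n (x j) = m,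
            ENNReal.ofReal (φ j y) * g m k y ∂μ := by
          refine Finset.sum_congr rfl fun m _ => ?_
          rw [lintegral_finsetSum]
          exact fun j _ => ((hφm j).ennreal_ofReal).mul (hadm m k).2.1
      _ ≤ ∑ m, c m := by
          refine Finset.sum_le_sum fun m _ => le_trans (lintegral_mono fun y => ?_) (hc m k)
          simp only
          rw [← Finset.sum_mul, ← ENNReal.ofReal_sum_of_nonneg fun j _ => hφ0 j y]
          refine mul_le_of_le_one_left zero_le ?_
          rw [ENNReal.ofReal_le_one]
          exact (Finset.sum_le_sum_of_subset_of_nonneg (Finset.filter_subset _ _)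
            fun j _ _ => hφ0 j y).trans (hφ1 J y)
  obtain ⟨δ, hδ, hδs⟩ := ENNReal.exists_pos_sum_of_countable (ε := ε / 2)
    (by simpa using hε) ℕ
  have hchoose : ∀ j, ∃ k, B j ⊆ O (n (x j)) k ∧ f j k ≤ ν j + δ j ∧
      (1 + C j) * ∫⁻ y in B j, ENNReal.ofReal |v (n (x j)) k y - u y| ∂μ ≤ δ j := by
    intro j
    have hδ' : (0:ℝ≥0∞) < δ j := by exact_mod_cast hδ j
    have e1 : ∀ᶠ k in (hyperfilter ℕ : Filter ℕ), B j ⊆ O (n (x j)) k :=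
      Nat.hyperfilter_le_atTop (hsub _ (hxA j))
    have e2 : ∀ᶠ k in (hyperfilter ℕ : Filter ℕ), f j k ≤ ν j + δ j := by
      by_cases ht : ν j = ∞
      · exact Eventually.of_forall fun k => by simp [ht]
      · exact ((hν j).eventually_lt_const (ENNReal.lt_add_right ht hδ'.ne')).mono fun k hk => hk.le
    have e3 : ∀ᶠ k in (hyperfilter ℕ : Filter ℕ),
        (1 + C j) * ∫⁻ y in B j, ENNReal.ofReal |v (n (x j)) k y - u y| ∂μ ≤ δ j := by
      refine Nat.hyperfilter_le_atTop ?_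
      have := ENNReal.Tendsto.const_mul (a := (1 + C j : ℝ≥0∞)) (hten _ (hxA j))
        (Or.inr (by simp))
      rw [mul_zero] at this
      exact (this.eventually_lt_const hδ').mono fun k hk => hk.le
    exact (e1.and (e2.and e3)).exists
  choose k hk1 hk2 hk3 using hchoose
  set V : ℕ → X → ℝ := fun j => (B j).indicator (v (n (x j)) (k j)) with hVd
  set G : ℕ → X → ℝ≥0∞ := fun j => g (n (x j)) (k j) with hG
  have hadm' : ∀ j, Adm μ (B j) (v (n (x j)) (k j)) (G j) := fun j => (hadm _ _).mono_set (hk1 j)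
  have hV : ∀ j, Adm μ (B j) (V j) (G j) := fun j =>
    (hadm' j).congr isOpen_ball fun y hy => (indicator_of_mem hy _).symm
  have hVm : ∀ j, Measurable (V j) := fun j => (hadm' j).1.measurable_indicator isOpen_ball
  have hVu : ∀ j, ∫⁻ y in B j, ENNReal.ofReal |V j y - u y| ∂μ
      = ∫⁻ y in B j, ENNReal.ofReal |v (n (x j)) (k j) y - u y| ∂μ := by
    intro j
    refine setLIntegral_congr_fun measurableSet_ball fun y hy => ?_
    simp only [hVd]
    rw [indicator_of_mem hy]
  have hφB : ∀ j y, y ∉ B j → φ j y = 0 := by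
    intro j y hy
    refine hφs j y ?_
    simp only [hB, mem_ball, not_lt] at hy
    linarith [hr _ (hxA j)]
  have hδ2 : ∑' j, (δ j : ℝ≥0∞) ≤ ε / 2 := hδs.le
  have hset : ∀ j (h : X → ℝ≥0∞), (∀ y ∉ B j, h y = 0) → ∫⁻ y in A, h y ∂μ ≤ ∫⁻ y in B j, h y ∂μ := by
    intro j h hh
    refine (setLIntegral_le_lintegral _ _).trans ?_
    rw [← lintegral_indicator measurableSet_ball]
    refine lintegral_mono fun y => ?_
    by_cases hy : y ∈ B j
    · rw [indicator_of_mem hy]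
    · rw [hh y hy]; exact zero_le
  refine ⟨_, _, pou_adm (A := A) (r := fun j => r (x j)) hu (fun j => hr _ (hxA j)) hφ0 hφl hφs hφf hV hVm, ?_, ?_⟩
  · calc ∫⁻ y in A, ENNReal.ofReal |∑' j, φ j y * V j y - u y| ∂μ
        ≤ ∫⁻ y in A, ∑' j, ENNReal.ofReal (φ j y) * ENNReal.ofReal |V j y - u y| ∂μ := by
          refine setLIntegral_mono' hA.measurableSet fun y hy => ?_
          obtain ⟨J, hJ⟩ := hφf y hy
          have hJ := hJ.self_of_nhds
          have h1 : (∑' j, φ j y * V j y) - u y = ∑ j ∈ Finset.range J, φ j y * (V j y - u y) := by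
            rw [tsum_eq_sum (s := Finset.range J) fun j hj => by
              rw [hJ.1 j (by simpa using hj), zero_mul]]
            simp_rw [mul_sub]
            rw [Finset.sum_sub_distrib, ← Finset.sum_mul, hJ.2, one_mul]
          rw [h1]
          refine le_trans ?_ (ENNReal.sum_le_tsum (Finset.range J))
          rw [← Real.enorm_eq_ofReal_abs]
          refine (enorm_sum_le _ _).trans (Finset.sum_le_sum fun j _ => ?_)
          rw [enorm_mul, Real.enorm_of_nonneg (hφ0 j y), Real.enorm_eq_ofReal_abs]
      _ = ∑' j, ∫⁻ y in A, ENNReal.ofReal (φ j y) * ENNReal.ofReal |V j y - u y| ∂μ :=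
          lintegral_tsum fun j => (((hφm j).ennreal_ofReal).mul
            ((hVm j).sub hu).abs.ennreal_ofReal).aemeasurable
      _ ≤ ∑' j, (δ j : ℝ≥0∞) := by
          refine ENNReal.tsum_le_tsum fun j => ?_
          refine (hset j _ fun y hy => by simp [hφB j y hy]).trans ?_
          refine le_trans (lintegral_mono fun y => mul_le_of_le_one_left zero_le
            (ENNReal.ofReal_le_one.2 (hφle j y))) ?_
          rw [hVu]
          refine le_trans ?_ (hk3 j)
          exact le_mul_of_one_le_left zero_le (by simp)
      _ ≤ ε := hδ2.trans ENNReal.half_le_self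
  · calc ∫⁻ y in A, ∑' j, (ENNReal.ofReal (φ j y) * G j y +
          C j * (B j).indicator (fun y => ENNReal.ofReal |V j y - u y|) y) ∂μ
        = ∑' j, ∫⁻ y in A, (ENNReal.ofReal (φ j y) * G j y +
          C j * (B j).indicator (fun y => ENNReal.ofReal |V j y - u y|) y) ∂μ := by
          refine lintegral_tsum fun j => Measurable.aemeasurable (Measurable.add ?_ ?_)
          · exact ((hφm j).ennreal_ofReal).mul (hV j).2.1
          · refine Measurable.const_mul ?_ _
            exact (((hVm j).sub hu).abs.ennreal_ofReal).indicator measurableSet_ball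
      _ ≤ ∑' j, (ν j + δ j + δ j) := by
          refine ENNReal.tsum_le_tsum fun j => ?_
          rw [lintegral_add_left (show Measurable fun y => ENNReal.ofReal (φ j y) * G j y from
            ((hφm j).ennreal_ofReal).mul (hV j).2.1)]
          refine add_le_add ((hset j _ fun y hy => by simp [hφB j y hy]).trans (hk2 j)) ?_
          refine (hset j _ fun y hy => by simp [hy]).trans ?_
          rw [lintegral_const_mul _ (show Measurable fun y => (B j).indicator (fun y => ENNReal.ofReal |V j y - u y|) y
            from (((hVm j).sub hu).abs.ennreal_ofReal).indicator measurableSet_ball)]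
          refine le_trans ?_ (hk3 j)
          refine mul_le_mul' (by simp) ?_
          rw [← hVu]
          exact lintegral_mono fun y => indicator_le_self _ _ y
      _ = ∑' j, ν j + ∑' j, (δ j : ℝ≥0∞) + ∑' j, (δ j : ℝ≥0∞) := by
          rw [ENNReal.tsum_add, ENNReal.tsum_add]
      _ ≤ ∑ n, c n + (ε / 2) + (ε / 2) := by gcongr
      _ = ∑ n, c n + ε := by rw [add_assoc, ENNReal.add_halves]

lemma dg_comb2 {μ : Measure X} {O : Set X} (hO : IsOpen O) {v₁ v₂ : X → ℝ} {g₁ g₂ : X → ℝ≥0∞}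
    (h₁ : Adm μ O v₁ g₁) (h₂ : Adm μ O v₂ g₂)
    {w : X → ℝ} {gw : X → ℝ≥0∞}
    (H : ∀ c : ℝ → X, LipschitzWith 1 c → ∀ t, c t ∈ O →
      DifferentiableAt ℝ (fun s => v₁ (c s)) t → ‖deriv (fun s => v₁ (c s)) t‖ₑ ≤ g₁ (c t) →
      DifferentiableAt ℝ (fun s => v₂ (c s)) t → ‖deriv (fun s => v₂ (c s)) t‖ₑ ≤ g₂ (c t) →
      ‖deriv (fun s => w (c s)) t‖ₑ ≤ gw (c t)) : DG μ O w gw := by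
  refine dg_comb (ι := Bool) (v := fun b => if b then v₁ else v₂) (g := fun b => if b then g₁ else g₂)
    (Oi := fun _ => O) (fun _ => hO) ?_ ?_ ?_
  · intro b; cases b
    · simpa using h₂.1
    · simpa using h₁.1
  · intro b; cases b
    · simpa using h₂.2.2
    · simpa using h₁.2.2
  · intro c hc t ht h
    have a1 := h true ht
    have a2 := h false ht
    simp only [if_true, Bool.false_eq_true, if_false] at a1 a2
    exact H c hc t ht a1.1 a1.2 a2.1 a2.2

lemma Adm.add {μ : Measure X} {O : Set X} (hO : IsOpen O) {v₁ v₂ : X → ℝ} {g₁ g₂ : X → ℝ≥0∞}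
    (h₁ : Adm μ O v₁ g₁) (h₂ : Adm μ O v₂ g₂) :
    Adm μ O (fun x => v₁ x + v₂ x) (fun x => g₁ x + g₂ x) := by
  refine ⟨h₁.1.add h₂.1, h₁.2.1.add h₂.2.1, dg_comb2 hO h₁ h₂ ?_⟩
  intro c hc t ht a1 b1 a2 b2
  rw [deriv_fun_add a1 a2]
  exact (enorm_add_le _ _).trans (add_le_add b1 b2)

lemma Adm.smul {μ : Measure X} {O : Set X} (hO : IsOpen O) {v₁ : X → ℝ} {g₁ : X → ℝ≥0∞}
    (h₁ : Adm μ O v₁ g₁) (a b : ℝ) :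
    Adm μ O (fun x => a * v₁ x + b) (fun x => ENNReal.ofReal |a| * g₁ x) := by
  refine ⟨((locLipOn_of_lip (LipschitzWith.const a) _).mul h₁.1).add
    (locLipOn_of_lip (LipschitzWith.const b) _), h₁.2.1.const_mul _, dg_comb2 hO h₁ h₁ ?_⟩
  intro c hc t ht a1 b1 a2 b2
  have := (a1.hasDerivAt.const_mul a).add_const b
  rw [this.deriv, enorm_mul, Real.enorm_eq_ofReal_abs a]
  gcongr

lemma l1LocConv_congr {μ : Measure X} {A : Set X} {v : ℕ → X → ℝ} {u u' : X → ℝ}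
    (h : u =ᵐ[μ.restrict A] u') (hc : L1LocConv μ A v u) : L1LocConv μ A v u' := by
  intro x hx
  obtain ⟨r, hr, h1⟩ := hc x hx
  refine ⟨r, hr, ?_⟩
  convert h1 using 2 with i
  refine lintegral_congr_ae ?_
  filter_upwards [ae_restrict_of_ae_restrict_of_subset (inter_subset_left (t := ball x r)) h] with y hy
  rw [hy]

lemma tvOpen_congr {μ : Measure X} {A : Set X} {u u' : X → ℝ}
    (h : u =ᵐ[μ.restrict A] u') : tvOpen μ A u = tvOpen μ A u' := by
  unfold tvOpen
  have : ∀ v, L1LocConv μ A v u ↔ L1LocConv μ A v u' := fun v =>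
    ⟨l1LocConv_congr h, l1LocConv_congr h.symm⟩
  simp only [this]

section BV

variable [ProperSpace X] {μ : Measure X} [IsLocallyFiniteMeasure μ]

lemma tvOpen_le_liminf {A : Set X} (hA : IsOpen A) {u : X → ℝ} {v : ℕ → X → ℝ} {g : ℕ → X → ℝ≥0∞}
    (h : ∀ i, Adm μ A (v i) (g i)) (hc : L1LocConv μ A v u) :
    tvOpen μ A u ≤ liminf (fun i => ∫⁻ x in A, g i x ∂μ) atTop := by
  have := fun i => exists_minimal hA (h i).1 (h i).2.1 (h i).2.2
  choose gm h1 h2 using this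
  refine le_trans (iInf_le_of_le v (iInf_le_of_le gm (iInf_le_of_le (fun i => (h i).1)
    (iInf_le_of_le h1 (iInf_le_of_le hc le_rfl))))) ?_
  exact liminf_le_liminf (Eventually.of_forall fun i => lintegral_mono_ae (h2 i))

/-- small errors -/
def ee (i : ℕ) : ℝ≥0∞ := (2⁻¹ : ℝ≥0∞) ^ i

lemma ee_ne (i : ℕ) : ee i ≠ 0 := pow_ne_zero _ (by simp)

lemma ee_tendsto : Tendsto ee atTop (𝓝 0) :=
  ENNReal.tendsto_pow_atTop_nhds_zero_of_lt_one (by simp)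

lemma ee_tsum : ∑' i, ee i = 2 := by
  unfold ee
  rw [ENNReal.tsum_geometric]
  simp

lemma l1LocConv_of_le {A : Set X} {u : X → ℝ} {v : ℕ → X → ℝ} {e : ℕ → ℝ≥0∞}
    (he : Tendsto e atTop (𝓝 0))
    (h : ∀ i, ∫⁻ x in A, ENNReal.ofReal |v i x - u x| ∂μ ≤ e i) : L1LocConv μ A v u := by
  intro x _
  refine ⟨1, one_pos, tendsto_of_tendsto_of_tendsto_of_le_of_le tendsto_const_nhds he
    (fun _ => zero_le) fun i => (lintegral_mono_set inter_subset_left).trans (h i)⟩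

lemma add_ee_tendsto (c : ℝ≥0∞) : Tendsto (fun i => c + ee i) atTop (𝓝 c) := by
  simpa using (tendsto_const_nhds (x := c)).add ee_tendsto

lemma TV.tvOpen_le {A : Set X} (hA : IsOpen A) {u : X → ℝ} {c : ℝ≥0∞} (h : TV μ A u c) :
    tvOpen μ A u ≤ c := by
  have := fun i => h (ee i) (ee_ne i)
  choose v g h1 h2 h3 using this
  refine (tvOpen_le_liminf hA h1 (l1LocConv_of_le ee_tendsto h2)).trans ?_
  refine (liminf_le_liminf (Eventually.of_forall h3)).trans ?_
  rw [(add_ee_tendsto c).liminf_eq]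

lemma TV.of_add {A : Set X} {u : X → ℝ} {c : ℝ≥0∞} (h : ∀ δ, δ ≠ 0 → TV μ A u (c + δ)) :
    TV μ A u c := by
  intro ε hε
  have hε2 : ε / 2 ≠ 0 := by simpa using hε
  obtain ⟨v, g, h1, h2, h3⟩ := h (ε / 2) hε2 (ε / 2) hε2
  refine ⟨v, g, h1, h2.trans ENNReal.half_le_self, ?_⟩
  rwa [add_assoc, ENNReal.add_halves] at h3

lemma tv_of_lt {A O : Set X} (hA : IsOpen A) (hO : IsOpen O) (hAO : A ⊆ O) {u u' : X → ℝ}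
    (hu : Measurable u') (he : u =ᵐ[μ.restrict A] u') {c : ℝ≥0∞} (h : tvOpen μ O u < c) :
    TV μ A u' c := by
  unfold tvOpen at h
  simp only [iInf_lt_iff] at h
  obtain ⟨v, g, hv, hg, hc, hlt⟩ := h
  have hf := frequently_lt_of_liminf_lt (by isBoundedDefault) hlt
  obtain ⟨φ, hφ, hφ2⟩ := extraction_of_frequently_atTop hf
  have := fun i => dg_of_wug hO (hg (φ i)).1 ((hφ2 i).trans_le le_top)
  choose g' h1 h2 h3 h4 using this
  have := glue (ι := Unit) (μ := μ) hA hu (fun _ => c) (fun _ _ => O) (fun _ k => v (φ k)) (fun _ k => g' k)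
    (fun _ k => ⟨hv _, h1 k, h4 k⟩) (fun _ k => by
      rw [lintegral_congr_ae (ae_restrict_of_ae (h3 k))]; exact (hφ2 k).le) (by
      intro x hx
      obtain ⟨r, hr, hr2⟩ := hc x (hAO hx)
      obtain ⟨s, hs, hs2⟩ := Metric.isOpen_iff.1 hA x hx
      refine ⟨(), min r s, lt_min hr hs, Eventually.of_forall fun k =>
        ((ball_subset_ball (min_le_right _ _)).trans hs2).trans hAO, ?_⟩
      have hsub : ball x (min r s) ⊆ O ∩ ball x r := subset_inter
        (((ball_subset_ball (min_le_right _ _)).trans hs2).trans hAO) (ball_subset_ball (min_le_left _ _))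
      refine tendsto_of_tendsto_of_tendsto_of_le_of_le tendsto_const_nhds
        (hr2.comp hφ.tendsto_atTop) (fun _ => zero_le) fun k => ?_
      refine le_trans (le_of_eq ?_) (lintegral_mono_set hsub)
      refine lintegral_congr_ae ?_
      filter_upwards [ae_restrict_of_ae_restrict_of_subset
        ((ball_subset_ball (min_le_right r s)).trans hs2) he] with y hy
      rw [hy])
  simpa using this

lemma tv_of_le {A : Set X} (hA : IsOpen A) {u : X → ℝ}
    (hu : Measurable u) {c : ℝ≥0∞} (hc : c ≠ ∞) (h : tvOpen μ A u ≤ c) : TV μ A u c :=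
  TV.of_add fun δ hδ => tv_of_lt hA hA le_rfl hu (ae_eq_refl _)
    (h.trans_lt (ENNReal.lt_add_right hc hδ))

lemma tvOpen_mono' {A O : Set X} (hA : IsOpen A) (hO : IsOpen O) (hAO : A ⊆ O) {u u' : X → ℝ}
    (hu : Measurable u') (he : u =ᵐ[μ.restrict A] u') : tvOpen μ A u' ≤ tvOpen μ O u :=
  le_of_forall_gt_imp_ge_of_dense fun _ hc => (tv_of_lt hA hO hAO hu he hc).tvOpen_le hA

lemma tvOpen_mono {A O : Set X} (hA : IsOpen A) (hO : IsOpen O) (hAO : A ⊆ O) {u : X → ℝ}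
    (hu : Measurable u) : tvOpen μ A u ≤ tvOpen μ O u :=
  tvOpen_mono' hA hO hAO hu (ae_eq_refl _)

lemma exists_seq {A : Set X} (hA : IsOpen A) {u : X → ℝ} (hu : Measurable u) {c : ℝ≥0∞}
    (hc : c ≠ ∞) (h : tvOpen μ A u ≤ c) :
    ∃ (v : ℕ → X → ℝ) (g : ℕ → X → ℝ≥0∞), (∀ i, Adm μ A (v i) (g i)) ∧
      (∀ i, ∫⁻ x in A, ENNReal.ofReal |v i x - u x| ∂μ ≤ ee i) ∧
      (∀ i, ∫⁻ x in A, g i x ∂μ ≤ c + ee i) := by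
  have := fun i => tv_of_le hA hu hc h (ee i) (ee_ne i)
  choose v g h1 h2 h3 using this
  exact ⟨v, g, h1, h2, h3⟩

lemma ee_le_one (i : ℕ) : ee i ≤ 1 := by
  unfold ee
  exact pow_le_one' (by simp) i

lemma ee_anti : Antitone ee := fun i j h => pow_le_pow_right_of_le_one' (by simp) h

lemma tvOpen_union {A B : Set X} (hA : IsOpen A) (hB : IsOpen B) {u : X → ℝ} (hu : Measurable u) :
    tvOpen μ (A ∪ B) u ≤ tvOpen μ A u + tvOpen μ B u := by
  by_cases hfin : tvOpen μ A u + tvOpen μ B u = ∞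
  · rw [hfin]; exact le_top
  rw [ENNReal.add_eq_top, not_or] at hfin
  obtain ⟨v, g, h1, h2, h3⟩ := exists_seq hA hu hfin.1 le_rfl
  obtain ⟨v', g', h1', h2', h3'⟩ := exists_seq hB hu hfin.2 le_rfl
  refine ENNReal.le_of_forall_pos_le_add fun δ hδ _ => ?_
  have hδ2 : (0:ℝ≥0∞) < δ / 2 := by
    exact ENNReal.half_pos (by exact_mod_cast hδ.ne')
  obtain ⟨N, hN⟩ := (ee_tendsto.eventually_lt_const hδ2).exists
  have hN' : ∀ k, ee (N + k) ≤ δ / 2 := fun k => (ee_anti (Nat.le_add_right N k)).trans hN.le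
  have hten : ∀ {O : Set X} (w : ℕ → X → ℝ),
      (∀ i, ∫⁻ x in O, ENNReal.ofReal |w i x - u x| ∂μ ≤ ee i) → ∀ x r, ball x r ⊆ O →
      Tendsto (fun k => ∫⁻ y in ball x r, ENNReal.ofReal |w (N + k) y - u y| ∂μ) atTop (𝓝 0) := by
    intro O w hw x r hs
    refine tendsto_of_tendsto_of_tendsto_of_le_of_le tendsto_const_nhds
      (ee_tendsto.comp (tendsto_add_atTop_nat N)) (fun _ => zero_le) fun k => ?_
    simp only [Function.comp, add_comm k N]
    exact (lintegral_mono_set hs).trans (hw _)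
  have := glue (ι := Bool) (μ := μ) (hA.union hB) hu
    (fun b => (if b then tvOpen μ A u else tvOpen μ B u) + δ / 2) (fun b _ => if b then A else B)
    (fun b k => if b then v (N + k) else v' (N + k)) (fun b k => if b then g (N + k) else g' (N + k))
    (by
      intro b k
      cases b
      · simpa using h1' _
      · simpa using h1 _)
    (by
      intro b k
      cases b
      · simpa using (h3' (N + k)).trans (by gcongr; exact hN' k)
      · simpa using (h3 (N + k)).trans (by gcongr; exact hN' k))
    (by
      rintro x (hx | hx)
      · obtain ⟨r, hr, hs⟩ := Metric.isOpen_iff.1 hA x hx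
        exact ⟨true, r, hr, Eventually.of_forall fun _ => by simpa using hs, by simpa using hten v h2 x r hs⟩
      · obtain ⟨r, hr, hs⟩ := Metric.isOpen_iff.1 hB x hx
        exact ⟨false, r, hr, Eventually.of_forall fun _ => by simpa using hs, by simpa using hten v' h2' x r hs⟩)
  refine (this.tvOpen_le (hA.union hB)).trans (le_of_eq ?_)
  rw [Fintype.sum_bool]
  simp only [if_true, Bool.false_eq_true, if_false]
  rw [add_add_add_comm, ENNReal.add_halves]

lemma tvOpen_iUnion {A : ℕ → Set X} (hA : ∀ k, IsOpen (A k)) (hmono : Monotone A) {u : X → ℝ}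
    (hu : Measurable u) {c : ℝ≥0∞} (h : ∀ k, tvOpen μ (A k) u ≤ c) : tvOpen μ (⋃ k, A k) u ≤ c := by
  by_cases hc : c = ∞
  · rw [hc]; exact le_top
  have hO : IsOpen (⋃ k, A k) := isOpen_iUnion hA
  refine ENNReal.le_of_forall_pos_le_add fun δ hδ _ => ?_
  have hδ2 : (0:ℝ≥0∞) < δ := by exact_mod_cast hδ
  obtain ⟨N, hN⟩ := (ee_tendsto.eventually_lt_const hδ2).exists
  have := fun k => tv_of_le (hA k) hu hc (h k) (ee (N + k)) (ee_ne _)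
  choose v g h1 h2 h3 using this
  have := glue (ι := Unit) (μ := μ) hO hu (fun _ => c + δ) (fun _ k => A k) (fun _ k => v k) (fun _ k => g k)
    (fun _ k => h1 k) (fun _ k => (h3 k).trans (by
      gcongr; exact (ee_anti (Nat.le_add_right N k)).trans hN.le)) (by
      intro x hx
      obtain ⟨m, hm⟩ := mem_iUnion.1 hx
      obtain ⟨r, hr, hs⟩ := Metric.isOpen_iff.1 (hA m) x hm
      refine ⟨(), r, hr, (eventually_ge_atTop m).mono fun k hk => hs.trans (hmono hk), ?_⟩
      refine tendsto_of_tendsto_of_tendsto_of_le_of_le' tendsto_const_nhds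
        (ee_tendsto.comp (tendsto_add_atTop_nat N)) (Eventually.of_forall fun _ => zero_le)
        ((eventually_ge_atTop m).mono fun k hk => ?_)
      simp only [Function.comp, add_comm k N]
      exact (lintegral_mono_set (hs.trans (hmono hk))).trans (h2 k))
  simpa using this.tvOpen_le hO

lemma lintegral_tri {A : Set X} {u v w : X → ℝ} (h : AEMeasurable u (μ.restrict A))
    (h' : AEMeasurable v (μ.restrict A)) :
    ∫⁻ x in A, ENNReal.ofReal |u x - w x| ∂μ ≤
      ∫⁻ x in A, ENNReal.ofReal |u x - v x| ∂μ + ∫⁻ x in A, ENNReal.ofReal |v x - w x| ∂μ := by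
  rw [← lintegral_add_left' (show AEMeasurable (fun x => ENNReal.ofReal |u x - v x|) (μ.restrict A) from
    (h.sub h').abs.ennreal_ofReal)]
  refine lintegral_mono fun x => ?_
  simp only
  rw [← ENNReal.ofReal_add (abs_nonneg _) (abs_nonneg _)]
  exact ENNReal.ofReal_le_ofReal (abs_sub_le _ _ _)

lemma tvOpen_lsc {A : Set X} (hA : IsOpen A) {u : X → ℝ} {v : ℕ → X → ℝ}
    (hv : ∀ i, Measurable (v i)) (hc : L1LocConv μ A v u) :
    tvOpen μ A u ≤ liminf (fun i => tvOpen μ A (v i)) atTop := by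
  refine le_of_forall_gt_imp_ge_of_dense fun c hlt => ?_
  have hf := frequently_lt_of_liminf_lt (by isBoundedDefault) hlt
  obtain ⟨φ, hφ, hφ2⟩ := extraction_of_frequently_atTop hf
  have := fun i => tv_of_lt hA hA le_rfl (hv (φ i)) (ae_eq_refl _) (hφ2 i) (ee i) (ee_ne i)
  choose w g h1 h2 h3 using this
  have hconv : L1LocConv μ A w u := by
    intro x hx
    obtain ⟨r, hr, hr2⟩ := hc x hx
    refine ⟨r, hr, ?_⟩
    have h5 := ee_tendsto.add (hr2.comp hφ.tendsto_atTop)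
    rw [add_zero] at h5
    refine tendsto_of_tendsto_of_tendsto_of_le_of_le tendsto_const_nhds h5 (fun _ => zero_le) fun i => ?_
    refine (lintegral_tri (v := v (φ i)) (((h1 i).1.mono inter_subset_left).aemeasurable
      (hA.inter isOpen_ball)) (hv _).aemeasurable).trans ?_
    exact add_le_add ((lintegral_mono_set inter_subset_left).trans (h2 i)) le_rfl
  refine (tvOpen_le_liminf hA h1 hconv).trans ?_
  refine (liminf_le_liminf (Eventually.of_forall h3)).trans ?_
  rw [(add_ee_tendsto c).liminf_eq]

lemma l1LocConv_mono {A B : Set X} (hB : IsOpen B) (hs : B ⊆ A) {v : ℕ → X → ℝ} {u : X → ℝ}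
    (h : L1LocConv μ A v u) : L1LocConv μ B v u := by
  intro x hx
  obtain ⟨r, hr, hr2⟩ := h x (hs hx)
  exact ⟨r, hr, tendsto_of_tendsto_of_tendsto_of_le_of_le tendsto_const_nhds hr2 (fun _ => zero_le)
    fun i => lintegral_mono_set (inter_subset_inter_left _ hs)⟩

lemma ennreal_le_liminf_add (f g : ℕ → ℝ≥0∞) :
    liminf f atTop + liminf g atTop ≤ liminf (fun i => f i + g i) atTop := by
  simp only [liminf_eq_iSup_iInf_of_nat]
  rw [ENNReal.iSup_add_iSup_of_monotone]
  · exact iSup_mono fun n => le_iInf₂ fun i hi => add_le_add (iInf₂_le i hi) (iInf₂_le i hi)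
  · exact fun m n h => le_iInf₂ fun i hi => iInf₂_le i (h.trans hi)
  · exact fun m n h => le_iInf₂ fun i hi => iInf₂_le i (h.trans hi)

lemma tvOpen_super {A B O : Set X} (hA : IsOpen A) (hB : IsOpen B) (hO : IsOpen O) (hAO : A ⊆ O)
    (hBO : B ⊆ O) (hd : Disjoint A B) {u : X → ℝ} (hu : Measurable u) :
    tvOpen μ A u + tvOpen μ B u ≤ tvOpen μ O u := by
  by_cases hc : tvOpen μ O u = ∞
  · rw [hc]; exact le_top
  obtain ⟨v, g, h1, h2, h3⟩ := exists_seq hO hu hc le_rfl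
  have hconv : L1LocConv μ O v u := l1LocConv_of_le ee_tendsto h2
  have a1 := tvOpen_le_liminf hA (fun i => (h1 i).mono_set hAO) (l1LocConv_mono hA hAO hconv)
  have a2 := tvOpen_le_liminf hB (fun i => (h1 i).mono_set hBO) (l1LocConv_mono hB hBO hconv)
  refine (add_le_add a1 a2).trans ?_
  refine le_trans ?_ (add_ee_tendsto (tvOpen μ O u)).liminf_eq.le
  refine (ennreal_le_liminf_add _ _).trans (liminf_le_liminf (Eventually.of_forall fun i => ?_))
  refine le_trans ?_ (h3 i)
  rw [← lintegral_union hB.measurableSet hd]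
  exact lintegral_mono_set (union_subset hAO hBO)

lemma tvOpen_add {A : Set X} (hA : IsOpen A) {u w : X → ℝ} (hu : Measurable u) (hw : Measurable w) :
    tvOpen μ A (fun x => u x + w x) ≤ tvOpen μ A u + tvOpen μ A w := by
  by_cases hfin : tvOpen μ A u + tvOpen μ A w = ∞
  · rw [hfin]; exact le_top
  have hfin' := hfin
  rw [ENNReal.add_eq_top, not_or] at hfin'
  obtain ⟨v, g, h1, h2, h3⟩ := exists_seq hA hu hfin'.1 le_rfl
  obtain ⟨v', g', h1', h2', h3'⟩ := exists_seq hA hw hfin'.2 le_rfl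
  have hee : Tendsto (fun i => ee i + ee i) atTop (𝓝 0) := by simpa using ee_tendsto.add ee_tendsto
  refine (tvOpen_le_liminf hA (fun i => (h1 i).add hA (h1' i)) (l1LocConv_of_le hee fun i => ?_)).trans ?_
  · refine le_trans ?_ (add_le_add (h2 i) (h2' i))
    rw [← lintegral_add_left' (show AEMeasurable (fun x => ENNReal.ofReal |v i x - u x|) (μ.restrict A) from
      (((h1 i).1.aemeasurable hA).sub hu.aemeasurable).abs.ennreal_ofReal)]
    refine lintegral_mono fun x => ?_
    simp only
    rw [← ENNReal.ofReal_add (abs_nonneg _) (abs_nonneg _)]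
    refine ENNReal.ofReal_le_ofReal ?_
    rw [add_sub_add_comm]
    exact abs_add_le _ _
  · have := (add_ee_tendsto (tvOpen μ A u)).add (add_ee_tendsto (tvOpen μ A w))
    rw [← this.liminf_eq]
    refine liminf_le_liminf (Eventually.of_forall fun i => ?_)
    rw [lintegral_add_left (h1 i).2.1]
    exact add_le_add (h3 i) (h3' i)

lemma tvOpen_smul {A : Set X} (hA : IsOpen A) {u : X → ℝ} (hu : Measurable u) {a : ℝ} (ha : 0 < a)
    (b : ℝ) : tvOpen μ A (fun x => a * u x + b) ≤ ENNReal.ofReal a * tvOpen μ A u := by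
  have ha' : ENNReal.ofReal a ≠ 0 := by simpa using ha
  by_cases hfin : tvOpen μ A u = ∞
  · rw [hfin, ENNReal.mul_top ha']; exact le_top
  obtain ⟨v, g, h1, h2, h3⟩ := exists_seq hA hu hfin le_rfl
  have hee : Tendsto (fun i => ENNReal.ofReal a * ee i) atTop (𝓝 0) := by
    simpa using ENNReal.Tendsto.const_mul ee_tendsto (Or.inr ENNReal.ofReal_ne_top)
  refine (tvOpen_le_liminf hA (fun i => (h1 i).smul hA a b) (l1LocConv_of_le hee fun i => ?_)).trans ?_
  · refine le_trans (le_of_eq ?_) (mul_le_mul_right (h2 i) _)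
    rw [← lintegral_const_mul' _ _ ENNReal.ofReal_ne_top]
    refine lintegral_congr fun x => ?_
    rw [← ENNReal.ofReal_mul ha.le, add_sub_add_right_eq_sub, ← mul_sub, abs_mul, abs_of_pos ha]
  · have := ENNReal.Tendsto.const_mul (a := ENNReal.ofReal a) (add_ee_tendsto (tvOpen μ A u))
      (Or.inr ENNReal.ofReal_ne_top)
    rw [← this.liminf_eq]
    refine liminf_le_liminf (Eventually.of_forall fun i => ?_)
    rw [lintegral_const_mul _ (h1 i).2.1, abs_of_pos ha]
    gcongr
    exact h3 i

lemma tvOpen_zero {A : Set X} (hA : IsOpen A) (b : ℝ) : tvOpen μ A (fun _ => b) = 0 := by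
  have : TV μ A (fun _ => b) 0 := fun ε _ => ⟨fun _ => b, fun _ => 0,
    ⟨locLipOn_of_lip (LipschitzWith.const b) _, measurable_const, dg_lip (LipschitzWith.const b) _⟩,
    by simp, by simp⟩
  exact le_antisymm (this.tvOpen_le hA) zero_le

lemma tvOpen_sum {A : Set X} (hA : IsOpen A) {h : ℝ} (hh : 0 < h) (u : ℕ → X → ℝ)
    (hu : ∀ j, Measurable (u j)) (n : ℕ) (b : ℝ) :
    tvOpen μ A (fun x => h * ∑ j ∈ Finset.range n, u j x + b) ≤
      ∑ j ∈ Finset.range n, ENNReal.ofReal h * tvOpen μ A (u j) := by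
  induction n with
  | zero => simp [tvOpen_zero hA]
  | succ n ih =>
    rw [Finset.sum_range_succ]
    have h1 : (fun x => h * ∑ j ∈ Finset.range (n+1), u j x + b)
      = fun x => (h * ∑ j ∈ Finset.range n, u j x + b) + (h * u n x + 0) := by
      ext x; rw [Finset.sum_range_succ]; ring
    rw [h1]
    refine (tvOpen_add hA ?_ ?_).trans (add_le_add ih (tvOpen_smul hA (hu n) hh 0))
    · exact ((Finset.measurable_fun_sum _ fun j _ => hu j).const_mul h).add_const b
    · exact ((hu n).const_mul h).add_const 0

lemma adm_clamp {A : Set X} (hA : IsOpen A) {v : X → ℝ} {g : X → ℝ≥0∞} (h : Adm μ A v g)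
    {a b : ℝ} (hab : a < b) :
    Adm μ A (fun x => max a (min b (v x))) (indicator (A ∩ v ⁻¹' Ioo a b) g) := by
  have hL : LipschitzWith 1 (fun y : ℝ => max a (min b y)) := by
    have := (LipschitzWith.id (α := ℝ)).const_min b
    exact this.const_max a
  have hop : IsOpen (A ∩ v ⁻¹' Ioo a b) := h.1.continuousOn.isOpen_inter_preimage hA isOpen_Ioo
  refine ⟨?_, h.2.1.indicator hop.measurableSet, dg_comb2 hA h h ?_⟩
  · intro x hx
    obtain ⟨r, hr, K, hK⟩ := h.1 x hx
    exact ⟨r, hr, 1 * K, hL.comp_lipschitzOnWith hK⟩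
  · intro c hc t ht hd hle _ _
    rcases le_or_gt (v (c t)) a with h1 | h1
    · have : IsLocalMin (fun s => max a (min b (v (c s)))) t := by
        refine Eventually.of_forall fun s => ?_
        have : max a (min b (v (c t))) = a := max_eq_left ((min_le_right _ _).trans h1)
        simp only [this]
        exact le_max_left _ _
      rw [this.deriv_eq_zero]; simp
    rcases le_or_gt b (v (c t)) with h2 | h2
    · have : IsLocalMax (fun s => max a (min b (v (c s)))) t := by
        refine Eventually.of_forall fun s => ?_
        have : max a (min b (v (c t))) = b := by rw [min_eq_left h2, max_eq_right hab.le]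
        simp only [this]
        exact max_le hab.le (min_le_left _ _)
      rw [this.deriv_eq_zero]; simp
    · have he : (fun s => max a (min b (v (c s)))) =ᶠ[𝓝 t] fun s => v (c s) := by
        filter_upwards [hd.continuousAt.eventually (Ioo_mem_nhds h1 h2)] with s hs
        rw [min_eq_right hs.2.le, max_eq_right hs.1.le]
      rw [he.deriv_eq, indicator_of_mem (show c t ∈ A ∩ v ⁻¹' Ioo a b from ⟨ht, h1, h2⟩)]
      exact hle

def lev (t : ℝ) (u : X → ℝ) : X → ℝ := indicator {x | t < u x} (fun _ => 1)

lemma lev_eq (t : ℝ) (u : X → ℝ) (x : X) : lev t u x = if t < u x then 1 else 0 := by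
  simp [lev, indicator]

lemma lev_measurable (t : ℝ) {u : X → ℝ} (hu : Measurable u) : Measurable (lev t u) :=
  measurable_const.indicator (measurableSet_lt measurable_const hu)

lemma meas_ball_lt_top (x : X) (r : ℝ) (A : Set X) : μ (A ∩ ball x r) < ∞ :=
  (measure_mono inter_subset_right).trans_lt measure_ball_lt_top

lemma l1LocConv_of_dom {A : Set X} {v : ℕ → X → ℝ} {u : X → ℝ} (C : ℝ)
    (hm : ∀ n, AEMeasurable (fun y => v n y - u y) (μ.restrict A))
    (hb : ∀ n x, x ∈ A → |v n x - u x| ≤ C) (hA : MeasurableSet A)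
    (hp : ∀ x ∈ A, Tendsto (fun n => v n x) atTop (𝓝 (u x))) : L1LocConv μ A v u := by
  intro x hx
  refine ⟨1, one_pos, ?_⟩
  have hms : MeasurableSet (A ∩ ball x 1) := hA.inter measurableSet_ball
  have := tendsto_lintegral_of_dominated_convergence' (μ := μ.restrict (A ∩ ball x 1))
    (F := fun n y => ENNReal.ofReal |v n y - u y|) (f := fun _ => 0) (fun _ => ENNReal.ofReal C)
    (fun n => ((hm n).mono_measure (Measure.restrict_mono_set _ inter_subset_left)).abs.ennreal_ofReal)
    (fun n => (ae_restrict_iff' hms).2 (Eventually.of_forall fun y hy =>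
      ENNReal.ofReal_le_ofReal (hb n y hy.1))) ?_ ?_
  · simpa using this
  · rw [lintegral_const, Measure.restrict_apply_univ]
    exact (ENNReal.mul_lt_top ENNReal.ofReal_lt_top (meas_ball_lt_top x 1 A)).ne
  · refine (ae_restrict_iff' hms).2 (Eventually.of_forall fun y hy => ?_)
    have h1 : Tendsto (fun n => |v n y - u y|) atTop (𝓝 |u y - u y|) :=
      ((hp y hy.1).sub_const _).abs
    have := ENNReal.tendsto_ofReal h1
    simpa using this

lemma coarea_lip {A : Set X} (hA : IsOpen A) {v : X → ℝ} {g : X → ℝ≥0∞} (h : Adm μ A v g)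
    (hv : Measurable v) :
    ∃ m : ℝ → ℝ≥0∞, Measurable m ∧ (∀ t, tvOpen μ A (lev t v) ≤ m t) ∧
      ∫⁻ t, m t ≤ ∫⁻ x in A, g x ∂μ := by
  set d : ℕ → ℝ := fun n => 1 / ((n:ℝ) + 1) with hd
  have hd0 : ∀ n, 0 < d n := fun n => by positivity
  have hdt : Tendsto d atTop (𝓝 0) := tendsto_one_div_add_atTop_nhds_zero_nat
  set F : ℕ → ℝ → X → ℝ≥0∞ := fun n t x =>
    ENNReal.ofReal |(d n)⁻¹| * indicator {p : ℝ × X | p.1 < v p.2 ∧ v p.2 < p.1 + d n}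
      (fun p => g p.2) (t, x) with hF
  have hFm : ∀ n, Measurable (Function.uncurry (F n)) := by
    intro n
    refine Measurable.const_mul ?_ _
    refine Measurable.indicator (h.2.1.comp measurable_snd) ?_
    exact (measurableSet_lt measurable_fst (hv.comp measurable_snd)).inter
      (measurableSet_lt (hv.comp measurable_snd) (measurable_fst.add_const _))
  refine ⟨fun t => liminf (fun n => ∫⁻ x in A, F n t x ∂μ) atTop, ?_, ?_, ?_⟩
  · exact Measurable.liminf fun n => Measurable.lintegral_prod_right (hFm n)
  · intro t
    have hadm := fun n => (adm_clamp hA h (show t < t + d n by linarith [hd0 n])).smul hA (d n)⁻¹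
      (-(d n)⁻¹ * t)
    refine (tvOpen_le_liminf hA hadm ?_).trans ?_
    · refine l1LocConv_of_dom 1 ?_ ?_ hA.measurableSet ?_
      · intro n
        refine (Measurable.sub ?_ (lev_measurable t hv)).aemeasurable
        exact (((measurable_const.max (measurable_const.min hv))).const_mul _).add_const _
      · intro n x hx
        rw [lev_eq]
        have e : (d n)⁻¹ * max t (min (t + d n) (v x)) + -(d n)⁻¹ * t
          = (d n)⁻¹ * (max t (min (t + d n) (v x)) - t) := by ring
        rw [e]
        have b1 : 0 ≤ max t (min (t + d n) (v x)) - t := sub_nonneg.2 (le_max_left _ _)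
        have b2 : max t (min (t + d n) (v x)) - t ≤ d n := by
          have := max_le (show t ≤ t + d n by linarith [hd0 n]) (min_le_left (t + d n) (v x))
          linarith
        have b3 : 0 ≤ (d n)⁻¹ * (max t (min (t + d n) (v x)) - t) :=
          mul_nonneg (inv_nonneg.2 (hd0 n).le) b1
        have b4 : (d n)⁻¹ * (max t (min (t + d n) (v x)) - t) ≤ 1 := by
          rw [inv_mul_le_iff₀ (hd0 n)]; linarith
        rw [abs_le]
        split_ifs <;> constructor <;> linarith
      · intro x hx
        rw [lev_eq]
        refine tendsto_const_nhds.congr' ?_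
        split_ifs with hx1
        · filter_upwards [hdt.eventually_lt_const (sub_pos.2 hx1)] with n hn
          rw [min_eq_left (by linarith), max_eq_right (by linarith [hd0 n])]
          have := (hd0 n).ne'
          field_simp
          ring
        · refine Eventually.of_forall fun n => ?_
          simp only
          rw [max_eq_left ((min_le_right _ _).trans (not_lt.1 hx1))]
          ring
    · refine liminf_le_liminf (Eventually.of_forall fun n => ?_)
      refine lintegral_mono fun x => ?_
      simp only [hF]
      gcongr
      by_cases hx : x ∈ A ∩ v ⁻¹' Ioo t (t + d n)
      · rw [indicator_of_mem hx, indicator_of_mem (by exact hx.2)]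
      · rw [indicator_of_notMem hx]; exact zero_le
  · refine (lintegral_liminf_le fun n => Measurable.lintegral_prod_right (hFm n)).trans ?_
    refine liminf_le_of_le (by isBoundedDefault) fun b hb => ?_
    obtain ⟨n, hn⟩ := hb.exists
    refine hn.trans ?_
    rw [lintegral_lintegral_swap (hFm n).aemeasurable]
    refine lintegral_mono fun x => ?_
    simp only [hF]
    have e : ∀ t, indicator {p : ℝ × X | p.1 < v p.2 ∧ v p.2 < p.1 + d n} (fun p => g p.2) (t, x)
        = indicator (Ioo (v x - d n) (v x)) (fun _ => g x) t := by
      intro t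
      simp only [indicator, mem_ofPred_eq, mem_Ioo]
      refine if_congr ⟨fun h => ⟨by linarith, h.1⟩, fun h => ⟨h.2, by linarith [h.1]⟩⟩ rfl rfl
    simp only [e]
    rw [lintegral_const_mul' _ _ ENNReal.ofReal_ne_top, lintegral_indicator_const measurableSet_Ioo,
      Real.volume_Ioo, sub_sub_cancel, mul_comm (g x), ← mul_assoc, ← ENNReal.ofReal_mul (abs_nonneg _),
      abs_of_pos (inv_pos.2 (hd0 n)), inv_mul_cancel₀ (hd0 n).ne']
    simp

lemma lev_fubini {A : Set X} {u v : X → ℝ} (hu : Measurable u) (hv : Measurable v) :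
    Measurable (fun t => ∫⁻ x in A, ENNReal.ofReal |lev t v x - lev t u x| ∂μ) ∧
    ∫⁻ t, ∫⁻ x in A, ENNReal.ofReal |lev t v x - lev t u x| ∂μ =
      ∫⁻ x in A, ENNReal.ofReal |v x - u x| ∂μ := by
  have hm : ∀ {u : X → ℝ}, Measurable u → Measurable fun p : ℝ × X => lev p.1 u p.2 := by
    intro u hu
    simp only [lev_eq]
    exact Measurable.ite (measurableSet_lt measurable_fst (hu.comp measurable_snd))
      measurable_const measurable_const
  have hm2 : Measurable (Function.uncurry fun t x => ENNReal.ofReal |lev t v x - lev t u x|) :=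
    ((hm hv).sub (hm hu)).abs.ennreal_ofReal
  refine ⟨hm2.lintegral_prod_right, ?_⟩
  rw [lintegral_lintegral_swap hm2.aemeasurable]
  refine lintegral_congr fun x => ?_
  have e : ∀ t, ENNReal.ofReal |lev t v x - lev t u x| =
      indicator (Ico (min (v x) (u x)) (max (v x) (u x))) (fun _ => 1) t := by
    intro t
    simp only [lev_eq, indicator, mem_Ico, min_le_iff, lt_max_iff]
    by_cases h1 : t < v x <;> by_cases h2 : t < u x <;> simp [h1, h2, not_lt.1, not_le.2]
    all_goals simp_all [not_lt]
  simp only [e]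
  rw [lintegral_indicator_const measurableSet_Ico, Real.volume_Ico, one_mul, max_sub_min_eq_abs', ]

lemma coarea_ge {A : Set X} (hA : IsOpen A) {u : X → ℝ} (hu : Measurable u) :
    ∫⁻ t, tvOpen μ A (lev t u) ≤ tvOpen μ A u := by
  by_cases hc : tvOpen μ A u = ∞
  · rw [hc]; exact le_top
  obtain ⟨v, g, h1, h2, h3⟩ := exists_seq hA hu hc le_rfl
  set w : ℕ → X → ℝ := fun i => indicator A (v i) with hw
  have hwe : ∀ i, EqOn (v i) (w i) A := fun i x hx => (indicator_of_mem hx _).symm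
  have hwm : ∀ i, Measurable (w i) := fun i => (h1 i).1.measurable_indicator hA
  have hwa : ∀ i, Adm μ A (w i) (g i) := fun i => (h1 i).congr hA (hwe i)
  have h2' : ∀ i, ∫⁻ x in A, ENNReal.ofReal |w i x - u x| ∂μ ≤ ee i := fun i => by
    refine le_trans (le_of_eq ?_) (h2 i)
    exact setLIntegral_congr_fun hA.measurableSet fun x hx => by simp only [hwe i hx]
  choose m hm1 hm2 hm3 using fun i => coarea_lip hA (hwa i) (hwm i)
  have hsum : ∫⁻ t, ∑' i, ∫⁻ x in A, ENNReal.ofReal |lev t (w i) x - lev t u x| ∂μ ≠ ∞ := by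
    rw [lintegral_tsum fun i => (lev_fubini hu (hwm i)).1.aemeasurable]
    refine ne_top_of_le_ne_top (b := 2) (by simp) ?_
    rw [← ee_tsum]
    exact ENNReal.tsum_le_tsum fun i => (lev_fubini hu (hwm i)).2.le.trans (h2' i)
  have hae := ae_lt_top (Measurable.tsum fun i => (lev_fubini (μ := μ) (A := A) hu (hwm i)).1) hsum
  have hP : ∀ᵐ t, tvOpen μ A (lev t u) ≤ liminf (fun i => m i t) atTop := by
    filter_upwards [hae] with t ht
    have := ENNReal.tendsto_atTop_zero_of_tsum_ne_top ht.ne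
    refine (tvOpen_lsc hA (fun i => lev_measurable t (hwm i)) (l1LocConv_of_le this fun i => le_rfl)).trans ?_
    exact liminf_le_liminf (Eventually.of_forall fun i => hm2 i t)
  refine (lintegral_mono_ae hP).trans ((lintegral_liminf_le hm1).trans ?_)
  rw [← (add_ee_tendsto (tvOpen μ A u)).liminf_eq]
  exact liminf_le_liminf (Eventually.of_forall fun i => (hm3 i).trans (h3 i))

lemma lev_meas {A : Set X} (hA : IsOpen A) {u : X → ℝ} (hu : Measurable u) :
    Measurable fun t => tvOpen μ A (lev t u) := by
  refine measurable_of_Ioi fun a => MeasurableSet.of_mem_nhdsGT fun t ht => ?_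
  by_contra hcon
  have hfr : ∃ᶠ s in 𝓝[>] t, tvOpen μ A (lev s u) ≤ a := by
    intro h; apply hcon; filter_upwards [h] with s hs; exact not_le.1 hs
  obtain ⟨s, hs1, hs2⟩ := exists_seq_forall_of_frequently hfr
  refine absurd ?_ (not_le.2 (show a < tvOpen μ A (lev t u) from ht))
  have hs3 := tendsto_nhdsWithin_iff.1 hs1
  refine (tvOpen_lsc (v := fun i => lev (s i) u) hA (fun i => lev_measurable _ hu) ?_).trans
    (liminf_le_of_le (by isBoundedDefault) fun b hb => ?_)
  · refine l1LocConv_of_dom 1 (fun n => ((lev_measurable _ hu).sub (lev_measurable _ hu)).aemeasurable)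
      ?_ hA.measurableSet ?_
    · intro n x _
      simp only [lev_eq]
      split_ifs <;> simp
    · intro x _
      refine tendsto_const_nhds.congr' ?_
      by_cases hx : t < u x
      · filter_upwards [hs3.1.eventually_lt_const hx] with n hn
        simp [lev_eq, hx, hn]
      · filter_upwards [hs3.2] with n hn
        have : ¬ s n < u x := by
          have : t < s n := hn
          linarith [not_lt.1 hx]
        simp [lev_eq, hx, this]
  · obtain ⟨n, hn⟩ := hb.exists
    exact hn.trans (hs2 n)

lemma l1LocConv_of_dom' {A : Set X} {v : ℕ → X → ℝ} {u : X → ℝ} (b : X → ℝ≥0∞)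
    (hbi : ∀ x ∈ A, ∃ r > (0:ℝ), ∫⁻ y in A ∩ ball x r, b y ∂μ ≠ ∞)
    (hm : ∀ n, AEMeasurable (fun y => v n y - u y) (μ.restrict A))
    (hb : ∀ n x, x ∈ A → ENNReal.ofReal |v n x - u x| ≤ b x) (hA : MeasurableSet A)
    (hp : ∀ x ∈ A, Tendsto (fun n => v n x) atTop (𝓝 (u x))) : L1LocConv μ A v u := by
  intro x hx
  obtain ⟨r, hr, hr2⟩ := hbi x hx
  refine ⟨r, hr, ?_⟩
  have hms : MeasurableSet (A ∩ ball x r) := hA.inter measurableSet_ball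
  have := tendsto_lintegral_of_dominated_convergence' (μ := μ.restrict (A ∩ ball x r))
    (F := fun n y => ENNReal.ofReal |v n y - u y|) (f := fun _ => 0) b
    (fun n => ((hm n).mono_measure (Measure.restrict_mono_set _ inter_subset_left)).abs.ennreal_ofReal)
    (fun n => (ae_restrict_iff' hms).2 (Eventually.of_forall fun y hy => hb n y hy.1)) hr2 ?_
  · simpa using this
  · refine (ae_restrict_iff' hms).2 (Eventually.of_forall fun y hy => ?_)
    have h1 : Tendsto (fun n => |v n y - u y|) atTop (𝓝 |u y - u y|) :=
      ((hp y hy.1).sub_const _).abs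
    have := ENNReal.tendsto_ofReal h1
    simpa using this

lemma discr {h a y : ℝ} (hh : 0 < h) {t : ℕ → ℝ} (ht : ∀ j : ℕ, t j ∈ Ico (a + j * h) (a + (j + 1) * h))
    (n : ℕ) : (a + n * h ≤ y → h * ∑ j ∈ Finset.range n, (if t j < y then (1:ℝ) else 0) = n * h) ∧
      (y < a + n * h → |max 0 (y - a) - h * ∑ j ∈ Finset.range n, (if t j < y then (1:ℝ) else 0)| ≤ h) := by
  induction n with
  | zero =>
    simp only [Finset.range_zero, Finset.sum_empty, Nat.cast_zero, zero_mul, mul_zero, add_zero, sub_zero]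
    refine ⟨fun _ => trivial, fun hy => ?_⟩
    rw [max_eq_left (by linarith)]; simpa using hh.le
  | succ n ih =>
    rw [Finset.sum_range_succ, mul_add]
    push_cast
    obtain ⟨h1, h2⟩ := ht n
    constructor
    · intro hy
      rw [if_pos (by linarith), ih.1 (by nlinarith)]; ring
    · intro hy
      rcases lt_or_ge y (a + n * h) with h3 | h3
      · rw [if_neg (by linarith), mul_zero, add_zero]
        exact ih.2 h3
      · rw [ih.1 h3]
        have : 0 ≤ n * h := by positivity
        rw [max_eq_right (by linarith), abs_le]
        split_ifs <;> constructor <;> linarith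

lemma sum_Ico_le (f : ℝ → ℝ≥0∞) {h a : ℝ} (hh : 0 < h) (n : ℕ) :
    ∑ j ∈ Finset.range n, ∫⁻ t in Ico (a + j * h) (a + (j + 1) * h), f t ≤
      ∫⁻ t in Ico a (a + n * h), f t := by
  induction n with
  | zero => simp
  | succ n ih =>
    rw [Finset.sum_range_succ]
    refine (add_le_add ih le_rfl).trans ?_
    rw [← lintegral_union measurableSet_Ico]
    · refine lintegral_mono_set (union_subset (Ico_subset_Ico_right ?_) (Ico_subset_Ico ?_ ?_))
      · push_cast; linarith
      · have : 0 ≤ n * h := by positivity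
        linarith
      · push_cast; linarith
    · rw [Set.disjoint_left]
      intro x h1 h2
      exact absurd h1.2 (not_lt.2 h2.1)

lemma coarea_le {A : Set X} (hA : IsOpen A) {u : X → ℝ} (hu : Measurable u) (hL : MemL1Loc μ A u) :
    tvOpen μ A u ≤ ∫⁻ t, tvOpen μ A (lev t u) := by
  set P := fun t => tvOpen μ A (lev t u) with hP
  have hPm : Measurable P := lev_meas hA hu
  set h : ℕ → ℝ := fun n => 1 / ((n:ℝ) + 1) with hh
  have hh0 : ∀ n, 0 < h n := fun n => by positivity
  have hh1 : ∀ n, h n ≤ 1 := fun n => by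
    rw [hh]; simp only; rw [div_le_one (by positivity)]; linarith [n.cast_nonneg (α := ℝ)]
  have hht : Tendsto h atTop (𝓝 0) := tendsto_one_div_add_atTop_nhds_zero_nat
  have hex : ∀ n j : ℕ, ∃ t ∈ Ico (-(n:ℝ) + j * h n) (-(n:ℝ) + (j + 1) * h n),
      ENNReal.ofReal (h n) * P t ≤ ∫⁻ t in Ico (-(n:ℝ) + j * h n) (-(n:ℝ) + (j + 1) * h n), P t := by
    intro n j
    have hvol : volume (Ico (-(n:ℝ) + j * h n) (-(n:ℝ) + (j + 1) * h n)) = ENNReal.ofReal (h n) := by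
      rw [Real.volume_Ico]; congr 1; ring
    have h0 : ENNReal.ofReal (h n) ≠ 0 := by simpa using hh0 n
    obtain ⟨t, ht, ht2⟩ := exists_le_setLAverage (μ := volume) (f := P) (by rw [hvol]; exact h0)
      (by rw [hvol]; exact ENNReal.ofReal_ne_top) hPm.aemeasurable
    refine ⟨t, ht, ?_⟩
    rw [setLAverage_eq, hvol] at ht2
    rw [mul_comm]
    exact (ENNReal.le_div_iff_mul_le (Or.inl h0) (Or.inl ENNReal.ofReal_ne_top)).1 ht2
  choose t ht1 ht2 using hex
  set K : ℕ → ℕ := fun n => 2 * n * (n + 1) with hK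
  have hKh : ∀ n, (K n : ℝ) * h n = 2 * n := fun n => by
    simp only [hK, hh]; push_cast; field_simp
  set s : ℕ → X → ℝ := fun n x => h n * ∑ j ∈ Finset.range (K n), lev (t n j) u x + -(n:ℝ) with hs
  have hsm : ∀ n, Measurable (s n) := fun n =>
    ((Finset.measurable_fun_sum _ fun j _ => lev_measurable _ hu).const_mul _).add_const _
  have hsT : ∀ n, tvOpen μ A (s n) ≤ ∫⁻ t, P t := by
    intro n
    refine (tvOpen_sum hA (hh0 n) (fun j => lev (t n j) u) (fun j => lev_measurable _ hu) (K n) _).trans ?_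
    refine (Finset.sum_le_sum fun j _ => ht2 n j).trans ?_
    exact (sum_Ico_le P (hh0 n) (K n)).trans (setLIntegral_le_lintegral _ _)
  have hd := fun n x => discr (y := u x) (hh0 n) (ht1 n) (K n)
  simp only [hKh, ← lev_eq] at hd
  have hnear : ∀ (n : ℕ) x, |u x| < n → |s n x - u x| ≤ h n := by
    intro n x hx
    rw [abs_lt] at hx
    have := (hd n x).2 (by linarith)
    rw [max_eq_right (by linarith)] at this
    rw [← abs_neg]
    refine le_trans (le_of_eq ?_) this
    simp only [hs]; congr 1; ring
  have hfar : ∀ n x, |s n x - u x| ≤ 1 + |u x| := by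
    intro n x
    have n0 : (0:ℝ) ≤ n := n.cast_nonneg
    rcases lt_or_ge |u x| n with hx | hx
    · exact (hnear n x hx).trans ((hh1 n).trans (by linarith [abs_nonneg (u x)]))
    rcases le_abs.1 hx with h1 | h1
    · have := (hd n x).1 (by linarith)
      simp only [hs]
      rw [this, abs_of_nonneg (n0.trans h1), abs_le]
      constructor <;> linarith
    · have h3 : u x ≤ -n := by linarith
      rcases eq_or_ne n 0 with h0 | h0
      · subst h0
        have hK0 : K 0 = 0 := by simp [hK]
        simp only [hs, hK0]
        simp
      have n1 : (0:ℝ) < n := by exact_mod_cast Nat.pos_of_ne_zero h0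
      have := (hd n x).2 (by linarith)
      rw [max_eq_left (by linarith), abs_le] at this
      rw [abs_of_nonpos (by linarith : u x ≤ 0), abs_le]
      simp only [hs]
      have := hh1 n
      constructor <;> linarith
  have hconv : L1LocConv μ A s u := by
    refine l1LocConv_of_dom' (fun x => 1 + ENNReal.ofReal |u x|) ?_
      (fun n => ((hsm n).sub hu).aemeasurable) ?_ hA.measurableSet ?_
    · intro x hx
      obtain ⟨r, hr, hr2⟩ := hL.2 x hx
      refine ⟨r, hr, ?_⟩
      rw [lintegral_add_left measurable_const, lintegral_one, Measure.restrict_apply_univ]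
      exact (ENNReal.add_lt_top.2 ⟨meas_ball_lt_top x r A, hr2⟩).ne
    · intro n x _
      rw [← ENNReal.ofReal_one, ← ENNReal.ofReal_add zero_le_one (abs_nonneg _)]
      exact ENNReal.ofReal_le_ofReal (hfar n x)
    · intro x _
      rw [tendsto_iff_norm_sub_tendsto_zero]
      refine tendsto_of_tendsto_of_tendsto_of_le_of_le' tendsto_const_nhds hht
        (Eventually.of_forall fun _ => norm_nonneg _) ?_
      obtain ⟨N, hN⟩ := exists_nat_gt |u x|
      filter_upwards [eventually_ge_atTop N] with n hn
      exact hnear n x (hN.trans_le (by exact_mod_cast hn))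
  refine (tvOpen_lsc hA hsm hconv).trans (liminf_le_of_le (by isBoundedDefault) fun b hb => ?_)
  obtain ⟨n, hn⟩ := hb.exists
  exact hn.trans (hsT n)

/-- Lipschitz regularisation from below -/
def gm (g : X → ℝ≥0∞) (m : ℕ) (x : X) : ℝ≥0∞ := ⨅ y, (min (g y) m + m * edist x y)

lemma gm_le (g : X → ℝ≥0∞) (m : ℕ) (x : X) : gm g m x ≤ g x := by
  refine (iInf_le _ x).trans ?_
  simp

lemma gm_le_nat (g : X → ℝ≥0∞) (m : ℕ) (x : X) : gm g m x ≤ m := by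
  refine (iInf_le _ x).trans ?_
  simp

lemma gm_mono (g : X → ℝ≥0∞) {k m : ℕ} (h : k ≤ m) (x : X) : gm g k x ≤ gm g m x := by
  have : (k : ℝ≥0∞) ≤ m := by exact_mod_cast h
  exact iInf_mono fun y => by gcongr

lemma gm_ge (g : X → ℝ≥0∞) (m : ℕ) (c : ℝ≥0∞) (hc : ∀ x, c ≤ g x) (hm : c ≤ m) (x : X) :
    c ≤ gm g m x := le_iInf fun y => (le_min (hc y) hm).trans le_self_add

lemma gm_lip (g : X → ℝ≥0∞) (m : ℕ) (x y : X) : gm g m x ≤ gm g m y + m * edist x y := by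
  unfold gm
  rw [ENNReal.iInf_add]
  refine iInf_mono fun z => ?_
  rw [add_assoc, ← mul_add]
  gcongr
  rw [add_comm]
  exact edist_triangle x y z

lemma gm_cont (g : X → ℝ≥0∞) (m : ℕ) : Continuous (gm g m) := by
  rw [continuous_iff_continuousAt]
  intro x
  have h1 : ∀ a, Tendsto (fun y : X => a + (m:ℝ≥0∞) * edist y x) (𝓝 x) (𝓝 a) := by
    intro a
    have h0 : Tendsto (fun y : X => edist y x) (𝓝 x) (𝓝 0) := by
      have := (continuous_id.edist (continuous_const (y := x))).tendsto x
      simpa using this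
    have := (ENNReal.Tendsto.const_mul h0 (Or.inr (ENNReal.natCast_ne_top m))).const_add a
    simpa using this
  have hx : gm g m x ≠ ∞ := ((gm_le_nat g m x).trans_lt (ENNReal.natCast_lt_top m)).ne
  refine tendsto_order.2 ⟨fun a ha => ?_, fun a ha => ?_⟩
  · have h2 : Tendsto (fun y : X => (m:ℝ≥0∞) * edist y x) (𝓝 x) (𝓝 0) := by simpa using h1 0
    filter_upwards [h2.eventually_lt_const (tsub_pos_of_lt ha)] with y hy
    by_contra hcon
    have := gm_lip g m x y
    rw [edist_comm] at this
    have h3 : gm g m x < a + (gm g m x - a) := by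
      refine this.trans_lt ?_
      exact ENNReal.add_lt_add_of_le_of_lt (ne_top_of_lt (lt_of_le_of_lt (not_lt.1 hcon) ha))
        (not_lt.1 hcon) hy
    rw [add_tsub_cancel_of_le ha.le] at h3
    exact lt_irrefl _ h3
  · filter_upwards [(h1 (gm g m x)).eventually_lt_const ha] with y hy
    exact (gm_lip g m y x).trans_lt hy

lemma gm_sup {g : X → ℝ≥0∞} (hg : LowerSemicontinuous g) (x : X) : g x ≤ ⨆ m, gm g m x := by
  refine le_of_forall_lt fun a ha => ?_
  obtain ⟨b, hab, hb⟩ := exists_between ha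
  have hbt : b ≠ ∞ := ne_top_of_lt hb
  obtain ⟨r, hr, hr2⟩ := Metric.eventually_nhds_iff.1 (hg x b hb)
  obtain ⟨m, hm⟩ := ENNReal.exists_nat_gt hbt
  have hr0 : ENNReal.ofReal r ≠ 0 := by simpa using hr
  obtain ⟨k, hk⟩ := ENNReal.exists_nat_mul_gt hr0 hbt
  refine hab.trans_le (le_iSup_of_le (max m k) ?_)
  refine le_iInf fun y => ?_
  by_cases hy : dist y x < r
  · refine le_trans (le_min (hr2 hy).le (hm.le.trans ?_)) le_self_add
    exact_mod_cast le_max_left m k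
  · refine le_trans ?_ le_add_self
    refine hk.le.trans (mul_le_mul' (by exact_mod_cast le_max_right m k) ?_)
    rw [edist_dist, dist_comm]
    exact ENNReal.ofReal_le_ofReal (not_lt.1 hy)

lemma gm_liminf {g : X → ℝ≥0∞} (hg : LowerSemicontinuous g) {x : X} {y : ℕ → X} {φ : ℕ → ℕ}
    (hφ : Tendsto φ atTop atTop) (hy : Tendsto y atTop (𝓝 x)) :
    g x ≤ liminf (fun j => gm g (φ j) (y j)) atTop := by
  refine (gm_sup hg x).trans (iSup_le fun k => ?_)
  have h1 : Tendsto (fun j => gm g k (y j)) atTop (𝓝 (gm g k x)) :=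
    ((gm_cont g k).tendsto x).comp hy
  rw [← h1.liminf_eq]
  exact liminf_le_liminf ((hφ.eventually_ge_atTop k).mono fun j hj => gm_mono g hj _)

/-- discrete chains -/
inductive Ch (g : X → ℝ≥0∞) (F Z : Set X) (δ : ℝ) : X → ℝ≥0∞ → Prop
  | base (x : X) : x ∈ F → x ∈ Z → Ch g F Z δ x 0
  | step (x y : X) (c : ℝ≥0∞) : x ∈ Z → dist x y ≤ δ → Ch g F Z δ y c →
      Ch g F Z δ x (g x * edist x y + c)

def Dm (g : X → ℝ≥0∞) (F Z : Set X) (δ : ℝ) (x : X) : ℝ≥0∞ := ⨅ (c : ℝ≥0∞) (_ : Ch g F Z δ x c), c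

lemma Dm_step {g : X → ℝ≥0∞} {F Z : Set X} {δ : ℝ} {x y : X} (hx : x ∈ Z) (h : dist x y ≤ δ) :
    Dm g F Z δ x ≤ g x * edist x y + Dm g F Z δ y := by
  unfold Dm
  rw [ENNReal.add_iInf]
  refine le_iInf fun c => ?_
  by_cases hc : Ch g F Z δ y c
  · simp only [hc, iInf_pos]
    exact iInf₂_le _ (Ch.step x y c hx h hc)
  · simp [hc]

lemma Dm_base {g : X → ℝ≥0∞} {F Z : Set X} {δ : ℝ} {x : X} (hF : x ∈ F) (hx : x ∈ Z) :
    Dm g F Z δ x = 0 := le_antisymm (iInf₂_le _ (Ch.base x hF hx)) zero_le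

def wm (g : X → ℝ≥0∞) (F Z : Set X) (δ : ℝ) (x : X) : ℝ := (1 - Dm g F Z δ x).toReal

lemma wm_sub {g : X → ℝ≥0∞} {F Z : Set X} {δ : ℝ} {x y : X} (hx : x ∈ Z) (hgx : g x ≠ ∞)
    (h : dist x y ≤ δ) : wm g F Z δ y - wm g F Z δ x ≤ (g x).toReal * dist x y := by
  have h1 := Dm_step (g := g) (F := F) hx h
  have h2 : 1 - Dm g F Z δ y ≤ (1 - Dm g F Z δ x) + g x * edist x y := by
    rw [tsub_le_iff_right]
    calc (1:ℝ≥0∞) ≤ (1 - Dm g F Z δ x) + Dm g F Z δ x := le_tsub_add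
      _ ≤ (1 - Dm g F Z δ x) + (g x * edist x y + Dm g F Z δ y) := by gcongr
      _ = _ := by rw [add_assoc]
  have hfin : ∀ z, 1 - Dm g F Z δ z ≠ ∞ := fun z => ne_top_of_le_ne_top ENNReal.one_ne_top tsub_le_self
  have hf2 : g x * edist x y ≠ ∞ := ENNReal.mul_ne_top hgx (edist_ne_top _ _)
  have h3 := ENNReal.toReal_mono (ENNReal.add_ne_top.2 ⟨hfin x, hf2⟩) h2
  rw [ENNReal.toReal_add (hfin x) hf2, ENNReal.toReal_mul, ← dist_edist] at h3
  unfold wm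
  linarith

lemma wm_abs {g : X → ℝ≥0∞} {F Z : Set X} {δ : ℝ} {x y : X} (hx : x ∈ Z) (hy : y ∈ Z) {a : ℝ}
    (hgx : g x ≤ ENNReal.ofReal a) (hgy : g y ≤ ENNReal.ofReal a) (ha : 0 ≤ a)
    (h : dist x y ≤ δ) : |wm g F Z δ x - wm g F Z δ y| ≤ a * dist x y := by
  have hx' := wm_sub (F := F) hx (ne_top_of_le_ne_top ENNReal.ofReal_ne_top hgx) h
  have hy' := wm_sub (F := F) hy (ne_top_of_le_ne_top ENNReal.ofReal_ne_top hgy) (show dist y x ≤ δ by rwa [dist_comm])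
  rw [dist_comm y x] at hy'
  have h1 : (g x).toReal * dist x y ≤ a * dist x y :=
    mul_le_mul_of_nonneg_right (ENNReal.toReal_le_of_le_ofReal ha hgx) dist_nonneg
  have h2 : (g y).toReal * dist x y ≤ a * dist x y :=
    mul_le_mul_of_nonneg_right (ENNReal.toReal_le_of_le_ofReal ha hgy) dist_nonneg
  rw [abs_le]; constructor <;> linarith

lemma wm_nonneg (g : X → ℝ≥0∞) (F Z : Set X) (δ : ℝ) (x : X) : 0 ≤ wm g F Z δ x := ENNReal.toReal_nonneg

lemma wm_le_one (g : X → ℝ≥0∞) (F Z : Set X) (δ : ℝ) (x : X) : wm g F Z δ x ≤ 1 := by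
  unfold wm
  rw [← ENNReal.toReal_one]
  exact ENNReal.toReal_mono ENNReal.one_ne_top tsub_le_self

lemma wm_base {g : X → ℝ≥0∞} {F Z : Set X} {δ : ℝ} {x : X} (hF : x ∈ F) (hx : x ∈ Z) :
    wm g F Z δ x = 1 := by
  unfold wm; rw [Dm_base hF hx]; simp

lemma wm_adm {g : X → ℝ≥0∞} (hg : Measurable g) {F Z V : Set X} {m : ℕ} {δ : ℝ}
    (hδ : 0 < δ) (hV : IsOpen V) (hVZ : V ⊆ Z) : Adm μ V (wm (gm g m) F Z δ) g := by
  refine ⟨?_, hg, ?_⟩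
  · intro x hx
    refine ⟨δ / 2, by positivity, m, ?_⟩
    refine LipschitzOnWith.of_dist_le_mul fun y hy z hz => ?_
    rw [Real.dist_eq]
    have := dist_triangle_right y z x
    have h1 := mem_ball.1 hy.2
    have h2 := mem_ball.1 hz.2
    refine wm_abs (hVZ hy.1) (hVZ hz.1) ?_ ?_ (by positivity) (by linarith)
    · simpa using gm_le_nat g m y
    · simpa using gm_le_nat g m z
  · refine dg_comb (ι := Empty) (v := fun e => e.elim) (g := fun e => e.elim) (Oi := fun e => e.elim)
      (fun e => e.elim) (fun e => e.elim) (fun e => e.elim) ?_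
    intro c hc t ht _
    have hcc := hc.continuous
    refine le_trans ?_ (gm_le g m (c t))
    refine ENNReal.le_of_forall_pos_le_add fun a ha hfin => ?_
    set b : ℝ := (gm g m (c t)).toReal + a with hb
    have hb' : ENNReal.ofReal b = gm g m (c t) + a := by
      rw [hb, ENNReal.ofReal_add ENNReal.toReal_nonneg a.coe_nonneg, ENNReal.ofReal_toReal hfin.ne,
        ENNReal.ofReal_coe_nnreal]
    have hb0 : 0 ≤ b := add_nonneg ENNReal.toReal_nonneg a.coe_nonneg
    have hlt : gm g m (c t) < ENNReal.ofReal b := by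
      rw [hb']; exact ENNReal.lt_add_right hfin.ne (by exact_mod_cast ha.ne')
    have e1 : ∀ᶠ s in 𝓝 t, gm g m (c s) < ENNReal.ofReal b :=
      (((gm_cont g m).comp hcc).tendsto t).eventually_lt_const hlt
    have e2 : ∀ᶠ s in 𝓝 t, c s ∈ V := (hcc.tendsto t).eventually (hV.mem_nhds ht)
    have e3 : ∀ᶠ s in 𝓝 t, dist (c s) (c t) < δ := (hcc.tendsto t).eventually (ball_mem_nhds _ hδ)
    have : ‖deriv (fun s => wm (gm g m) F Z δ (c s)) t‖ ≤ b := by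
      refine norm_deriv_le_of_lip' hb0 ?_
      filter_upwards [e1, e2, e3] with s h1 h2 h3
      rw [Real.norm_eq_abs]
      refine (wm_abs (hVZ h2) (hVZ ht) h1.le hlt.le hb0 h3.le).trans ?_
      have := hc.dist_le_mul s t
      rw [Real.dist_eq] at this
      rw [Real.norm_eq_abs]
      gcongr
      simpa using this
    rw [← hb', ← ofReal_norm_eq_enorm]
    exact ENNReal.ofReal_le_ofReal this

lemma ch_path {g : X → ℝ≥0∞} (hg : Measurable g) {F Z : Set X} {δ : ℝ} (hδ : 0 ≤ δ) {x : X}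
    {c : ℝ≥0∞} (h : Ch g F Z δ x c) : ∃ (σ : ℝ → X) (l : ℝ), 0 ≤ l ∧ Measurable σ ∧ (∀ t, σ t ∈ Z) ∧
      (∀ t, 0 ≤ t → dist x (σ t) ≤ t) ∧
      (∀ s t, 0 ≤ s → s ≤ t → dist (σ s) (σ t) ≤ (t - s) + δ) ∧ (∀ t, l ≤ t → σ t ∈ F) ∧
      ∫⁻ t in Ico 0 l, g (σ t) ≤ c := by
  induction h with
  | base x hF hZ =>
    refine ⟨fun _ => x, 0, le_rfl, measurable_const, fun _ => hZ, fun t ht => by simpa using ht,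
      fun s t _ hst => ?_, fun _ _ => hF, by simp⟩
    rw [dist_self]; linarith
  | step x y c hx hd hc ih =>
    obtain ⟨σ, l, hl, hm, hZ, h1, h2, h3, h4⟩ := ih
    have hd0 : 0 ≤ dist x y := dist_nonneg
    have key : ∀ t, dist x y ≤ t → dist x (σ (t - dist x y)) ≤ t := by
      intro t ht
      have := dist_triangle x y (σ (t - dist x y))
      have := h1 (t - dist x y) (by linarith)
      linarith
    refine ⟨fun t => if t < dist x y then x else σ (t - dist x y), l + dist x y, by positivity,
      ?_, ?_, ?_, ?_, ?_, ?_⟩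
    · exact Measurable.ite measurableSet_Iio measurable_const (hm.comp (measurable_id.sub_const _))
    · intro t; simp only; split_ifs
      · exact hx
      · exact hZ _
    · intro t ht
      simp only
      split_ifs with h
      · simpa using ht
      · exact key t (not_lt.1 h)
    · intro s t hs hst
      simp only
      split_ifs with ha hb hb
      · rw [dist_self]; linarith
      · have := key t (not_lt.1 hb); linarith
      · linarith
      · have := h2 (s - dist x y) (t - dist x y) (by linarith) (by linarith)
        linarith
    · intro t ht
      simp only
      rw [if_neg (by linarith)]
      exact h3 _ (by linarith)
    · have hsplit : Ico 0 (l + dist x y) = Ico 0 (dist x y) ∪ Ico (dist x y) (l + dist x y) :=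
        (Ico_union_Ico_eq_Ico hd0 (by linarith)).symm
      rw [hsplit]
      refine (lintegral_union_le _ _ _).trans (add_le_add ?_ ?_)
      · rw [setLIntegral_congr_fun measurableSet_Ico (g := fun _ => g x)
          (fun t ht => by simp only [if_pos ht.2])]
        rw [setLIntegral_const, Real.volume_Ico, sub_zero, edist_dist]
      · rw [setLIntegral_congr_fun measurableSet_Ico (g := fun t => g (σ (t - dist x y)))
          (fun t ht => by simp only [if_neg (not_lt.2 ht.1)])]
        refine le_trans (le_of_eq ?_) h4
        rw [← lintegral_indicator measurableSet_Ico, ← lintegral_indicator measurableSet_Ico,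
          ← lintegral_sub_right_eq_self (μ := volume) (fun t => indicator (Ico 0 l) (fun t => g (σ t)) t)
            (dist x y)]
        refine lintegral_congr fun t => ?_
        simp only [indicator, mem_Ico]
        refine if_congr ⟨fun h => ⟨by linarith [h.1], by linarith [h.2]⟩,
          fun h => ⟨by linarith [h.1], by linarith [h.2]⟩⟩ rfl rfl

lemma ch_limit {g : X → ℝ≥0∞} (hg : LowerSemicontinuous g) {c₀ : ℝ≥0∞} (hc₀ : c₀ ≠ 0)
    (hc₁ : c₀ ≠ ∞) (hgc : ∀ x, c₀ ≤ g x) {F Z : Set X} (hF : IsClosed F) (hZ : IsCompact Z) {x : X} {s : ℝ≥0∞}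
    (hs : s ≠ ∞) {d : ℕ → ℝ} (hd : Tendsto d atTop (𝓝 0)) (hd0 : ∀ n, 0 ≤ d n)
    (h : ∃ᶠ m in atTop, Dm (gm g m) F Z (d m) x < s) :
    ∃ γ : Curve X, γ.toFun 0 = x ∧ γ.toFun γ.len ∈ F ∧ γ.integral g ≤ s := by
  obtain ⟨N, hN⟩ := ENNReal.exists_nat_gt hc₁
  obtain ⟨φ, hφ, hφ2⟩ := extraction_of_frequently_atTop
    (h.and_eventually (eventually_ge_atTop N))
  have hex : ∀ k, ∃ c, Ch (gm g (φ k)) F Z (d (φ k)) x c ∧ c < s := by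
    intro k
    have := (hφ2 k).1
    unfold Dm at this
    simp only [iInf_lt_iff] at this
    obtain ⟨c, hc, h⟩ := this
    exact ⟨c, hc, h⟩
  choose c hc hcs using hex
  choose σ l hl hm hσZ h1 h2 h3 h4 using fun k => ch_path (gm_cont g (φ k)).measurable (hd0 _) (hc k)
  have hdφ : Tendsto (fun k => d (φ k)) atTop (𝓝 0) := hd.comp hφ.tendsto_atTop
  -- length bound
  set L : ℝ := (s / c₀).toReal with hL
  have hlL : ∀ k, l k ∈ Icc 0 L := by
    intro k
    refine ⟨hl k, ?_⟩
    have e : c₀ * ENNReal.ofReal (l k) ≤ s := by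
      refine le_trans ?_ ((h4 k).trans (hcs k).le)
      refine le_trans (le_of_eq ?_) (lintegral_mono fun t => gm_ge g (φ k) c₀ hgc
        (hN.le.trans (by exact_mod_cast (hφ2 k).2)) (σ k t))
      rw [setLIntegral_const, Real.volume_Ico, sub_zero]
    rw [← ENNReal.ofReal_le_iff_le_toReal (ENNReal.div_ne_top hs hc₀)]
    rw [ENNReal.le_div_iff_mul_le (Or.inl hc₀) (Or.inl hc₁), mul_comm]
    exact e
  -- ultrafilter limits
  let 𝒰 : Ultrafilter ℕ := hyperfilter ℕ
  have h𝒰 : (𝒰 : Filter ℕ) ≤ atTop := Nat.hyperfilter_le_atTop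
  have hlim : ∀ t, ∃ z ∈ Z, Tendsto (fun k => σ k t) 𝒰 (𝓝 z) := by
    intro t
    obtain ⟨z, hz, hz2⟩ := hZ.ultrafilter_le_nhds' (𝒰.map fun k => σ k t)
      (Ultrafilter.mem_map.2 (Filter.univ_mem' fun k => hσZ k t))
    exact ⟨z, hz, hz2⟩
  choose τ hτZ hτ using hlim
  obtain ⟨l0, hl0, hl02⟩ := (isCompact_Icc (a := (0:ℝ)) (b := L)).ultrafilter_le_nhds' (𝒰.map l)
      (Ultrafilter.mem_map.2 (Filter.univ_mem' fun k => hlL k))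
  have hl03 : Tendsto l 𝒰 (𝓝 l0) := hl02
  have hτlip : ∀ a b, 0 ≤ a → a ≤ b → dist (τ a) (τ b) ≤ b - a := by
    intro a b ha hab
    have e1 : Tendsto (fun k => (b - a) + d (φ k)) 𝒰 (𝓝 ((b - a) + 0)) :=
      ((hdφ.mono_left h𝒰)).const_add _
    rw [add_zero] at e1
    exact le_of_tendsto_of_tendsto ((hτ a).dist (hτ b)) e1
      (Eventually.of_forall fun k => h2 k a b ha hab)
  have h2' : ∀ k a b, 0 ≤ a → 0 ≤ b → dist (σ k a) (σ k b) ≤ |a - b| + d (φ k) := by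
    intro k a b ha hb
    rcases le_total a b with hab | hab
    · refine (h2 k a b ha hab).trans ?_
      rw [abs_sub_comm]; gcongr; exact le_abs_self _
    · rw [dist_comm]
      refine (h2 k b a hb hab).trans ?_
      gcongr; exact le_abs_self _
  have hτlip' : ∀ a b, 0 ≤ a → 0 ≤ b → dist (τ a) (τ b) ≤ |a - b| := by
    intro a b ha hb
    rcases le_total a b with hab | hab
    · refine (hτlip a b ha hab).trans ?_
      rw [abs_sub_comm]; exact le_abs_self _
    · rw [dist_comm]
      exact (hτlip b a hb hab).trans (le_abs_self _)
  -- subsequence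
  have hsub : ∀ j : ℕ, ∃ k, j ≤ k ∧ |l k - l0| < d j + 1 / ((j:ℝ) + 1) ∧
      ∀ i ≤ j, dist (σ k |TopologicalSpace.denseSeq ℝ i|) (τ |TopologicalSpace.denseSeq ℝ i|) < 1 / ((j:ℝ) + 1) := by
    intro j
    have hj : (0:ℝ) < 1 / ((j:ℝ) + 1) := by positivity
    have e1 : ∀ᶠ k in (𝒰 : Filter ℕ), j ≤ k := h𝒰 (eventually_ge_atTop j)
    have e2 : ∀ᶠ k in (𝒰 : Filter ℕ), |l k - l0| < d j + 1 / ((j:ℝ) + 1) :=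
      hl03.eventually (ball_mem_nhds l0 (by linarith [hd0 j]))
    have e3 : ∀ᶠ k in (𝒰 : Filter ℕ), ∀ i ∈ Iic j,
      dist (σ k |TopologicalSpace.denseSeq ℝ i|) (τ |TopologicalSpace.denseSeq ℝ i|) < 1 / ((j:ℝ) + 1) := by
      rw [eventually_all_finite (finite_Iic j)]
      intro i _
      exact (hτ _).eventually (ball_mem_nhds _ hj)
    exact ((e1.and (e2.and e3)).exists)
  choose ψ hψ1 hψ2 hψ3 using hsub
  have hψt : Tendsto ψ atTop atTop := tendsto_atTop_mono hψ1 tendsto_id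
  have h1t : Tendsto (fun j : ℕ => 1 / ((j:ℝ) + 1)) atTop (𝓝 0) := tendsto_one_div_add_atTop_nhds_zero_nat
  have hlψ : Tendsto (fun j => l (ψ j)) atTop (𝓝 l0) := by
    rw [tendsto_iff_dist_tendsto_zero]
    have := hd.add h1t
    rw [add_zero] at this
    exact tendsto_of_tendsto_of_tendsto_of_le_of_le tendsto_const_nhds this (fun _ => dist_nonneg)
      fun j => (hψ2 j).le
  have hdψ : Tendsto (fun j => d (φ (ψ j))) atTop (𝓝 0) := hdφ.comp hψt
  have hσt : ∀ t, 0 ≤ t → Tendsto (fun j => σ (ψ j) t) atTop (𝓝 (τ t)) := by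
    intro t ht
    rw [Metric.tendsto_atTop']
    intro ε hε
    obtain ⟨i, hi⟩ := (TopologicalSpace.denseRange_denseSeq ℝ).exists_dist_lt t (show 0 < ε / 5 by positivity)
    set q := |TopologicalSpace.denseSeq ℝ i| with hq
    have hq0 : 0 ≤ q := abs_nonneg _
    have hqt : |t - q| < ε / 5 := by
      rw [Real.dist_eq] at hi
      refine lt_of_le_of_lt ?_ hi
      have := abs_abs_sub_abs_le t (TopologicalSpace.denseSeq ℝ i)
      rwa [abs_of_nonneg ht] at this
    have e1 := hdψ.eventually_lt_const (show 0 < ε / 5 by positivity)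
    have e2 := h1t.eventually_lt_const (show 0 < ε / 5 by positivity)
    obtain ⟨M, hM⟩ := eventually_atTop.1 (e1.and (e2.and (eventually_ge_atTop i)))
    refine ⟨M, fun j hj => ?_⟩
    obtain ⟨a1, a2, a3⟩ := hM j hj.le
    have b1 := h2' (ψ j) t q ht hq0
    have b2 := hψ3 j i a3
    have b3 := hτlip' t q ht hq0
    have b4 := dist_triangle4_right (σ (ψ j) t) (τ t) (σ (ψ j) q) (τ q)
    linarith
  have hτ0 : τ 0 = x := by
    have : ∀ k, σ k 0 = x := fun k => by
      have := h1 k 0 le_rfl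
      exact (dist_le_zero.1 this).symm
    have h5 := hσt 0 le_rfl
    simp only [this] at h5
    exact (tendsto_nhds_unique h5 tendsto_const_nhds)
  have hτF : τ l0 ∈ F := by
    have : Tendsto (fun j => σ (ψ j) (l (ψ j))) atTop (𝓝 (τ l0)) := by
      rw [tendsto_iff_dist_tendsto_zero]
      have e := ((((hlψ.sub_const l0).abs).add hdψ).add (tendsto_iff_dist_tendsto_zero.1 (hσt l0 hl0.1)))
      simp only [sub_self, abs_zero, add_zero] at e
      refine tendsto_of_tendsto_of_tendsto_of_le_of_le tendsto_const_nhds e (fun _ => dist_nonneg)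
        fun j => ?_
      have b1 := h2' (ψ j) (l (ψ j)) l0 (hl _) hl0.1
      have := dist_triangle (σ (ψ j) (l (ψ j))) (σ (ψ j) l0) (τ l0)
      simp only
      linarith
    exact hF.mem_of_tendsto this (Eventually.of_forall fun j => h3 _ _ le_rfl)
  refine ⟨⟨l0, hl0.1, τ, ?_⟩, hτ0, hτF, ?_⟩
  · refine LipschitzOnWith.of_dist_le_mul fun a ha b hb => ?_
    rw [Real.dist_eq, NNReal.coe_one, one_mul]
    exact hτlip' a b ha.1 hb.1
  · unfold Curve.integral
    simp only
    rw [setLIntegral_congr Ico_ae_eq_Icc.symm, ← lintegral_indicator measurableSet_Ico]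
    set f : ℕ → ℝ → ℝ≥0∞ := fun j => indicator (Ico 0 (l (ψ j))) (fun t => gm g (φ (ψ j)) (σ (ψ j) t)) with hf
    have hfm : ∀ j, Measurable (f j) := fun j =>
      ((gm_cont g _).measurable.comp (hm _)).indicator measurableSet_Ico
    have hfs : ∀ j, ∫⁻ t, f j t ≤ s := fun j => by
      simp only [hf]
      rw [lintegral_indicator measurableSet_Ico]
      exact (h4 _).trans (hcs _).le
    have hpt : ∀ t, indicator (Ico 0 l0) (fun t => g (τ t)) t ≤ liminf (fun j => f j t) atTop := by
      intro t
      by_cases ht : t ∈ Ico 0 l0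
      · rw [indicator_of_mem ht]
        refine (gm_liminf hg (hφ.tendsto_atTop.comp hψt) (hσt t ht.1)).trans ?_
        refine liminf_le_liminf ((hlψ.eventually_const_lt ht.2).mono fun j hj => ?_)
        simp only [hf]
        rw [indicator_of_mem (show t ∈ Ico 0 (l (ψ j)) from ⟨ht.1, hj⟩)]
        exact le_rfl
      · rw [indicator_of_notMem ht]; exact zero_le
    refine (lintegral_mono hpt).trans ((lintegral_liminf_le hfm).trans ?_)
    refine liminf_le_of_le (by isBoundedDefault) fun b hb => ?_
    obtain ⟨j, hj⟩ := hb.exists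
    exact hj.trans (hfs j)

lemma exists_small_mul {a η : ℝ≥0∞} (ha : a ≠ ∞) (hη : η ≠ 0) :
    ∃ δ : ℝ≥0∞, δ ≠ 0 ∧ δ ≠ ∞ ∧ δ * a ≤ η := by
  have hη' : min η 1 ≠ 0 := by simp [hη]
  have h1 : a + 1 ≠ ∞ := ENNReal.add_ne_top.2 ⟨ha, ENNReal.one_ne_top⟩
  have h2 : min η 1 ≠ ∞ := ne_top_of_le_ne_top ENNReal.one_ne_top (min_le_right _ _)
  refine ⟨min η 1 / (a + 1), ENNReal.div_ne_zero.2 ⟨hη', h1⟩, ENNReal.div_ne_top h2 (by simp), ?_⟩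
  calc min η 1 / (a + 1) * a ≤ min η 1 / (a + 1) * (a + 1) := by gcongr; exact le_self_add
    _ = min η 1 := ENNReal.div_mul_cancel (by simp) h1
    _ ≤ η := min_le_left _ _

lemma exists_true_ug {w : X → ℝ} {g : X → ℝ≥0∞} (h : IsWeakUpperGradientOn μ w g univ)
    {η : ℝ≥0∞} (hη : η ≠ 0) : ∃ g' : X → ℝ≥0∞, Measurable g' ∧ (∀ γ : Curve X, UGIneq w g' γ) ∧
      ∫⁻ x, g' x ∂μ ≤ ∫⁻ x, g x ∂μ + η := by
  obtain ⟨hg, ρ, hρ, hρ2, hρ3⟩ := h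
  obtain ⟨δ, hδ, hδ', hδ2⟩ := exists_small_mul hρ2.ne hη
  set N := toMeasurable μ {x | g x ≠ hg.mk g x} with hN
  have hNm : MeasurableSet N := measurableSet_toMeasurable _ _
  have hN0 : μ N = 0 := by rw [hN, measure_toMeasurable]; exact hg.ae_eq_mk
  set g' : X → ℝ≥0∞ := fun x => (hg.mk g x + indicator N (fun _ => ∞) x) + δ * ρ x with hg'
  have hle : ∀ x, g x ≤ g' x := by
    intro x
    refine le_trans ?_ le_self_add
    by_cases hx : g x = hg.mk g x
    · rw [hx]; exact le_self_add
    · rw [indicator_of_mem (subset_toMeasurable _ _ hx)]; simp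
  refine ⟨g', ?_, ?_, ?_⟩
  · exact (hg.measurable_mk.add (measurable_const.indicator hNm)).add (hρ.const_mul δ)
  · intro γ
    by_cases hγ : UGIneq w g γ
    · exact hγ.trans (lintegral_mono fun t => hle _)
    · have h1 := hρ3 γ ⟨fun t _ => mem_univ _, hγ⟩
      have : γ.integral g' = ∞ := by
        refine top_le_iff.1 ?_
        have h2 : δ * γ.integral ρ ≤ γ.integral g' := by
          unfold Curve.integral
          rw [← lintegral_const_mul' _ _ hδ']
          exact lintegral_mono fun t => le_add_self
        rwa [h1, ENNReal.mul_top hδ] at h2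
      unfold UGIneq
      rw [this]; exact le_top
  · simp only [hg']
    rw [lintegral_add_right _ (show Measurable fun x => δ * ρ x from hρ.const_mul δ),
      lintegral_const_mul _ hρ,
      lintegral_add_right _ (show Measurable fun x => indicator N (fun _ => ∞) x from
        measurable_const.indicator hNm), lintegral_indicator_const hNm, hN0, mul_zero, add_zero,
      lintegral_congr_ae hg.ae_eq_mk.symm]
    gcongr

lemma cap_lemma {G F : Set X} {ε : ℝ≥0∞} (hcap : capa1 μ G < ε) (hF : IsClosed F)
    (hFG : F ⊆ G) (x₀ : X) (R : ℝ) : ∃ (w : X → ℝ) (g : X → ℝ≥0∞), Adm μ (ball x₀ R) w g ∧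
      (∀ x, 0 ≤ w x) ∧ (∀ x, w x ≤ 1) ∧ (∀ x ∈ F, x ∈ ball x₀ R → w x = 1) ∧
      ∫⁻ x in ball x₀ R, g x ∂μ ≤ ε ∧ ∫⁻ x in ball x₀ R, ENNReal.ofReal (w x) ∂μ ≤ ε := by
  unfold capa1 at hcap
  simp only [iInf_lt_iff] at hcap
  obtain ⟨w, _, hw1, hw2⟩ := hcap
  unfold NNorm at hw2
  have hlt : (∫⁻ x in univ, ENNReal.ofReal |w x| ∂μ) < ε := lt_of_le_of_lt le_self_add hw2
  have hlt2 : (⨅ (g : X → ℝ≥0∞) (_ : IsWeakUpperGradientOn μ w g univ), ∫⁻ x in univ, g x ∂μ) < ε :=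
    lt_of_le_of_lt le_add_self hw2
  simp only [iInf_lt_iff] at hlt2
  obtain ⟨g, hg, hgε⟩ := hlt2
  rw [Measure.restrict_univ] at hlt hgε
  set V := ball x₀ R with hV
  set Z := closedBall x₀ R with hZ
  have hVZ : V ⊆ Z := ball_subset_closedBall
  have hVfin : μ V ≠ ∞ := measure_ball_lt_top.ne
  obtain ⟨η, hη, hη3⟩ : ∃ η : ℝ≥0∞, η ≠ 0 ∧ ∫⁻ x, g x ∂μ + η + η + η ≤ ε := by
    obtain ⟨a, ha1, ha2⟩ := exists_between hgε
    have h0 : a - ∫⁻ x, g x ∂μ ≠ 0 := (tsub_pos_of_lt ha1).ne'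
    refine ⟨(a - ∫⁻ x, g x ∂μ) / 3, ENNReal.div_ne_zero.2 ⟨h0, by simp⟩, ?_⟩
    rw [add_assoc, add_assoc, ← add_assoc (_ / 3), ENNReal.add_thirds, add_tsub_cancel_of_le ha1.le]
    exact ha2.le
  obtain ⟨g1, hg1m, hg1u, hg1i⟩ := exists_true_ug hg hη
  obtain ⟨g2, hg12, hg2l, hg2i⟩ := exists_le_lowerSemicontinuous_lintegral_ge μ g1 hg1m hη
  obtain ⟨c, hc, hc', hcV⟩ := exists_small_mul hVfin hη
  set g3 : X → ℝ≥0∞ := fun x => g2 x + c with hg3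
  have hg3l : LowerSemicontinuous g3 := hg2l.add lowerSemicontinuous_const
  have hg3m : Measurable g3 := hg3l.measurable
  set d : ℕ → ℝ := fun n => 1 / ((n:ℝ) + 1) with hd
  have hd0 : ∀ n, 0 < d n := fun n => by positivity
  have hdt : Tendsto d atTop (𝓝 0) := tendsto_one_div_add_atTop_nhds_zero_nat
  set W : ℕ → X → ℝ := fun m => wm (gm g3 m) F Z (d m) with hW
  have hadm : ∀ m, Adm μ V (W m) g3 := fun m => wm_adm hg3m (hd0 m) isOpen_ball hVZ
  have hg3i : ∫⁻ x in V, g3 x ∂μ ≤ ε := by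
    refine le_trans ?_ hη3
    simp only [hg3]
    rw [lintegral_add_right _ measurable_const, setLIntegral_const]
    refine add_le_add ?_ hcV
    exact (setLIntegral_le_lintegral _ _).trans (hg2i.trans (by gcongr))
  have hlimsup : ∀ x ∈ V, limsup (fun m => indicator V (fun x => ENNReal.ofReal (W m x)) x) atTop
      ≤ ENNReal.ofReal |w x| := by
    intro x hx
    simp only [indicator_of_mem hx]
    refine le_of_forall_lt_imp_le_of_dense fun a ha => ?_
    have hfr : ∃ᶠ m in atTop, a < ENNReal.ofReal (W m x) := frequently_lt_of_lt_limsup (by isBoundedDefault) ha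
    have hfr2 : ∃ᶠ m in atTop, Dm (gm g3 m) F Z (d m) x < 1 - a := by
      refine hfr.mono fun m hm => ?_
      simp only [hW, wm] at hm
      rw [ENNReal.ofReal_toReal (ne_top_of_le_ne_top ENNReal.one_ne_top tsub_le_self)] at hm
      exact lt_tsub_iff_right.2 (by rw [add_comm]; exact lt_tsub_iff_right.1 hm)
    obtain ⟨γ, hγ0, hγF, hγi⟩ := ch_limit hg3l hc hc' (fun x => le_add_self) hF
      (isCompact_closedBall x₀ R) (ne_top_of_le_ne_top ENNReal.one_ne_top tsub_le_self) hdt (fun n => (hd0 n).le) hfr2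
    have h1 : γ.integral g1 ≤ 1 - a := le_trans (lintegral_mono fun t => (hg12 _).trans le_self_add) hγi
    have h2 := (hg1u γ).trans h1
    rw [hγ0] at h2
    have h3 := hw1 _ (hFG hγF)
    have ha1 : a ≤ 1 := by
      obtain ⟨m, hm⟩ := hfr.exists
      refine hm.le.trans ?_
      rw [← ENNReal.ofReal_one]
      exact ENNReal.ofReal_le_ofReal (wm_le_one _ _ _ _ _)
    have h4 : (1:ℝ≥0∞) ≤ ENNReal.ofReal |w x| + (1 - a) := by
      refine le_trans ?_ (add_le_add le_rfl h2)
      rw [← ENNReal.ofReal_add (abs_nonneg _) (abs_nonneg _), ← ENNReal.ofReal_one]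
      refine ENNReal.ofReal_le_ofReal ?_
      have b1 := neg_abs_le (w x - w (γ.toFun γ.len))
      have b2 := le_abs_self (w x)
      linarith
    have h5 : a + (1 - a) ≤ ENNReal.ofReal |w x| + (1 - a) := by rwa [add_tsub_cancel_of_le ha1]
    exact (ENNReal.add_le_add_iff_right (ne_top_of_le_ne_top ENNReal.one_ne_top tsub_le_self)).1 h5
  have hWm : ∀ m, Measurable (indicator V fun x => ENNReal.ofReal (W m x)) := by
    intro m
    have := ((hadm m).1.measurable_indicator isOpen_ball).ennreal_ofReal
    convert this using 1
    ext x
    by_cases hx : x ∈ V <;> simp [hx]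
  have hls := limsup_lintegral_le (μ := μ) (indicator V fun _ => 1) hWm
    (fun m => Eventually.of_forall fun x => by
      by_cases hx : x ∈ V
      · simp only [indicator_of_mem hx]
        rw [← ENNReal.ofReal_one]
        exact ENNReal.ofReal_le_ofReal (wm_le_one _ _ _ _ _)
      · simp [hx])
    (by rw [lintegral_indicator_const measurableSet_ball, one_mul]; exact hVfin)
  have hls2 : limsup (fun m => ∫⁻ x, indicator V (fun x => ENNReal.ofReal (W m x)) x ∂μ) atTop < ε := by
    refine lt_of_le_of_lt (hls.trans (lintegral_mono fun x => ?_)) hlt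
    by_cases hx : x ∈ V
    · exact hlimsup x hx
    · simp [hx]
  obtain ⟨m, hm⟩ := (eventually_lt_of_limsup_lt hls2 (by isBoundedDefault)).exists
  refine ⟨W m, g3, hadm m, fun x => wm_nonneg _ _ _ _ _, fun x => wm_le_one _ _ _ _ _,
    fun x hxF hxV => wm_base hxF (hVZ hxV), hg3i, ?_⟩
  rw [lintegral_indicator measurableSet_ball] at hm
  exact hm.le

lemma exists_close {A : ℕ → Set X} (hA : ∀ k, IsOpen (A k)) (hmono : Monotone A) {u : X → ℝ}
    (hu : Measurable u) (hfin : tvOpen μ (⋃ k, A k) u ≠ ∞) {η : ℝ≥0∞} (hη : η ≠ 0) :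
    ∃ k, tvOpen μ (⋃ k, A k) u ≤ tvOpen μ (A k) u + η := by
  by_contra hcon
  push Not at hcon
  have h1 : ∀ k, tvOpen μ (A k) u ≤ tvOpen μ (⋃ k, A k) u - η := fun k =>
    ENNReal.le_sub_of_add_le_right (ne_top_of_le_ne_top hfin (le_add_self.trans (hcon k).le)) (hcon k).le
  have h2 := tvOpen_iUnion hA hmono hu h1
  have h0 : tvOpen μ (⋃ k, A k) u ≠ 0 := (lt_of_le_of_lt zero_le (hcon 0)).ne'
  exact absurd h2 (not_le.2 (ENNReal.sub_lt_self hfin h0 hη))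

lemma cut_ineq {Ω H : Set X} (hΩ : IsOpen Ω) (hH : IsOpen H) {u w : X → ℝ} (hu : Measurable u)
    (hu0 : ∀ x, 0 ≤ u x) (hu1 : ∀ x, u x ≤ 1) (hw : Measurable w) {h : X → ℝ≥0∞} (hwa : Adm μ Ω w h) (hw0 : ∀ x, 0 ≤ w x)
    (hw1 : ∀ x, w x ≤ 1) (hwH : ∀ x ∈ Ω ∩ H, w x = 1) :
    tvOpen μ Ω (fun x => (1 - w x) * u x) + tvOpen μ (Ω ∩ H) u ≤
      tvOpen μ Ω u + ∫⁻ x in Ω, h x ∂μ := by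
  by_cases hc : tvOpen μ Ω u = ∞
  · rw [hc]; simp
  obtain ⟨v, g, h1, h2, h3⟩ := exists_seq hΩ hu hc le_rfl
  set v' : ℕ → X → ℝ := fun i x => max 0 (min 1 (v i x)) with hv'
  have hv0 : ∀ i x, 0 ≤ v' i x := fun i x => le_max_left _ _
  have hv1 : ∀ i x, v' i x ≤ 1 := fun i x => max_le zero_le_one (min_le_left _ _)
  have hva : ∀ i, Adm μ Ω (v' i) (g i) := fun i => by
    have := adm_clamp hΩ (h1 i) zero_lt_one
    exact ⟨this.1, (h1 i).2.1, this.2.2.mono_fun fun x _ => indicator_le_self _ _ x⟩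
  have hvd : ∀ i x, |v' i x - u x| ≤ |v i x - u x| := by
    intro i x
    have e : u x = max 0 (min 1 (u x)) := by rw [min_eq_right (hu1 x), max_eq_right (hu0 x)]
    have hL : LipschitzWith 1 (fun y : ℝ => max 0 (min 1 y)) :=
      ((LipschitzWith.id (α := ℝ)).const_min 1).const_max 0
    have := hL.dist_le_mul (v i x) (u x)
    simp only [Real.dist_eq, NNReal.coe_one, one_mul] at this
    rwa [← e] at this
  have h2' : ∀ i, ∫⁻ x in Ω, ENNReal.ofReal |v' i x - u x| ∂μ ≤ ee i := fun i =>
    (lintegral_mono fun x => ENNReal.ofReal_le_ofReal (hvd i x)).trans (h2 i)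
  have hconv : L1LocConv μ Ω v' u := l1LocConv_of_le ee_tendsto h2'
  have hadm : ∀ i, Adm μ Ω (fun x => (1 - w x) * v' i x)
      (fun x => ENNReal.ofReal (1 - w x) * g i x + h x) := by
    intro i
    have e : (fun x => (1 - w x) * v' i x) = fun x => (-1 * w x + 1) * v' i x := by ext x; ring
    refine ⟨?_, ((measurable_const.sub hw).ennreal_ofReal.mul (h1 i).2.1).add hwa.2.1, ?_⟩
    · rw [e]
      exact (hwa.smul hΩ (-1) 1).1.mul (hva i).1
    · refine dg_comb2 hΩ hwa (hva i) ?_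
      intro c hc t ht d1 b1 d2 b2
      have := ((d1.hasDerivAt.const_sub 1).mul d2.hasDerivAt).deriv
      have e2 : (fun s => (1 - w (c s)) * v' i (c s)) = (fun s => 1 - w (c s)) * fun s => v' i (c s) := rfl
      rw [e2, this, add_comm]
      refine (enorm_add_le _ _).trans (add_le_add ?_ ?_)
      · rw [enorm_mul, Real.enorm_eq_ofReal (sub_nonneg.2 (hw1 _))]
        gcongr
      · rw [enorm_mul, enorm_neg, Real.enorm_eq_ofReal (hv0 i _)]
        refine (mul_le_mul' b1 (ENNReal.ofReal_le_one.2 (hv1 i _))).trans ?_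
        rw [mul_one]
  have a1 := tvOpen_le_liminf (u := fun x => (1 - w x) * u x) hΩ hadm (l1LocConv_of_le ee_tendsto fun i => by
    refine le_trans (lintegral_mono fun x => ENNReal.ofReal_le_ofReal ?_) (h2' i)
    rw [← mul_sub, abs_mul, abs_of_nonneg (sub_nonneg.2 (hw1 x))]
    exact mul_le_of_le_one_left (abs_nonneg _) (by linarith [hw0 x]))
  have hΩH : IsOpen (Ω ∩ H) := hΩ.inter hH
  have a2 := tvOpen_le_liminf hΩH (fun i => (hva i).mono_set inter_subset_left)
    (l1LocConv_mono hΩH inter_subset_left hconv)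
  refine (add_le_add a1 a2).trans ((ennreal_le_liminf_add _ _).trans ?_)
  have hl := (add_ee_tendsto (tvOpen μ Ω u)).add_const (∫⁻ x in Ω, h x ∂μ)
  rw [← hl.liminf_eq]
  refine liminf_le_liminf (Eventually.of_forall fun i => ?_)
  refine le_trans ?_ (add_le_add (h3 i) le_rfl)
  rw [lintegral_add_right _ hwa.2.1, add_right_comm]
  gcongr
  have hres : ∫⁻ x in Ω ∩ H, g i x ∂μ = ∫⁻ x in Ω, indicator H (g i) x ∂μ := by
    rw [lintegral_indicator hH.measurableSet, Measure.restrict_restrict hH.measurableSet, inter_comm]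
  rw [hres, ← lintegral_add_right _ ((h1 i).2.1.indicator hH.measurableSet)]
  refine setLIntegral_mono_ae (h1 i).2.1.aemeasurable (Eventually.of_forall fun x hx => ?_)
  by_cases hxH : x ∈ H
  · rw [hwH x ⟨hx, hxH⟩]; simp [hxH]
  · simp only [indicator_of_notMem hxH, add_zero]
    refine mul_le_of_le_one_left' (ENNReal.ofReal_le_one.2 (by linarith [hw0 x]))

lemma abs_cont_bdd {Ω : Set X} (hΩ : IsOpen Ω) {x₀ : X} {R : ℝ} (hR : Ω ⊆ ball x₀ R) {u : X → ℝ}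
    (hu : Measurable u) (hu0 : ∀ x, 0 ≤ u x) (hu1 : ∀ x, u x ≤ 1) (hfin : tvOpen μ Ω u ≠ ∞)
    {G : ℕ → Set X} (hG : ∀ i, IsOpen (G i)) {ε : ℕ → ℝ≥0∞} (hε : Tendsto ε atTop (𝓝 0))
    (hcap : ∀ i, capa1 μ (G i) < ε i) : Tendsto (fun i => tvOpen μ (Ω ∩ G i) u) atTop (𝓝 0) := by
  set V := ball x₀ R with hV
  set H : ℕ → ℕ → Set X := fun i k => {x | ENNReal.ofReal (1 / ((k:ℝ) + 1)) < Metric.infEDist x (G i)ᶜ} with hH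
  have hHo : ∀ i k, IsOpen (H i k) := fun i k => isOpen_lt continuous_const Metric.continuous_infEDist
  have hHm : ∀ i, Monotone (H i) := by
    intro i k m hkm x hx
    refine lt_of_le_of_lt (ENNReal.ofReal_le_ofReal ?_) hx
    have : (k:ℝ) ≤ m := by exact_mod_cast hkm
    gcongr
  have hHu : ∀ i, ⋃ k, Ω ∩ H i k = Ω ∩ G i := by
    intro i
    rw [← inter_iUnion]
    congr 1
    ext x
    rw [mem_iUnion]
    constructor
    · rintro ⟨k, hk⟩
      by_contra hx
      have : Metric.infEDist x (G i)ᶜ = 0 := Metric.infEDist_zero_of_mem hx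
      have hk' : ENNReal.ofReal (1 / ((k:ℝ) + 1)) < Metric.infEDist x (G i)ᶜ := hk
      rw [this] at hk'
      exact not_lt_zero hk'
    · intro hx
      have h0 : Metric.infEDist x (G i)ᶜ ≠ 0 := by
        intro h0
        have := (Metric.mem_iff_infEDist_zero_of_closed (hG i).isClosed_compl).2 h0
        exact this hx
      have ht : Tendsto (fun k : ℕ => ENNReal.ofReal (1 / ((k:ℝ) + 1))) atTop (𝓝 0) := by
        have := ENNReal.tendsto_ofReal (tendsto_one_div_add_atTop_nhds_zero_nat (𝕜 := ℝ))
        simpa using this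
      exact (ht.eventually_lt_const (pos_iff_ne_zero.2 h0)).exists
  have hfinG : ∀ i, tvOpen μ (Ω ∩ G i) u ≠ ∞ := fun i =>
    ne_top_of_le_ne_top hfin (tvOpen_mono (hΩ.inter (hG i)) hΩ inter_subset_left hu)
  have hk : ∀ i, ∃ k, tvOpen μ (Ω ∩ G i) u ≤ tvOpen μ (Ω ∩ H i k) u + ee i := by
    intro i
    have := exists_close (μ := μ) (A := fun k => Ω ∩ H i k) (fun k => hΩ.inter (hHo i k))
      (fun k m hkm => inter_subset_inter_right _ (hHm i hkm)) hu (by rw [hHu]; exact hfinG i) (ee_ne i)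
    rwa [hHu] at this
  choose k hk using hk
  set F : ℕ → Set X := fun i => {x | ENNReal.ofReal (1 / ((k i:ℝ) + 1)) ≤ Metric.infEDist x (G i)ᶜ} with hF
  have hFc : ∀ i, IsClosed (F i) := fun i => isClosed_le continuous_const Metric.continuous_infEDist
  have hFG : ∀ i, F i ⊆ G i := by
    intro i x hx
    by_contra hxG
    have : Metric.infEDist x (G i)ᶜ = 0 := Metric.infEDist_zero_of_mem hxG
    have hx' : ENNReal.ofReal (1 / ((k i:ℝ) + 1)) ≤ Metric.infEDist x (G i)ᶜ := hx
    rw [this] at hx'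
    have h0 : (0:ℝ) < 1 / ((k i:ℝ) + 1) := by positivity
    exact absurd hx' (not_le.2 (ENNReal.ofReal_pos.2 h0))
  choose w h hwa hw0 hw1 hwF hwh hwi using fun i => cap_lemma (hcap i) (hFc i) (hFG i) x₀ R
  set w' : ℕ → X → ℝ := fun i => indicator V (w i) with hw'
  have hwm : ∀ i, Measurable (w' i) := fun i => (hwa i).1.measurable_indicator isOpen_ball
  have hwe : ∀ i, EqOn (w i) (w' i) V := fun i x hx => (indicator_of_mem hx _).symm
  have hwa' : ∀ i, Adm μ Ω (w' i) (h i) := fun i => ((hwa i).congr isOpen_ball (hwe i)).mono_set hR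
  have hw0' : ∀ i x, 0 ≤ w' i x := fun i x => indicator_nonneg (fun x _ => hw0 i x) x
  have hw1' : ∀ i x, w' i x ≤ 1 := fun i x => indicator_le' (fun x _ => hw1 i x) (fun _ _ => zero_le_one) x
  have hcut : ∀ i, tvOpen μ Ω (fun x => (1 - w' i x) * u x) + tvOpen μ (Ω ∩ H i (k i)) u ≤
      tvOpen μ Ω u + ε i := by
    intro i
    refine (cut_ineq hΩ (hHo i (k i)) hu hu0 hu1 (hwm i) (hwa' i) (hw0' i) (hw1' i) ?_).trans ?_
    · rintro x ⟨hx, hxH⟩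
      rw [← hwe i (hR hx)]
      exact hwF i x (show ENNReal.ofReal (1 / ((k i:ℝ) + 1)) ≤ _ from le_of_lt hxH) (hR hx)
    · gcongr
      exact (lintegral_mono_set hR).trans (hwh i)
  have hlsc : tvOpen μ Ω u ≤ liminf (fun i => tvOpen μ Ω (fun x => (1 - w' i x) * u x)) atTop := by
    refine tvOpen_lsc hΩ (fun i => (measurable_const.sub (hwm i)).mul hu) (l1LocConv_of_le hε fun i => ?_)
    refine le_trans ?_ (hwi i)
    refine le_trans ?_ (lintegral_mono_set hR)
    refine setLIntegral_mono' hΩ.measurableSet fun x hx => ENNReal.ofReal_le_ofReal ?_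
    have e : (1 - w' i x) * u x - u x = - (w' i x * u x) := by ring
    rw [e, abs_neg, abs_of_nonneg (mul_nonneg (hw0' i x) (hu0 x)), hwe i (hR hx)]
    exact mul_le_of_le_one_right (hw0' i x) (hu1 x)
  rw [ENNReal.tendsto_atTop_zero]
  intro η hη
  by_cases hηt : η = ∞
  · exact ⟨0, fun n _ => by rw [hηt]; exact le_top⟩
  have hη3 : η / 3 ≠ 0 := ENNReal.div_ne_zero.2 ⟨hη.ne', by simp⟩
  have hη3' : 0 < η / 3 := pos_iff_ne_zero.2 hη3
  have hη3t : η / 3 ≠ ∞ := ENNReal.div_ne_top hηt (by simp)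
  have ev1 : ∀ᶠ i in atTop, tvOpen μ Ω u ≤ tvOpen μ Ω (fun x => (1 - w' i x) * u x) + η / 3 := by
    by_cases h0 : tvOpen μ Ω u = 0
    · rw [h0]; exact Eventually.of_forall fun _ => zero_le
    · have : tvOpen μ Ω u - η / 3 < liminf (fun i => tvOpen μ Ω (fun x => (1 - w' i x) * u x)) atTop :=
        lt_of_lt_of_le (ENNReal.sub_lt_self hfin h0 hη3) hlsc
      filter_upwards [eventually_lt_of_lt_liminf this (by isBoundedDefault)] with i hi
      exact tsub_le_iff_right.1 hi.le
  have ev2 := hε.eventually_lt_const hη3'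
  have ev3 := ee_tendsto.eventually_lt_const hη3'
  obtain ⟨N, hN⟩ := eventually_atTop.1 (ev1.and (ev2.and ev3))
  refine ⟨N, fun i hi => ?_⟩
  obtain ⟨c1, c2, c3⟩ := hN i hi
  have hbf : tvOpen μ Ω (fun x => (1 - w' i x) * u x) ≠ ∞ := by
    refine ne_top_of_le_ne_top ?_ (le_self_add.trans (hcut i))
    exact ENNReal.add_ne_top.2 ⟨hfin, ne_top_of_lt c2⟩
  have c4 : tvOpen μ (Ω ∩ H i (k i)) u ≤ η / 3 + η / 3 := by
    have := (hcut i).trans (add_le_add c1 c2.le)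
    rw [add_assoc] at this
    exact (ENNReal.add_le_add_iff_left hbf).1 this
  refine (hk i).trans ((add_le_add c4 c3.le).trans ?_)
  rw [ENNReal.add_thirds]

lemma tvOpen_empty (u : X → ℝ) : tvOpen μ ∅ u = 0 := by
  rw [tvOpen_congr (u' := fun _ => 0) (by rw [Measure.restrict_empty]; exact ae_zero.symm ▸ Filter.eventually_bot)]
  exact tvOpen_zero isOpen_empty 0

lemma abs_cont {Ω : Set X} (hΩ : IsOpen Ω) {u : X → ℝ}
    (hu : Measurable u) (hu0 : ∀ x, 0 ≤ u x) (hu1 : ∀ x, u x ≤ 1) (hfin : tvOpen μ Ω u ≠ ∞)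
    {G : ℕ → Set X} (hG : ∀ i, IsOpen (G i)) {ε : ℕ → ℝ≥0∞} (hε : Tendsto ε atTop (𝓝 0))
    (hcap : ∀ i, capa1 μ (G i) < ε i) : Tendsto (fun i => tvOpen μ (Ω ∩ G i) u) atTop (𝓝 0) := by
  rcases Ω.eq_empty_or_nonempty with rfl | ⟨x₀, _⟩
  · simp [tvOpen_empty]
  rw [ENNReal.tendsto_atTop_zero]
  intro η hη
  have hη2 : 0 < η / 2 := ENNReal.half_pos hη.ne'
  have hun : ⋃ n : ℕ, Ω ∩ ball x₀ (n:ℝ) = Ω := by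
    rw [← inter_iUnion, iUnion_ball_nat, inter_univ]
  obtain ⟨n, hn⟩ := exists_close (μ := μ) (A := fun n : ℕ => Ω ∩ ball x₀ (n:ℝ)) (fun n => hΩ.inter isOpen_ball)
    (fun a b hab => inter_subset_inter_right _ (ball_subset_ball (by exact_mod_cast hab))) hu
    (by rw [hun]; exact hfin) hη2.ne'
  rw [hun] at hn
  have hoB : IsOpen (Ω ∩ ball x₀ (n:ℝ)) := hΩ.inter isOpen_ball
  have hoC : IsOpen (Ω ∩ (closedBall x₀ (n:ℝ))ᶜ) := hΩ.inter isClosed_closedBall.isOpen_compl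
  have hBfin : tvOpen μ (Ω ∩ ball x₀ (n:ℝ)) u ≠ ∞ :=
    ne_top_of_le_ne_top hfin (tvOpen_mono hoB hΩ inter_subset_left hu)
  have hsup := tvOpen_super (μ := μ) hoB hoC hΩ inter_subset_left inter_subset_left (by
    rw [Set.disjoint_left]
    rintro x ⟨_, h1⟩ ⟨_, h2⟩
    exact h2 (ball_subset_closedBall h1)) hu
  have hC : tvOpen μ (Ω ∩ (closedBall x₀ (n:ℝ))ᶜ) u ≤ η / 2 :=
    (ENNReal.add_le_add_iff_left hBfin).1 (hsup.trans hn)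
  have hoB' : IsOpen (Ω ∩ ball x₀ ((n:ℝ) + 1)) := hΩ.inter isOpen_ball
  have hb := abs_cont_bdd (μ := μ) hoB' (x₀ := x₀) (R := (n:ℝ) + 1) inter_subset_right hu hu0 hu1
    (ne_top_of_le_ne_top hfin (tvOpen_mono hoB' hΩ inter_subset_left hu)) hG hε hcap
  obtain ⟨N, hN⟩ := (ENNReal.tendsto_atTop_zero.1 hb) (η / 2) hη2
  refine ⟨N, fun i hi => ?_⟩
  have hsub : Ω ∩ G i ⊆ (Ω ∩ ball x₀ ((n:ℝ) + 1) ∩ G i) ∪ (Ω ∩ (closedBall x₀ (n:ℝ))ᶜ) := by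
    rintro x ⟨hx, hxG⟩
    by_cases hxb : x ∈ closedBall x₀ (n:ℝ)
    · exact Or.inl ⟨⟨hx, closedBall_subset_ball (by linarith) hxb⟩, hxG⟩
    · exact Or.inr ⟨hx, hxb⟩
  refine (tvOpen_mono (hΩ.inter (hG i)) ((hoB'.inter (hG i)).union hoC) hsub hu).trans ?_
  refine (tvOpen_union (hoB'.inter (hG i)) hoC hu).trans ?_
  refine (add_le_add (hN i hi) hC).trans ?_
  rw [ENNReal.add_halves]

lemma lev_congr {A : Set X} {u u' : X → ℝ} (t : ℝ) (h : u =ᵐ[μ.restrict A] u') :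
    lev t u =ᵐ[μ.restrict A] lev t u' := by
  filter_upwards [h] with x hx
  rw [lev_eq, lev_eq, hx]

lemma tv_le_of_open {U A : Set X} (hA : IsOpen A) (hUA : U ⊆ A) {f f' : X → ℝ}
    (he : f =ᵐ[μ.restrict A] f') : tv μ U f ≤ tvOpen μ A f' := by
  rw [← tvOpen_congr he]
  exact iInf_le_of_le A (iInf_le_of_le hA (iInf_le _ hUA))

lemma ae_sub {A Ω : Set X} (h : A ⊆ Ω) {f f' : X → ℝ} (he : f =ᵐ[μ.restrict Ω] f') :
    f =ᵐ[μ.restrict A] f' :=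
  ae_mono (Measure.restrict_mono h le_rfl) he

lemma tvOpen_split {U Ω G : Set X} (hΩ : IsOpen Ω) (hG : IsOpen G) (hUG : IsOpen (U ∪ G))
    {f f' : X → ℝ} (hf : Measurable f') (he : f =ᵐ[μ.restrict Ω] f') :
    tvOpen μ ((U ∪ G) ∩ Ω) f' ≤ tv μ U f + tvOpen μ (Ω ∩ G) f' := by
  rw [← tsub_le_iff_right]
  refine le_iInf fun O => le_iInf fun hO => le_iInf fun hUO => ?_
  rw [tsub_le_iff_right]
  have hs : (U ∪ G) ∩ Ω ⊆ (O ∩ Ω) ∪ (Ω ∩ G) := by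
    rintro x ⟨hx | hx, hx'⟩
    · exact Or.inl ⟨hUO hx, hx'⟩
    · exact Or.inr ⟨hx', hx⟩
  refine (tvOpen_mono (hUG.inter hΩ) ((hO.inter hΩ).union (hΩ.inter hG)) hs hf).trans ?_
  refine (tvOpen_union (hO.inter hΩ) (hΩ.inter hG) hf).trans ?_
  gcongr
  exact tvOpen_mono' (hO.inter hΩ) hO inter_subset_left hf (ae_sub inter_subset_right he)

lemma memL1Loc_sub {A Ω : Set X} (hAΩ : A ⊆ Ω) {u u' : X → ℝ} (hu : Measurable u')
    (he : u =ᵐ[μ.restrict Ω] u') (hL : MemL1Loc μ Ω u) : MemL1Loc μ A u' := by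
  refine ⟨hu.aemeasurable, fun x hx => ?_⟩
  obtain ⟨r, hr, h⟩ := hL.2 x (hAΩ hx)
  refine ⟨r, hr, lt_of_le_of_lt ?_ h⟩
  have : ∫⁻ y in A ∩ ball x r, ENNReal.ofReal |u' y| ∂μ
      = ∫⁻ y in A ∩ ball x r, ENNReal.ofReal |u y| ∂μ := by
    refine lintegral_congr_ae ?_
    filter_upwards [ae_sub (inter_subset_left.trans hAΩ) he] with y hy
    rw [hy]
  rw [this]
  exact lintegral_mono_set (inter_subset_inter_left _ hAΩ)

lemma coarea_main {U : Set X} (hU : QuasiOpen μ U) {u : X → ℝ} {Ω : Set X} (hΩ : IsOpen Ω)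
    (hUΩ : U ⊆ Ω) (hL : MemL1Loc μ Ω u) (hfin : tvOpen μ Ω u < ∞) :
    tv μ U u = ∫⁻ t : ℝ, tv μ U (lev t u) := by
  obtain ⟨w, hw, he⟩ := hL.1
  apply le_antisymm
  · have hε : ∀ i : ℕ, (0:ℝ) < 1 / ((i:ℝ) + 1) := fun i => by positivity
    choose G hG hcap hUG using fun i : ℕ => hU (1 / ((i:ℝ) + 1)) (hε i)
    have hεt : Tendsto (fun i : ℕ => ENNReal.ofReal (1 / ((i:ℝ) + 1))) atTop (𝓝 0) := by
      have := ENNReal.tendsto_ofReal (tendsto_one_div_add_atTop_nhds_zero_nat (𝕜 := ℝ))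
      simpa using this
    have hΩw : ∫⁻ t, tvOpen μ Ω (lev t w) ≠ ∞ := by
      refine ((coarea_ge hΩ hw).trans_lt ?_).ne
      rwa [← tvOpen_congr he]
    have hlim : Tendsto (fun i => ∫⁻ t, tvOpen μ (Ω ∩ G i) (lev t w)) atTop (𝓝 0) := by
      have := tendsto_lintegral_of_dominated_convergence (μ := (volume : Measure ℝ))
        (F := fun i t => tvOpen μ (Ω ∩ G i) (lev t w)) (f := fun _ => 0)
        (fun t => tvOpen μ Ω (lev t w)) (fun i => lev_meas (hΩ.inter (hG i)) hw)
        (fun i => Eventually.of_forall fun t =>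
          tvOpen_mono (hΩ.inter (hG i)) hΩ inter_subset_left (lev_measurable t hw)) hΩw
        (by
          filter_upwards [ae_lt_top (lev_meas hΩ hw) hΩw] with t ht
          refine abs_cont hΩ (lev_measurable t hw) (fun x => ?_) (fun x => ?_) ht.ne hG hεt hcap
          · rw [lev_eq]; split_ifs <;> norm_num
          · rw [lev_eq]; split_ifs <;> norm_num)
      simpa using this
    have hb : ∀ i, tv μ U u ≤ (∫⁻ t : ℝ, tv μ U (lev t u))
        + ∫⁻ t, tvOpen μ (Ω ∩ G i) (lev t w) := by
      intro i
      have hA : IsOpen ((U ∪ G i) ∩ Ω) := (hUG i).inter hΩ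
      have h1 : tv μ U u ≤ tvOpen μ ((U ∪ G i) ∩ Ω) w :=
        tv_le_of_open hA (fun x hx => ⟨Or.inl hx, hUΩ hx⟩) (ae_sub inter_subset_right he)
      have h2 := coarea_le hA hw (memL1Loc_sub inter_subset_right hw he hL)
      refine h1.trans (h2.trans ?_)
      rw [← lintegral_add_right _ (lev_meas (hΩ.inter (hG i)) hw)]
      exact lintegral_mono fun t =>
        tvOpen_split hΩ (hG i) (hUG i) (lev_measurable t hw) (lev_congr t he)
    have h3 : Tendsto (fun i => (∫⁻ t : ℝ, tv μ U (lev t u))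
        + ∫⁻ t, tvOpen μ (Ω ∩ G i) (lev t w)) atTop (𝓝 ((∫⁻ t : ℝ, tv μ U (lev t u)) + 0)) :=
      tendsto_const_nhds.add hlim
    rw [add_zero] at h3
    exact ge_of_tendsto' h3 hb
  · refine le_iInf fun O => le_iInf fun hO => le_iInf fun hUO => ?_
    have hA := hO.inter hΩ
    have hUA : U ⊆ O ∩ Ω := subset_inter hUO hUΩ
    have he' : u =ᵐ[μ.restrict (O ∩ Ω)] w := ae_sub inter_subset_right he
    calc ∫⁻ t : ℝ, tv μ U (lev t u) ≤ ∫⁻ t : ℝ, tvOpen μ (O ∩ Ω) (lev t w) :=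
          lintegral_mono fun t => tv_le_of_open hA hUA (lev_congr t he')
      _ ≤ tvOpen μ (O ∩ Ω) w := coarea_ge hA hw
      _ ≤ tvOpen μ O u := tvOpen_mono' hA hO inter_subset_left hw he'

end BV

/-- Coarea formula in `1`-quasiopen sets: if `U` is `1`-quasiopen and
`‖Du‖(U) < ∞`, then `‖Du‖(U) = ∫_{-∞}^{∞} P({u > t}, U) dt`. -/
theorem coarea_in_quasiopen
    (μ : Measure X) (hcomp : CompleteSpace X)
    (hdoub : ∃ Cd : ℝ, Doubling μ Cd) (hpoin : ∃ CP lam : ℝ, Poincare μ CP lam)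
    (U : Set X) (hU : QuasiOpen μ U) (u : X → ℝ)
    (hfin : ∃ Ω : Set X, IsOpen Ω ∧ U ⊆ Ω ∧ MemL1Loc μ Ω u ∧ tvOpen μ Ω u < ∞) :
    tv μ U u = ∫⁻ t : ℝ, perim μ {x | t < u x} U := by
  obtain ⟨Cd, hd⟩ := hdoub
  obtain ⟨Ω, hΩ, hUΩ, hL, hf⟩ := hfin
  haveI := hcomp
  haveI : ProperSpace X := properSpace_of_doubling hd
  haveI : IsLocallyFiniteMeasure μ := locFin_of_doubling hd
  exact coarea_main hU hΩ hUΩ hL hf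

end PaperBV
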